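/- arXiv:1503.05931 — 4 statements merged into one kernel-verified Lean document; each statement's English description precedes it below -/
import Mathlib

section
/- Let f : ℂ → ℂ be the evaluation map of a polynomial of degree d ≥ 2 whose Julia set J_f is connected and locally connected. Then there exists a continuous surjection α : ℝ/ℤ → J_f such that f(α(θ)) = α(d·θ) for all θ ∈ ℝ/ℤ (where d·θ denotes multiplication by d on the circle ℝ/ℤ). -/
open Function Set Topology

/-- The filled Julia set of `f`: points with bounded forward orbit. -/
def filledJulia (f : ℂ → ℂ) : Set ℂ :=
  {z : ℂ | Bornology.IsBounded (Set.range fun n => f^[n] z)}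

/-!
Let `K` be the filled Julia set, `d` the degree and `a` the leading coefficient of `f`. The
complement of `K` is connected by the maximum principle, and as `J` is connected, the quotient
`(f z - w) / (a * (z - w) ^ d)`, for a fixed `w ∈ J`, has a holomorphic logarithm off `K` vanishing
at infinity. The sum of this logarithm along the orbit of `z`, with weights `d ^ (-n - 1)`, corrects
`z - w` to a global Böttcher coordinate `ψ`, which satisfies `ψ (f z) = ψ z ^ d`; counting the
preimages of a point near infinity shows that `ψ` maps `Kᶜ` bijectively onto `{w | 1 < ‖w‖}`. Hence
`Φ s = ψ⁻¹ (exp s)` parametrizes `Kᶜ` by the right half-plane, and `f (Φ s) = Φ (d * s)`.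

By the length-area method every point of the imaginary axis is cut off by crosscuts with arbitrarily
short images under `Φ`. Local connectedness of `J` joins the endpoints of such an image by a small
connected subset of `J`, and the two together enclose the image of the region cut off, which is
therefore small. So `Φ` extends continuously to the imaginary axis, and the semiconjugacy is
`t ↦ Φ (2 * π * I * t)`.
-/

section Logarithm

open Complex Filter Bornology

variable {X : Type*} [TopologicalSpace X] {F G u v : X → ℂ} {s t L : Set X}

/-- `h` is a continuous logarithm of `F` on `s`. -/
structure IsLogOn (h F : X → ℂ) (s : Set X) : Prop where
  continuousOn : ContinuousOn h s
  exp_eq : ∀ x ∈ s, exp (h x) = F x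

/-- `F` has a continuous logarithm on `s`. -/
def HasLogOn (F : X → ℂ) (s : Set X) : Prop :=
  ∃ h, IsLogOn h F s

namespace IsLogOn

theorem mono (hu : IsLogOn u F t) (hst : s ⊆ t) : IsLogOn u F s :=
  ⟨hu.continuousOn.mono hst, fun x hx => hu.exp_eq x (hst hx)⟩

theorem congr (hu : IsLogOn u F s) (hFG : EqOn F G s) : IsLogOn u G s :=
  ⟨hu.continuousOn, fun x hx => (hu.exp_eq x hx).trans (hFG hx)⟩

theorem add (hu : IsLogOn u F s) (hv : IsLogOn v G s) :
    IsLogOn (fun x => u x + v x) (fun x => F x * G x) s :=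
  ⟨hu.continuousOn.add hv.continuousOn, fun x hx => by
    rw [exp_add, hu.exp_eq x hx, hv.exp_eq x hx]⟩

theorem const {c : ℂ} (hc : c ≠ 0) (s : Set X) : IsLogOn (fun _ => log c) (fun _ => c) s :=
  ⟨continuousOn_const, fun _ _ => exp_log hc⟩

theorem log_one_sub (hF : ContinuousOn F s) (h : ∀ x ∈ s, ‖F x‖ < 1) :
    IsLogOn (fun x => log (1 - F x)) (fun x => 1 - F x) s := by
  have hslit : ∀ x ∈ s, 1 - F x ∈ slitPlane := fun x hx => by
    rw [sub_eq_add_neg]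
    exact mem_slitPlane_of_norm_lt_one (by simpa using h x hx)
  exact ⟨(continuousOn_const.sub hF).clog hslit,
    fun x hx => exp_log (slitPlane_ne_zero (hslit x hx))⟩

theorem sub_eq_sub (hu : IsLogOn u F s) (hv : IsLogOn v F s) (hs : IsPreconnected s) {x y : X}
    (hx : x ∈ s) (hy : y ∈ s) : u x - v x = u y - v y := by
  have hdiscrete : IsDiscrete (range ((↑) : ℤ → ℂ)) :=
    isDiscrete_iff_discreteTopology.2
      isometry_intCast.isEmbedding.toHomeomorph.symm.isEmbedding.discreteTopology
  have hmaps : MapsTo (fun x => (u x - v x) / (2 * Real.pi * I)) s (range ((↑) : ℤ → ℂ)) := by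
    intro x hx
    obtain ⟨n, hn⟩ := exp_eq_exp_iff_exists_int.1 ((hu.exp_eq x hx).trans (hv.exp_eq x hx).symm)
    exact ⟨n, by simp only [hn, add_sub_cancel_left, mul_div_cancel_right₀ _ two_pi_I_ne_zero]⟩
  exact (div_left_inj' two_pi_I_ne_zero).1 (hs.constant_of_mapsTo hdiscrete
    ((hu.continuousOn.sub hv.continuousOn).div_const _) hmaps hx hy)

end IsLogOn

namespace HasLogOn

theorem mono (h : HasLogOn F t) (hst : s ⊆ t) : HasLogOn F s :=
  h.imp fun _ hu => hu.mono hst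

theorem congr (h : HasLogOn F s) (hFG : EqOn F G s) : HasLogOn G s :=
  h.imp fun _ hu => hu.congr hFG

theorem union (hs : HasLogOn F (s ∪ L)) (ht : HasLogOn F t) (hL : IsPreconnected L)
    (hsc : IsClosed s) (htc : IsClosed t) (hstL : s ∩ t ⊆ L) (hLt : L ⊆ t) :
    HasLogOn F (s ∪ t) := by
  classical
  obtain ⟨u, hu⟩ := hs
  obtain ⟨v, hv⟩ := ht
  obtain ⟨c, hc1, hc⟩ : ∃ c, exp c = 1 ∧ ∀ x ∈ L, v x = u x + c := by
    rcases L.eq_empty_or_nonempty with rfl | ⟨y, hy⟩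
    · exact ⟨0, exp_zero, by simp⟩
    · have hexp : exp (v y) = exp (u y) := by rw [hv.exp_eq y (hLt hy), hu.exp_eq y (Or.inr hy)]
      refine ⟨v y - u y, by rw [exp_sub, hexp, div_self (exp_ne_zero _)], fun x hx => ?_⟩
      rw [← (hv.mono hLt).sub_eq_sub (hu.mono subset_union_right) hL hx hy]
      ring
  have heq_t : EqOn (t.piecewise v fun x => u x + c) v t := fun x hx => by simp [hx]
  have heq_s : EqOn (t.piecewise v fun x => u x + c) (fun x => u x + c) s := fun x hx => by
    by_cases hxt : x ∈ t
    · simp [hxt, hc x (hstL ⟨hx, hxt⟩)]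
    · simp [hxt]
  refine ⟨t.piecewise v fun x => u x + c, ContinuousOn.union_of_isClosed ?_ ?_ hsc htc, ?_⟩
  · exact ((hu.continuousOn.mono subset_union_left).add continuousOn_const).congr heq_s
  · exact hv.continuousOn.congr heq_t
  · rintro x (hx | hx)
    · rw [heq_s hx, exp_add, hc1, mul_one, hu.exp_eq x (Or.inl hx)]
    · rw [heq_t hx, hv.exp_eq x hx]

end HasLogOn

theorem IsLogOn.sub_const_of_norm_lt {K : Set ℂ} {h : ℂ → ℂ} {p q : ℂ}
    (hh : IsLogOn h (fun z => z - p) K) (hpq : ∀ z ∈ K, ‖q - p‖ < ‖z - p‖) :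
    IsLogOn (fun z => h z + log (1 - (q - p) / (z - p))) (fun z => z - q) K := by
  have hne : ∀ z ∈ K, z - p ≠ 0 := fun z hz =>
    norm_pos_iff.1 ((norm_nonneg _).trans_lt (hpq z hz))
  refine (hh.add (IsLogOn.log_one_sub (F := fun z => (q - p) / (z - p))
    (continuousOn_const.div (by fun_prop) hne) fun z hz => ?_)).congr fun z hz => ?_
  · rw [norm_div]
    exact (div_lt_one (norm_pos_iff.2 (hne z hz))).2 (hpq z hz)
  · field_simp [hne z hz]
    ring

theorem isLogOn_sub_const_of_norm_lt {K : Set ℂ} {q : ℂ} (hq : q ≠ 0) (h : ∀ z ∈ K, ‖z‖ < ‖q‖) :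
    IsLogOn (fun z => log (-q) + log (1 - z / q)) (fun z => z - q) K := by
  refine ((IsLogOn.const (neg_ne_zero.2 hq) K).add (IsLogOn.log_one_sub (F := fun z => z / q)
    (by fun_prop) fun z hz => ?_)).congr fun z _ => ?_
  · rw [norm_div]
    exact (div_lt_one (norm_pos_iff.2 hq)).2 (h z hz)
  · field_simp
    ring

theorem hasLogOn_ball {p a : ℂ} {r : ℝ} (hp : p ∉ Metric.ball a r) :
    HasLogOn (fun z => z - p) (Metric.ball a r) := by
  rcases (Metric.ball a r).eq_empty_or_nonempty with h | h
  · rw [h]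
    exact ⟨0, continuousOn_empty _, by simp⟩
  have hap : a - p ≠ 0 := fun h0 => hp (sub_eq_zero.1 h0 ▸ Metric.mem_ball_self (by simpa using h))
  refine ⟨_, ((IsLogOn.const hap (Metric.ball a r)).add (IsLogOn.log_one_sub
    (F := fun z => (a - z) / (a - p)) (by fun_prop) fun z hz => ?_)).congr fun z _ => ?_⟩
  · rw [norm_div, div_lt_one (norm_pos_iff.2 hap), ← dist_eq_norm, ← dist_eq_norm, dist_comm a,
      dist_comm a]
    exact (Metric.mem_ball.1 hz).trans_le (by simpa using hp)
  · field_simp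
    ring

theorem hasLogOn_univ {F : ℂ → ℂ} (hF : Continuous F) (h0 : ∀ z, F z ≠ 0) : HasLogOn F univ := by
  have : ContractibleSpace (univ : Set ℂ) := convex_univ.contractibleSpace ⟨0, trivial⟩
  have hsc : SimplyConnectedSpace (univ : Set ℂ) := inferInstance
  obtain ⟨g, hg, hgF⟩ := exists_continuousOn_eqOn_exp_comp hsc isOpen_univ hF.continuousOn
    (by rintro ⟨z, -, hz⟩; exact h0 z hz)
  exact ⟨g, hg, fun z hz => hgF hz⟩

theorem not_hasLogOn_sphere (p : ℂ) {T : ℝ} (hT : 0 < T) :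
    ¬ HasLogOn (fun z => z - p) (Metric.sphere p T) := by
  rintro ⟨g, hg⟩
  have hcircle : ∀ θ : ℝ, circleMap p T θ ∈ Metric.sphere p T := circleMap_mem_sphere p hT.le
  have hgθ : IsLogOn (fun θ : ℝ => g (circleMap p T θ)) (fun θ => circleMap p T θ - p) univ :=
    ⟨hg.continuousOn.comp (continuous_circleMap p T).continuousOn fun θ _ => hcircle θ,
      fun θ _ => hg.exp_eq _ (hcircle θ)⟩
  have hθ : IsLogOn (fun θ : ℝ => log T + θ * I) (fun θ => circleMap p T θ - p) univ :=
    ⟨by fun_prop, fun θ _ => by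
      rw [exp_add, exp_log (by exact_mod_cast hT.ne')]
      simp [circleMap]⟩
  have hdiff := hgθ.sub_eq_sub hθ isPreconnected_univ (mem_univ 0) (mem_univ (2 * Real.pi))
  have hperiod : circleMap p T (2 * Real.pi) = circleMap p T 0 := by
    simpa using periodic_circleMap p T 0
  simp [hperiod] at hdiff

theorem not_hasLogOn_frontier {U : Set ℂ} (hU : IsBounded U) {p : ℂ} (hp : p ∈ U) :
    ¬ HasLogOn (fun z => z - p) (frontier U) := by
  classical
  rintro ⟨h, hh⟩
  obtain ⟨H, hH⟩ := ContinuousMap.exists_restrict_eq isClosed_frontier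
    (⟨(frontier U).domRestrict h, continuousOn_iff_continuous_domRestrict.1 hh.continuousOn⟩ :
      C(frontier U, ℂ))
  have hH' : ∀ z ∈ frontier U, H z = h z := fun z hz => by
    simpa using congrArg (fun G => G ⟨z, hz⟩) hH
  -- Replacing `z - p` inside `U` by the exponential of an extension removes its zero.
  set F : ℂ → ℂ := U.piecewise (fun z => exp (H z)) (fun z => z - p) with hF
  have hFc : Continuous F :=
    Continuous.piecewise (fun z hz => by rw [hH' z hz, hh.exp_eq z hz]) (by fun_prop) (by fun_prop)
  have hF0 : ∀ z, F z ≠ 0 := fun z => by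
    by_cases hz : z ∈ U
    · simp [hF, hz]
    · simpa [hF, hz, sub_eq_zero] using fun h : z = p => hz (h ▸ hp)
  obtain ⟨T, hT0, hT⟩ := hU.subset_ball_lt 0 p
  refine not_hasLogOn_sphere p hT0 (((hasLogOn_univ hFc hF0).mono (subset_univ _)).congr ?_)
  intro z hz
  have hzU : z ∉ U := fun h => (Metric.mem_ball.1 (hT h)).ne (Metric.mem_sphere.1 hz)
  simp [hF, hzU]

theorem not_frontier_subset_union_of_isPreconnected {K C L U : Set ℂ} {p a : ℂ} {r : ℝ}
    (hU : IsBounded U) (hpU : p ∈ U) (hK : IsClosed K) (hC : IsClosed C)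
    (hlog : HasLogOn (fun z => z - p) K) (hp : p ∉ Metric.ball a r) (hCa : C ⊆ Metric.ball a r)
    (hLa : L ⊆ Metric.ball a r) (hLK : L ⊆ K) (hL : IsPreconnected L) (hCKL : C ∩ K ⊆ L) :
    ¬ frontier U ⊆ C ∪ K := by
  intro hfr
  exact not_hasLogOn_frontier hU hpU
    ((((hasLogOn_ball hp).mono (union_subset hCa hLa)).union hlog hL hC hK hCKL hLK).mono hfr)

theorem hasLogOn_sub_of_isPreconnected {Ω K : Set ℂ} (hΩ : IsPreconnected Ω)
    (hΩ' : ¬ IsBounded Ω) (hK : IsCompact K) (hdisj : Disjoint Ω K) {p : ℂ} (hp : p ∈ Ω) :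
    HasLogOn (fun z => z - p) K := by
  obtain ⟨M, hM0, hM⟩ := hK.isBounded.exists_pos_norm_le
  obtain ⟨q, hq, hMq⟩ : ∃ q ∈ Ω, M < ‖q‖ := by
    by_contra! h
    exact hΩ' (isBounded_iff_forall_norm_le.2 ⟨M, h⟩)
  have hlogq : HasLogOn (fun z => z - q) K :=
    ⟨_, isLogOn_sub_const_of_norm_lt (norm_pos_iff.1 (hM0.trans hMq)) fun z hz =>
      (hM z hz).trans_lt hMq⟩
  have hlocal : ∀ x ∈ Ω, ∀ᶠ y in 𝓝[Ω] x,
      (HasLogOn (fun z => z - x) K → HasLogOn (fun z => z - y) K) ∧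
      (HasLogOn (fun z => z - y) K → HasLogOn (fun z => z - x) K) := by
    intro x hx
    obtain ⟨ε, hε, hball⟩ :=
      Metric.isOpen_iff.1 hK.isClosed.isOpen_compl x (disjoint_left.1 hdisj hx)
    filter_upwards [nhdsWithin_le_nhds (Metric.ball_mem_nhds x (half_pos hε))] with y hy
    have hxy : ‖y - x‖ < ε / 2 := by simpa [dist_eq_norm] using hy
    have hzx : ∀ z ∈ K, ε ≤ ‖z - x‖ := fun z hz => by
      by_contra! h
      exact hball (by simpa [dist_eq_norm] using h) hz
    refine ⟨fun ⟨_, h⟩ => ⟨_, h.sub_const_of_norm_lt fun z hz => ?_⟩,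
      fun ⟨_, h⟩ => ⟨_, h.sub_const_of_norm_lt fun z hz => ?_⟩⟩
    · linarith [hzx z hz]
    · rw [norm_sub_rev]
      linarith [hzx z hz, norm_sub_le_norm_sub_add_norm_sub z y x]
  exact hΩ.induction₂' (fun x y => HasLogOn (fun z => z - x) K → HasLogOn (fun z => z - y) K)
    hlocal (fun _ _ _ _ _ _ hxy hyz => hyz ∘ hxy) hq hp hlogq

end Logarithm

section NormalizedLog

open Complex Filter Bornology

/-- A holomorphic logarithm of `F` on the complement of `K`, normalised to vanish at infinity. -/
structure IsNormalizedLog (K : Set ℂ) (F l : ℂ → ℂ) : Prop where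
  differentiableAt : ∀ z ∉ K, DifferentiableAt ℂ l z
  exp_eq : ∀ z ∉ K, exp (l z) = F z
  tendsto : Tendsto l (cobounded ℂ) (𝓝 0)

variable {K S : Set ℂ} {F G l m : ℂ → ℂ}

theorem IsNormalizedLog.one (K : Set ℂ) : IsNormalizedLog K 1 0 :=
  ⟨fun _ _ => differentiableAt_const 0, fun _ _ => exp_zero, tendsto_const_nhds⟩

theorem IsNormalizedLog.mul (hF : IsNormalizedLog K F l) (hG : IsNormalizedLog K G m) :
    IsNormalizedLog K (F * G) (l + m) where
  differentiableAt z hz := (hF.differentiableAt z hz).add (hG.differentiableAt z hz)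
  exp_eq z hz := by rw [Pi.add_apply, exp_add, hF.exp_eq z hz, hG.exp_eq z hz, Pi.mul_apply]
  tendsto := by simpa [Pi.add_def] using hF.tendsto.add hG.tendsto

theorem IsNormalizedLog.multiset_prod {ι : Type*} {F : ι → ℂ → ℂ} (s : Multiset ι)
    (h : ∀ i ∈ s, ∃ l, IsNormalizedLog K (F i) l) : ∃ l, IsNormalizedLog K (s.map F).prod l := by
  induction s using Multiset.induction_on with
  | empty => exact ⟨0, by simpa using IsNormalizedLog.one K⟩
  | cons i s ih =>
    obtain ⟨l, hl⟩ := h i (Multiset.mem_cons_self i s)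
    obtain ⟨m, hm⟩ := ih fun j hj => h j (Multiset.mem_cons_of_mem hj)
    exact ⟨l + m, by simpa using hl.mul hm⟩

theorem tendsto_log_one_sub_div_cobounded (x : ℂ) :
    Tendsto (fun z => log (1 - x / z)) (cobounded ℂ) (𝓝 0) := by
  have hdiv : Tendsto (fun z : ℂ => 1 - x / z) (cobounded ℂ) (𝓝 1) := by
    simpa [div_eq_mul_inv] using (tendsto_inv₀_cobounded (α := ℂ)).const_mul x |>.const_sub 1
  simpa using hdiv.clog (by simp)

/-- For fixed `z ∉ K` the function `x ↦ x - z` has a logarithm `h z` on `K`, unique on `S` up to an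
additive constant, so that `h z k - h z k'` is a canonical logarithm of `(z - k) / (z - k')`. -/
theorem exists_isNormalizedLog_sub_div_sub (hK : IsCompact K) (hKc : IsPreconnected Kᶜ)
    (hS : IsPreconnected S) (hSK : S ⊆ K) {k k' : ℂ} (hk : k ∈ S) (hk' : k' ∈ S) :
    ∃ l, IsNormalizedLog K (fun z => (z - k) / (z - k')) l := by
  have hunb : ¬ IsBounded Kᶜ := fun h => NormedSpace.unbounded_univ ℂ ℂ <| by
    simpa using hK.isBounded.union h
  choose! h hh using fun z (hz : z ∉ K) =>
    hasLogOn_sub_of_isPreconnected hKc hunb hK disjoint_compl_left hz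
  have hcanon : ∀ z ∉ K, ∀ g, IsLogOn g (fun x => x - z) S → h z k - h z k' = g k - g k' :=
    fun z hz g hg => by linear_combination ((hh z hz).mono hSK).sub_eq_sub hg hS hk hk'
  have hlocal : ∀ z₀ ∉ K, ∀ᶠ z in 𝓝 z₀, h z k - h z k' = (h z₀ k - h z₀ k') +
      (log (1 - (z - z₀) / (k - z₀)) - log (1 - (z - z₀) / (k' - z₀))) := by
    intro z₀ hz₀
    obtain ⟨ε, hε, hball⟩ := Metric.isOpen_iff.1 hK.isClosed.isOpen_compl z₀ hz₀
    filter_upwards [Metric.ball_mem_nhds z₀ hε] with z hz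
    have hlt : ∀ x ∈ S, ‖z - z₀‖ < ‖x - z₀‖ := fun x hx => by
      by_contra! hle
      exact hball (mem_ball_iff_norm.2 (hle.trans_lt (mem_ball_iff_norm.1 hz))) (hSK hx)
    rw [hcanon z (hball hz) _ (((hh z₀ hz₀).mono hSK).sub_const_of_norm_lt hlt)]
    ring
  have hfar : ∀ᶠ z in cobounded ℂ, h z k - h z k' = log (1 - k / z) - log (1 - k' / z) := by
    obtain ⟨M, hM0, hM⟩ := hK.isBounded.exists_pos_norm_le
    filter_upwards [tendsto_norm_cobounded_atTop.eventually_gt_atTop M] with z hz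
    rw [hcanon z (fun hzK => (hM z hzK).not_gt hz) _ (isLogOn_sub_const_of_norm_lt
      (norm_pos_iff.1 (hM0.trans hz)) fun x hx => (hM x (hSK hx)).trans_lt hz)]
    ring
  refine ⟨fun z => h z k - h z k', fun z₀ hz₀ => ?_, fun z hz => ?_, ?_⟩
  · have hlog : ∀ x, DifferentiableAt ℂ (fun z => log (1 - (z - z₀) / (x - z₀))) z₀ := fun x =>
      DifferentiableAt.clog (by fun_prop) (by simp)
    exact (((hlog k).sub (hlog k')).const_add _).congr_of_eventuallyEq (hlocal z₀ hz₀)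
  · rw [exp_sub, (hh z hz).exp_eq k (hSK hk), (hh z hz).exp_eq k' (hSK hk'), ← neg_sub z k,
      ← neg_sub z k', neg_div_neg_eq]
  · simpa using ((tendsto_log_one_sub_div_cobounded k).sub
      (tendsto_log_one_sub_div_cobounded k')).congr' (hfar.mono fun z hz => hz.symm)

end NormalizedLog

section LengthArea

open MeasureTheory Metric Filter
open scoped ENNReal

theorem exists_pos_forall_dist_lt_exists_isPreconnected {X : Type*} [PseudoMetricSpace X]
    [CompactSpace X] [LocallyConnectedSpace X] {η : ℝ} (hη : 0 < η) :
    ∃ δ > 0, ∀ a b : X, dist b a < δ →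
      ∃ L, IsPreconnected L ∧ a ∈ L ∧ b ∈ L ∧ L ⊆ ball a η := by
  choose V hVball hVopen hVmem hVconn using fun x : X =>
    (locallyConnectedSpace_iff_subsets_isOpen_isConnected.1 ‹_›) x (ball x (η / 2))
      (ball_mem_nhds x (half_pos hη))
  obtain ⟨δ, hδ, h⟩ := lebesgue_number_lemma_of_metric isCompact_univ hVopen
    fun x _ => mem_iUnion.2 ⟨x, hVmem x⟩
  refine ⟨δ, hδ, fun a b hab => ?_⟩
  obtain ⟨x, hx⟩ := h a (mem_univ a)
  have ha : a ∈ V x := hx (mem_ball_self hδ)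
  refine ⟨V x, (hVconn x).isPreconnected, ha, hx (mem_ball.2 hab), (hVball x).trans ?_⟩
  refine ball_subset_ball' ?_
  linarith [mem_ball'.1 (hVball x ha)]

section Curve

variable {E : Type*} [NormedAddCommGroup E] [NormedSpace ℝ E] {γ : ℝ → E} {a b M : ℝ}

theorem dist_le_of_setLIntegral_enorm_deriv_le (hM : 0 ≤ M) (hγ : ContDiffOn ℝ 1 γ (Ioo a b))
    (h : ∫⁻ x in Ioo a b, ‖deriv γ x‖ₑ ≤ ENNReal.ofReal M) {x y : ℝ} (hx : x ∈ Ioo a b)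
    (hy : y ∈ Ioo a b) : dist (γ x) (γ y) ≤ M := by
  wlog hxy : y ≤ x generalizing x y
  · rw [dist_comm]
    exact this hy hx (le_of_not_ge hxy)
  have hsub : Icc y x ⊆ Ioo a b := Icc_subset_Ioo hy.1 hx.2
  rw [dist_eq_norm, ← ENNReal.ofReal_le_ofReal_iff hM, ofReal_norm]
  exact (enorm_sub_le_lintegral_deriv_of_contDiffOn_Icc (hγ.mono hsub) hxy).trans
    ((lintegral_mono_set hsub).trans h)

theorem exists_tendsto_nhdsGT_of_setLIntegral_enorm_deriv_ne_top [CompleteSpace E] (hab : a < b)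
    (hγ : ContDiffOn ℝ 1 γ (Ioo a b)) (h : ∫⁻ x in Ioo a b, ‖deriv γ x‖ₑ ≠ ∞) :
    ∃ l, Tendsto γ (𝓝[>] a) (𝓝 l) := by
  have hvol : Tendsto (fun c => volume.restrict (Ioo a b) (Ioo a c)) (𝓝[>] a) (𝓝 0) := by
    have hlen : Tendsto (fun c => ENNReal.ofReal (c - a)) (𝓝[>] a) (𝓝 0) := by
      refine Tendsto.mono_left ?_ nhdsWithin_le_nhds
      simpa using ENNReal.tendsto_ofReal ((continuous_sub_right a).tendsto a)
    refine tendsto_of_tendsto_of_tendsto_of_le_of_le tendsto_const_nhds hlen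
      (fun _ => zero_le) fun c => ?_
    rw [← Real.volume_Ioo]
    exact Measure.restrict_apply_le _ _
  refine cauchy_map_iff_exists_tendsto.1 (Metric.cauchy_iff.2 ⟨inferInstance, fun η hη => ?_⟩)
  obtain ⟨c, hc, hcb⟩ := (((tendsto_setLIntegral_zero h hvol).eventually_lt_const
    (ENNReal.ofReal_pos.2 (half_pos hη))).and (Ioo_mem_nhdsGT hab)).exists
  have hsub : Ioo a c ⊆ Ioo a b := Ioo_subset_Ioo_right hcb.2.le
  rw [Measure.restrict_restrict measurableSet_Ioo, inter_eq_self_of_subset_left hsub] at hc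
  refine ⟨γ '' Ioo a c, image_mem_map (Ioo_mem_nhdsGT hcb.1), ?_⟩
  rintro _ ⟨x, hx, rfl⟩ _ ⟨y, hy, rfl⟩
  exact (dist_le_of_setLIntegral_enorm_deriv_le (half_pos hη).le (hγ.mono hsub) hc.le
    hx hy).trans_lt (half_lt_self hη)

end Curve

theorem det_restrictScalars_toSpanSingleton (c : ℂ) :
    ((ContinuousLinearMap.toSpanSingleton ℂ c : ℂ →L[ℂ] ℂ).restrictScalars ℝ).det = ‖c‖ ^ 2 := by
  rw [← Complex.normSq_eq_norm_sq, ← Algebra.norm_complex_apply, Algebra.norm_apply,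
    ContinuousLinearMap.det]
  congr 1
  ext
  simp [mul_comm]

theorem setLIntegral_enorm_deriv_sq_eq_volume_image {Φ : ℂ → ℂ} {S : Set ℂ} (hS : IsOpen S)
    (hΦ : DifferentiableOn ℂ Φ S) (hinj : InjOn Φ S) :
    ∫⁻ s in S, ‖deriv Φ s‖ₑ ^ 2 = volume (Φ '' S) := by
  rw [← lintegral_abs_det_fderiv_eq_addHaar_image volume hS.measurableSet (fun s hs =>
    ((hΦ.differentiableAt (hS.mem_nhds hs)).hasDerivAt.hasFDerivAt.restrictScalars
      ℝ).hasFDerivWithinAt) hinj]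
  simp only [det_restrictScalars_toSpanSingleton, abs_pow, abs_norm,
    ENNReal.ofReal_pow (norm_nonneg _), ofReal_norm]

theorem sq_lintegral_le_measure_univ_mul_lintegral_sq {α : Type*} [MeasurableSpace α]
    {μ : Measure α} {f : α → ℝ≥0∞} (hf : AEMeasurable f μ) :
    (∫⁻ x, f x ∂μ) ^ 2 ≤ μ univ * ∫⁻ x, f x ^ 2 ∂μ := by
  have h := ENNReal.lintegral_mul_le_Lp_mul_Lq μ Real.HolderConjugate.two_two
    (aemeasurable_const (b := 1)) hf
  simp only [Pi.mul_apply, one_mul, ENNReal.rpow_two, one_pow, lintegral_one] at h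
  calc (∫⁻ x, f x ∂μ) ^ 2
      ≤ (μ univ ^ (1 / 2 : ℝ) * (∫⁻ x, f x ^ 2 ∂μ) ^ (1 / 2 : ℝ)) ^ 2 := by gcongr
    _ = μ univ * ∫⁻ x, f x ^ 2 ∂μ := by
      rw [mul_pow, ← ENNReal.rpow_mul_natCast, ← ENNReal.rpow_mul_natCast]
      norm_num

theorem exists_mem_setLIntegral_le {α β : Type*} [MeasurableSpace α] [MeasurableSpace β]
    {μ : Measure α} {ν : Measure β} [SFinite ν] {A : Set α} {B : Set β} {g : α → β → ℝ≥0∞}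
    (hg : Measurable (uncurry g)) {c : ℝ≥0∞} (hA : μ A ≠ 0) (hA' : μ A ≠ ∞)
    (hAB : ν B ≤ 2 * μ A) (h : 2 * ∫⁻ a in A, ∫⁻ b in B, g a b ^ 2 ∂ν ∂μ ≤ c ^ 2) :
    ∃ a ∈ A, ∫⁻ b in B, g a b ∂ν ≤ c := by
  obtain ⟨a, ha, hle⟩ := exists_le_setLAverage hA hA'
    (Measurable.lintegral_prod_right' (ν := ν.restrict B) (hg.pow_const 2)).aemeasurable
  refine ⟨a, ha, (ENNReal.pow_le_pow_left_iff two_ne_zero).1 ?_⟩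
  calc (∫⁻ b in B, g a b ∂ν) ^ 2
      ≤ ν.restrict B univ * ∫⁻ b in B, g a b ^ 2 ∂ν :=
        sq_lintegral_le_measure_univ_mul_lintegral_sq
          (hg.comp measurable_prodMk_left).aemeasurable
    _ ≤ 2 * μ A * ⨍⁻ a in A, ∫⁻ b in B, g a b ^ 2 ∂ν ∂μ := by
        rw [Measure.restrict_apply_univ]
        exact mul_le_mul' hAB hle
    _ = 2 * ∫⁻ a in A, ∫⁻ b in B, g a b ^ 2 ∂ν ∂μ := by
        rw [mul_assoc, measure_mul_setLAverage _ hA']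
    _ ≤ c ^ 2 := h

theorem setLIntegral_reProdIm {f : ℂ → ℝ≥0∞} (hf : Measurable f) (A B : Set ℝ) :
    ∫⁻ z in A ×ℂ B, f z = ∫⁻ x in A, ∫⁻ y in B, f (x + y * Complex.I) := by
  rw [← Complex.volume_preserving_equiv_real_prod.symm.setLIntegral_comp_preimage_emb
    Complex.measurableEquivRealProd.symm.measurableEmbedding, Measure.volume_eq_prod]
  simp only [← Complex.mk_eq_add_mul_I]
  exact setLIntegral_prod _ (hf.comp Complex.measurableEquivRealProd.symm.measurable).aemeasurable

theorem setLIntegral_reProdIm_symm {f : ℂ → ℝ≥0∞} (hf : Measurable f) (A B : Set ℝ) :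
    ∫⁻ z in A ×ℂ B, f z = ∫⁻ y in B, ∫⁻ x in A, f (x + y * Complex.I) := by
  rw [setLIntegral_reProdIm hf, lintegral_lintegral_swap]
  exact (hf.comp (by fun_prop)).aemeasurable

/-- The box of width `ε` and height `2 ε` in the right half-plane, centred on the left at
`t * I`. -/
def boundaryBox (t ε : ℝ) : Set ℂ :=
  Ioo 0 ε ×ℂ Ioo (t - ε) (t + ε)

theorem isOpen_boundaryBox (t ε : ℝ) : IsOpen (boundaryBox t ε) :=
  isOpen_Ioo.reProdIm isOpen_Ioo

theorem boundaryBox_subset_boundaryBox {t ε δ : ℝ} (h : ε ≤ δ) :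
    boundaryBox t ε ⊆ boundaryBox t δ := fun _ hz =>
  ⟨Ioo_subset_Ioo_right h hz.1, Ioo_subset_Ioo (by linarith) (by linarith) hz.2⟩

theorem tendsto_volume_boundaryBox (t : ℝ) :
    Tendsto (fun ε => volume (boundaryBox t ε)) (𝓝[>] 0) (𝓝 0) := by
  have hvol (ε : ℝ) : volume (boundaryBox t ε) = ENNReal.ofReal (2 * ε) * ENNReal.ofReal ε := by
    have h := setLIntegral_reProdIm measurable_one (Ioo 0 ε) (Ioo (t - ε) (t + ε))
    simpa [boundaryBox, show t + ε - (t - ε) = 2 * ε by ring] using h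
  have htwo : Tendsto (fun ε => ENNReal.ofReal (2 * ε)) (𝓝 0) (𝓝 0) := by
    simpa using ENNReal.tendsto_ofReal ((continuous_const_mul (2 : ℝ)).tendsto 0)
  have hone : Tendsto ENNReal.ofReal (𝓝 0) (𝓝 0) := by
    simpa using ENNReal.continuous_ofReal.tendsto 0
  simp only [hvol]
  simpa using (ENNReal.Tendsto.mul htwo (by simp) hone (by simp)).mono_left nhdsWithin_le_nhds

theorem exists_setLIntegral_boundaryBox_lt {f : ℂ → ℝ≥0∞} {t δ : ℝ} {c : ℝ≥0∞} (hδ : 0 < δ)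
    (h : ∫⁻ z in boundaryBox t δ, f z ≠ ∞) (hc : 0 < c) :
    ∃ ε ∈ Ioo 0 δ, ∫⁻ z in boundaryBox t ε, f z < c := by
  have hvol : Tendsto (fun ε => volume.restrict (boundaryBox t δ) (boundaryBox t ε)) (𝓝[>] 0)
      (𝓝 0) :=
    tendsto_of_tendsto_of_tendsto_of_le_of_le tendsto_const_nhds (tendsto_volume_boundaryBox t)
      (fun _ => zero_le) fun _ => Measure.restrict_apply_le _ _
  obtain ⟨ε, hεc, hε⟩ := (((tendsto_setLIntegral_zero h hvol).eventually_lt_const hc).and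
    (Ioo_mem_nhdsGT hδ)).exists
  rw [Measure.restrict_restrict (isOpen_boundaryBox t ε).measurableSet,
    inter_eq_self_of_subset_left (boundaryBox_subset_boundaryBox hε.2.le)] at hεc
  exact ⟨ε, hε, hεc⟩

theorem exists_setLIntegral_le_of_setLIntegral_boundaryBox_ne_top {f : ℂ → ℝ≥0∞}
    (hf : Measurable f) {t δ : ℝ} {c : ℝ≥0∞} (hδ : 0 < δ)
    (h : ∫⁻ z in boundaryBox t δ, f z ^ 2 ≠ ∞) (hc : 0 < c) :
    ∃ ε ∈ Ioo 0 δ, ∃ x₀ ∈ Ioo 0 ε, ∃ t₁ ∈ Ioo (t - ε) t, ∃ t₂ ∈ Ioo t (t + ε),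
      ∫⁻ x in Ioo 0 ε, f (x + t₁ * Complex.I) ≤ c ∧
      ∫⁻ x in Ioo 0 ε, f (x + t₂ * Complex.I) ≤ c ∧
      ∫⁻ y in Ioo (t - ε) (t + ε), f (x₀ + y * Complex.I) ≤ c := by
  obtain ⟨ε, hε, hlt⟩ := exists_setLIntegral_boundaryBox_lt hδ h
    (ENNReal.div_pos (pow_ne_zero 2 hc.ne') ENNReal.ofNat_ne_top : 0 < c ^ 2 / 2)
  have hle : 2 * ∫⁻ z in boundaryBox t ε, f z ^ 2 ≤ c ^ 2 := by
    rw [mul_comm]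
    exact (ENNReal.le_div_iff_mul_le (by simp) (by simp)).1 hlt.le
  have hf₁ : Measurable (uncurry fun x y : ℝ => f (x + y * Complex.I)) := hf.comp (by fun_prop)
  have hf₂ : Measurable (uncurry fun y x : ℝ => f (x + y * Complex.I)) := hf.comp (by fun_prop)
  have hcols := (setLIntegral_reProdIm (hf.pow_const 2) _ _).symm ▸ hle
  have hrows {A : Set ℝ} (hA : A ⊆ Ioo (t - ε) (t + ε)) :
      2 * ∫⁻ y in A, ∫⁻ x in Ioo 0 ε, f (x + y * Complex.I) ^ 2 ≤ c ^ 2 := by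
    refine le_trans ?_ hle
    rw [boundaryBox, setLIntegral_reProdIm_symm (hf.pow_const 2)]
    gcongr
  have hpos : 0 < ε := hε.1
  have htall : volume (Ioo (t - ε) (t + ε)) ≤ 2 * volume (Ioo 0 ε) := by
    rw [Real.volume_Ioo, Real.volume_Ioo, ← ENNReal.ofReal_ofNat,
      ← ENNReal.ofReal_mul zero_le_two]
    exact (congrArg _ (by ring)).le
  have hwide : ENNReal.ofReal ε ≤ 2 * ENNReal.ofReal ε := le_mul_of_one_le_left' one_le_two
  obtain ⟨x₀, hx₀, hx₀c⟩ := exists_mem_setLIntegral_le hf₁ (A := Ioo 0 ε)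
    (by simpa) (by simp) htall hcols
  obtain ⟨t₁, ht₁, ht₁c⟩ := exists_mem_setLIntegral_le hf₂ (A := Ioo (t - ε) t)
    (by simpa) (by simp) (by simpa) (hrows (Ioo_subset_Ioo_right (by linarith)))
  obtain ⟨t₂, ht₂, ht₂c⟩ := exists_mem_setLIntegral_le hf₂ (A := Ioo t (t + ε))
    (by simpa) (by simp) (by simpa) (hrows (Ioo_subset_Ioo_left (by linarith)))
  exact ⟨ε, hε, x₀, hx₀, t₁, ht₁, t₂, ht₂, ht₁c, ht₂c, hx₀c⟩

end LengthArea

section BoundaryLimit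

open Complex Metric Filter Bornology
open MeasureTheory (volume)

theorem isOpen_image_of_injOn {Φ : ℂ → ℂ} {S : Set ℂ} (hS : IsOpen S)
    (hΦ : DifferentiableOn ℂ Φ S) (hinj : InjOn Φ S) : IsOpen (Φ '' S) := by
  refine isOpen_iff_mem_nhds.2 (forall_mem_image.2 fun s hs => ?_)
  have hSs := hS.mem_nhds hs
  refine (hΦ.analyticAt hSs).eventually_constant_or_nhds_le_map_nhds.elim (fun h => ?_)
    fun h => h (image_mem_map hSs)
  obtain ⟨z, ⟨hz, hzS⟩, hzs⟩ :=
    (((h.and hSs).filter_mono nhdsWithin_le_nhds).and (self_mem_nhdsWithin (s := {s}ᶜ))).exists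
  exact absurd (hinj hzS hs hz) hzs

theorem isCompact_insert_image_Ioc {X : Type*} [TopologicalSpace X] {γ : ℝ → X} {a b : ℝ} {l : X}
    (hab : a ≤ b) (hγ : ContinuousOn γ (Ioc a b)) (hl : Tendsto γ (𝓝[>] a) (𝓝 l)) :
    IsCompact (insert l (γ '' Ioc a b)) := by
  have hcont : ContinuousOn (update γ a l) (Icc a b) := by
    rw [continuousOn_update_iff, Icc_sdiff_left]
    exact ⟨hγ, fun _ => hl.mono_left (nhdsWithin_mono a Ioc_subset_Ioi_self)⟩
  have himage : insert l (γ '' Ioc a b) = update γ a l '' Icc a b := by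
    rw [← Ioc_insert_left hab, image_insert_eq, update_self]
    exact congrArg _ (image_congr fun x hx => (update_of_ne hx.1.ne' _ _).symm)
  exact himage ▸ isCompact_Icc.image_of_continuousOn hcont

/-- The open right half-plane, carrying the logarithmic coordinate `s = log w` of the exterior of
the unit disc. -/
def rightHalfPlane : Set ℂ :=
  {s | 0 < s.re}

theorem isOpen_rightHalfPlane : IsOpen rightHalfPlane :=
  isOpen_lt continuous_const continuous_re

theorem convex_rightHalfPlane : Convex ℝ rightHalfPlane :=
  convex_halfSpace_re_gt 0

theorem ofReal_add_mul_I_mem_rightHalfPlane {x y : ℝ} :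
    (x + y * I : ℂ) ∈ rightHalfPlane ↔ 0 < x := by
  simp [rightHalfPlane]

/-- A holomorphic map of the right half-plane into the complement of `K`, with unbounded image,
whose cluster values as the real part tends to `0` lie in `K`. -/
structure IsExteriorMap (Φ : ℂ → ℂ) (K : Set ℂ) : Prop where
  differentiableOn : DifferentiableOn ℂ Φ rightHalfPlane
  notMem : ∀ s ∈ rightHalfPlane, Φ s ∉ K
  not_isBounded : ¬ IsBounded (Φ '' rightHalfPlane)
  mem_of_mapClusterPt : ∀ z, MapClusterPt z (comap re (𝓝[>] 0)) Φ → z ∈ K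

namespace IsExteriorMap

variable {Φ : ℂ → ℂ} {K R : Set ℂ} {t : ℝ} (h : IsExteriorMap Φ K)
include h

theorem differentiableAt {s : ℂ} (hs : s ∈ rightHalfPlane) : DifferentiableAt ℂ Φ s :=
  h.differentiableOn.differentiableAt (isOpen_rightHalfPlane.mem_nhds hs)

theorem exists_mem_nhds_forall_notMem {z : ℂ} (hz : z ∉ K) :
    ∃ V ∈ 𝓝 z, ∃ ρ > 0, ∀ s ∈ rightHalfPlane, s.re < ρ → Φ s ∉ V := by
  have hcluster := mt (h.mem_of_mapClusterPt z) hz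
  rw [mapClusterPt_iff_frequently] at hcluster
  push Not at hcluster
  obtain ⟨V, hV, hev⟩ := hcluster
  obtain ⟨ρ, hρ, hsub⟩ := ((nhdsGT_basis (0 : ℝ)).comap re).mem_iff.1 hev
  exact ⟨V, hV, ρ, hρ, fun s hs hsρ => hsub ⟨hs, hsρ⟩⟩

theorem mem_frontier_of_tendsto (hK : IsClosed K) {ι : Type*} {l : Filter ι} [l.NeBot]
    {u : ι → ℂ} {c : ℂ} (hu : Tendsto (fun i => (u i).re) l (𝓝[>] 0))
    (hc : Tendsto (fun i => Φ (u i)) l (𝓝 c)) : c ∈ frontier K := by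
  rw [hK.frontier_eq]
  refine ⟨h.mem_of_mapClusterPt c (hc.mapClusterPt.of_comp (tendsto_comap_iff.2 hu)), fun hci => ?_⟩
  obtain ⟨i, hi, hpos⟩ := ((hc.eventually (isOpen_interior.mem_nhds hci)).and
    (hu.eventually self_mem_nhdsWithin)).exists
  exact h.notMem (u i) hpos (interior_subset hi)

theorem frontier_image_subset (hR : IsBounded R) (hRH : R ⊆ rightHalfPlane)
    (hΦR : IsOpen (Φ '' R)) :
    frontier (Φ '' R) ⊆ Φ '' ((closure R ∩ rightHalfPlane) \ R) ∪ K := by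
  intro z hz
  by_cases hzK : z ∈ K
  · exact Or.inr hzK
  rw [hΦR.frontier_eq] at hz
  obtain ⟨V, hV, ρ, hρ, hVρ⟩ := h.exists_mem_nhds_forall_notMem hzK
  have hQH : closure R ∩ re ⁻¹' Ici ρ ⊆ rightHalfPlane := fun s hs => hρ.trans_le hs.2
  have hQ : IsCompact (Φ '' (closure R ∩ re ⁻¹' Ici ρ)) :=
    (hR.isCompact_closure.inter_right (isClosed_Ici.preimage continuous_re)).image_of_continuousOn
      (h.differentiableOn.continuousOn.mono hQH)
  have hcover : Φ '' R ⊆ Vᶜ ∪ Φ '' (closure R ∩ re ⁻¹' Ici ρ) := by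
    rintro _ ⟨s, hs, rfl⟩
    rcases lt_or_ge s.re ρ with hlt | hge
    · exact Or.inl (hVρ s (hRH hs) hlt)
    · exact Or.inr ⟨s, ⟨subset_closure hs, hge⟩, rfl⟩
  have hzV : z ∉ closure Vᶜ := by
    rwa [closure_compl, notMem_compl_iff, mem_interior_iff_mem_nhds]
  have hz' := closure_mono hcover hz.1
  rw [closure_union] at hz'
  rcases hz' with hzc | hzQ
  · exact absurd hzc hzV
  · obtain ⟨s, hs, rfl⟩ := hQ.isClosed.closure_eq ▸ hzQ
    exact Or.inl ⟨s, ⟨⟨hs.1, hQH hs⟩, fun hsR => hz.2 ⟨s, hsR, rfl⟩⟩, rfl⟩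

theorem image_subset_ball_of_crosscut (hK : IsCompact K) (hR : IsBounded R)
    (hRH : R ⊆ rightHalfPlane) (hΦR : IsOpen (Φ '' R)) (hΦR' : IsBounded (Φ '' R))
    {C L : Set ℂ} {a : ℂ} {r : ℝ} (hC : IsClosed C) (hCa : C ⊆ ball a r) (hLa : L ⊆ ball a r)
    (hLK : L ⊆ K) (hL : IsPreconnected L) (hCKL : C ∩ K ⊆ L)
    (hRC : Φ '' ((closure R ∩ rightHalfPlane) \ R) ⊆ C) : Φ '' R ⊆ ball a r := by
  rintro p hp
  by_contra hpa
  have hlog : HasLogOn (fun z => z - p) K := hasLogOn_sub_of_isPreconnected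
    (convex_rightHalfPlane.isPreconnected.image Φ h.differentiableOn.continuousOn)
    h.not_isBounded hK (disjoint_left.2 (forall_mem_image.2 h.notMem)) (image_mono hRH hp)
  exact not_frontier_subset_union_of_isPreconnected hΦR' hp hK.isClosed hC hlog hpa hCa hLa hLK hL
    hCKL ((h.frontier_image_subset hR hRH hΦR).trans (union_subset_union_left K hRC))

theorem contDiffOn_horizontal (t ε : ℝ) :
    ContDiffOn ℝ 1 (fun x : ℝ => Φ (x + t * I)) (Ioo 0 ε) :=
  ((h.differentiableOn.contDiffOn (n := 1) isOpen_rightHalfPlane).restrict_scalars ℝ).comp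
    (ofRealCLM.contDiff.add contDiff_const).contDiffOn
    fun _ hx => ofReal_add_mul_I_mem_rightHalfPlane.2 hx.1

theorem contDiffOn_vertical {x : ℝ} (hx : 0 < x) (s : Set ℝ) :
    ContDiffOn ℝ 1 (fun y : ℝ => Φ (x + y * I)) s :=
  ((h.differentiableOn.contDiffOn (n := 1) isOpen_rightHalfPlane).restrict_scalars ℝ).comp
    (contDiff_const.add (ofRealCLM.contDiff.mul contDiff_const)).contDiffOn
    fun _ _ => ofReal_add_mul_I_mem_rightHalfPlane.2 hx

theorem deriv_horizontal {x : ℝ} (hx : 0 < x) (t : ℝ) :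
    deriv (fun x : ℝ => Φ (x + t * I)) x = deriv Φ (x + t * I) := by
  have hd := (h.differentiableAt (ofReal_add_mul_I_mem_rightHalfPlane (y := t).2 hx)).hasDerivAt
  simpa [comp_def] using (hd.comp_of_eq x (ofRealCLM.hasDerivAt.add_const _) rfl).deriv

theorem deriv_vertical {x : ℝ} (hx : 0 < x) (t : ℝ) :
    deriv (fun y : ℝ => Φ (x + y * I)) t = deriv Φ (x + t * I) * I := by
  have hd := (h.differentiableAt (ofReal_add_mul_I_mem_rightHalfPlane (y := t).2 hx)).hasDerivAt
  simpa [comp_def] using (hd.comp_of_eq t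
    ((ofRealCLM.hasDerivAt.mul_const I).const_add (x : ℂ)) rfl).deriv

theorem exists_landing_point (hK : IsClosed K) {ε m : ℝ} (hε : 0 < ε) (hm : 0 ≤ m)
    (hlen : ∫⁻ x in Ioo 0 ε, ‖deriv Φ (x + t * I)‖ₑ ≤ ENNReal.ofReal m) :
    ∃ a ∈ frontier K, Tendsto (fun x : ℝ => Φ (x + t * I)) (𝓝[>] 0) (𝓝 a) ∧
      ∀ x ∈ Ioo 0 ε, dist (Φ (x + t * I)) a ≤ m := by
  have hlen' : ∫⁻ x in Ioo 0 ε, ‖deriv (fun x : ℝ => Φ (x + t * I)) x‖ₑ ≤ ENNReal.ofReal m := by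
    rwa [MeasureTheory.setLIntegral_congr_fun measurableSet_Ioo
      fun x hx => by rw [h.deriv_horizontal hx.1]]
  obtain ⟨a, ha⟩ := exists_tendsto_nhdsGT_of_setLIntegral_enorm_deriv_ne_top hε
    (h.contDiffOn_horizontal t ε) (hlen'.trans_lt ENNReal.ofReal_lt_top).ne
  refine ⟨a, h.mem_frontier_of_tendsto hK (by simpa using! tendsto_id) ha, ha, fun x hx => ?_⟩
  refine le_of_tendsto (tendsto_const_nhds.dist ha) ?_
  filter_upwards [Ioo_mem_nhdsGT hε] with y hy
  exact dist_le_of_setLIntegral_enorm_deriv_le hm (h.contDiffOn_horizontal t ε) hlen' hx hy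

theorem dist_vertical_le {x u v m : ℝ} (hx : 0 < x) (hm : 0 ≤ m)
    (hlen : ∫⁻ y in Ioo u v, ‖deriv Φ (x + y * I)‖ₑ ≤ ENNReal.ofReal m) {y z : ℝ}
    (hy : y ∈ Ioo u v) (hz : z ∈ Ioo u v) : dist (Φ (x + y * I)) (Φ (x + z * I)) ≤ m :=
  dist_le_of_setLIntegral_enorm_deriv_le hm (h.contDiffOn_vertical hx _)
    (by simpa [h.deriv_vertical hx, enorm_mul, ← ofReal_norm] using hlen) hy hz

end IsExteriorMap

/-- The image under `Φ` of the part of the boundary of the rectangle `Ioo 0 x₀ ×ℂ Ioo t₁ t₂` lying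
in the right half-plane, completed by the landing points `a` and `b` of its horizontal sides. -/
def crosscut (Φ : ℂ → ℂ) (x₀ t₁ t₂ : ℝ) (a b : ℂ) : Set ℂ :=
  insert a ((fun x : ℝ => Φ (x + t₁ * I)) '' Ioc 0 x₀) ∪
    insert b ((fun x : ℝ => Φ (x + t₂ * I)) '' Ioc 0 x₀) ∪
      (fun y : ℝ => Φ (x₀ + y * I)) '' Icc t₁ t₂

theorem right_mem_crosscut {Φ : ℂ → ℂ} {x₀ t₁ t₂ : ℝ} {a b : ℂ} :
    b ∈ crosscut Φ x₀ t₁ t₂ a b :=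
  Or.inl (Or.inr (mem_insert b _))

theorem image_sdiff_subset_crosscut {Φ : ℂ → ℂ} {x₀ t₁ t₂ : ℝ} {a b : ℂ} (hx₀ : 0 < x₀)
    (ht : t₁ < t₂) :
    Φ '' ((closure (Ioo 0 x₀ ×ℂ Ioo t₁ t₂) ∩ rightHalfPlane) \ (Ioo 0 x₀ ×ℂ Ioo t₁ t₂)) ⊆
      crosscut Φ x₀ t₁ t₂ a b := by
  rw [closure_reProdIm, closure_Ioo hx₀.ne, closure_Ioo ht.ne]
  rintro _ ⟨s, ⟨⟨⟨⟨-, hsx⟩, ⟨hs₁, hs₂⟩⟩, hpos : 0 < s.re⟩, hsR⟩, rfl⟩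
  rcases hs₁.eq_or_lt with heq₁ | hlt₁
  · exact Or.inl (Or.inl (Or.inr ⟨s.re, ⟨hpos, hsx⟩, by simp [heq₁, re_add_im]⟩))
  rcases hs₂.eq_or_lt with heq₂ | hlt₂
  · exact Or.inl (Or.inr (Or.inr ⟨s.re, ⟨hpos, hsx⟩, by simp [← heq₂, re_add_im]⟩))
  have hre : s.re = x₀ := hsx.antisymm (not_lt.1 fun hlt => hsR ⟨⟨hpos, hlt⟩, hlt₁, hlt₂⟩)
  exact Or.inr ⟨s.im, ⟨hs₁, hs₂⟩, by simp [← hre, re_add_im]⟩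

namespace IsExteriorMap

variable {Φ : ℂ → ℂ} {K R : Set ℂ} {t : ℝ} (h : IsExteriorMap Φ K)
include h

theorem isClosed_crosscut {x₀ t₁ t₂ : ℝ} {a b : ℂ} (hx₀ : 0 < x₀)
    (ha : Tendsto (fun x : ℝ => Φ (x + t₁ * I)) (𝓝[>] 0) (𝓝 a))
    (hb : Tendsto (fun x : ℝ => Φ (x + t₂ * I)) (𝓝[>] 0) (𝓝 b)) :
    IsClosed (crosscut Φ x₀ t₁ t₂ a b) := by
  have hside : ∀ s : ℝ, ContinuousOn (fun x : ℝ => Φ (x + s * I)) (Ioc 0 x₀) := fun s =>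
    (h.contDiffOn_horizontal s (x₀ + 1)).continuousOn.mono (Ioc_subset_Ioo_right (lt_add_one x₀))
  exact (((isCompact_insert_image_Ioc hx₀.le (hside t₁) ha).union
    (isCompact_insert_image_Ioc hx₀.le (hside t₂) hb)).union (isCompact_Icc.image_of_continuousOn
      (h.contDiffOn_vertical hx₀ _).continuousOn)).isClosed

theorem crosscut_inter_subset {x₀ t₁ t₂ : ℝ} {a b : ℂ} (hx₀ : 0 < x₀) :
    crosscut Φ x₀ t₁ t₂ a b ∩ K ⊆ {a, b} := by
  have hnot : ∀ {x s : ℝ}, 0 < x → Φ (x + s * I) ∉ K := fun hx =>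
    h.notMem _ (ofReal_add_mul_I_mem_rightHalfPlane.2 hx)
  rintro _ ⟨((rfl | ⟨x, hx, rfl⟩) | (rfl | ⟨x, hx, rfl⟩)) | ⟨y, -, rfl⟩, hzK⟩
  · exact Or.inl rfl
  · exact absurd hzK (hnot hx.1)
  · exact Or.inr rfl
  · exact absurd hzK (hnot hx.1)
  · exact absurd hzK (hnot hx₀)

theorem exists_crosscut_subset_ball (hK : IsClosed K)
    (hA : ∫⁻ s in boundaryBox t 1, ‖deriv Φ s‖ₑ ^ 2 ≠ ⊤) {η : ℝ} (hη : 0 < η) :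
    ∃ x₀ ∈ Ioo (0 : ℝ) 1, ∃ t₁ ∈ Ioo (t - 1) t, ∃ t₂ ∈ Ioo t (t + 1),
      ∃ a ∈ frontier K, ∃ b ∈ frontier K, IsClosed (crosscut Φ x₀ t₁ t₂ a b) ∧
        crosscut Φ x₀ t₁ t₂ a b ⊆ ball a η := by
  obtain ⟨ε, ⟨hε, hε1⟩, x₀, hx₀, t₁, ht₁, t₂, ht₂, hlen₁, hlen₂, hlen₀⟩ :=
    exists_setLIntegral_le_of_setLIntegral_boundaryBox_ne_top (measurable_deriv Φ).enorm one_pos hA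
      (c := ENNReal.ofReal (η / 5)) (by simpa using hη)
  have hm : 0 ≤ η / 5 := by positivity
  obtain ⟨a, haK, ha, hda⟩ := h.exists_landing_point hK hε hm hlen₁
  obtain ⟨b, hbK, hb, hdb⟩ := h.exists_landing_point hK hε hm hlen₂
  have ht : Icc t₁ t₂ ⊆ Ioo (t - ε) (t + ε) := Icc_subset_Ioo ht₁.1 ht₂.2
  have hdv : ∀ y ∈ Icc t₁ t₂, dist (Φ (x₀ + y * I)) a ≤ 2 * (η / 5) := fun y hy => by
    linarith [dist_triangle (Φ (x₀ + y * I)) (Φ (x₀ + t₁ * I)) a, hda x₀ hx₀,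
      h.dist_vertical_le hx₀.1 hm hlen₀ (ht hy) (ht (left_mem_Icc.2 (ht₁.2.trans ht₂.1).le))]
  have hba : dist b a ≤ 3 * (η / 5) := by
    linarith [dist_triangle_left b a (Φ (x₀ + t₂ * I)), hdb x₀ hx₀,
      hdv t₂ (right_mem_Icc.2 (ht₁.2.trans ht₂.1).le)]
  refine ⟨x₀, ⟨hx₀.1, hx₀.2.trans hε1⟩, t₁, ⟨by linarith [ht₁.1], ht₁.2⟩, t₂,
    ⟨ht₂.1, by linarith [ht₂.2]⟩, a, haK, b, hbK, h.isClosed_crosscut hx₀.1 ha hb, ?_⟩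
  rintro _ (((rfl | ⟨x, hx, rfl⟩) | (rfl | ⟨x, hx, rfl⟩)) | ⟨y, hy, rfl⟩) <;> rw [mem_ball]
  · simpa using hη
  · linarith [hda x ⟨hx.1, hx.2.trans_lt hx₀.2⟩]
  · linarith
  · linarith [hdb x ⟨hx.1, hx.2.trans_lt hx₀.2⟩, dist_triangle (Φ (x + t₂ * I)) b a]
  · linarith [hdv y hy]

theorem exists_eventually_mem_ball (hK : IsCompact K) [LocallyConnectedSpace (frontier K)]
    (hinj : InjOn Φ (boundaryBox t 1)) (hbdd : IsBounded (Φ '' boundaryBox t 1)) {η : ℝ}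
    (hη : 0 < η) : ∃ a, ∀ᶠ s in 𝓝[rightHalfPlane] (t * I), Φ s ∈ ball a η := by
  have : CompactSpace (frontier K) :=
    isCompact_iff_compactSpace.1
      (hK.of_isClosed_subset isClosed_frontier hK.isClosed.frontier_subset)
  obtain ⟨δ, hδ, hL⟩ := exists_pos_forall_dist_lt_exists_isPreconnected (X := frontier K) hη
  have hBH : boundaryBox t 1 ⊆ rightHalfPlane := fun s hs => hs.1.1
  have hA : ∫⁻ s in boundaryBox t 1, ‖deriv Φ s‖ₑ ^ 2 ≠ ⊤ := by
    rw [setLIntegral_enorm_deriv_sq_eq_volume_image (isOpen_boundaryBox t 1)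
      (h.differentiableOn.mono hBH) hinj]
    exact hbdd.measure_lt_top.ne
  obtain ⟨x₀, hx₀, t₁, ht₁, t₂, ht₂, a, ha, b, hb, hC, hCa⟩ :=
    h.exists_crosscut_subset_ball hK.isClosed hA (lt_min hδ hη)
  set C := crosscut Φ x₀ t₁ t₂ a b
  obtain ⟨L, hLc, haL, hbL, hLa⟩ := hL ⟨a, ha⟩ ⟨b, hb⟩
    ((hCa right_mem_crosscut).trans_le (min_le_left δ η))
  set R := Ioo 0 x₀ ×ℂ Ioo t₁ t₂
  have hRB : R ⊆ boundaryBox t 1 := fun s hs =>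
    ⟨⟨hs.1.1, hs.1.2.trans hx₀.2⟩, ht₁.1.trans hs.2.1, hs.2.2.trans ht₂.2⟩
  have hball : Φ '' R ⊆ ball a η := h.image_subset_ball_of_crosscut hK
    ((isBounded_Ioo 0 x₀).reProdIm (isBounded_Ioo t₁ t₂)) (hRB.trans hBH)
    (isOpen_image_of_injOn (isOpen_Ioo.reProdIm isOpen_Ioo)
      (h.differentiableOn.mono (hRB.trans hBH)) (hinj.mono hRB))
    (hbdd.subset (image_mono hRB)) hC (hCa.trans (ball_subset_ball (min_le_right δ η)))
    (L := Subtype.val '' L) (image_subset_iff.2 hLa)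
    ((image_subset_range _ _).trans (Subtype.range_val.trans_subset hK.isClosed.frontier_subset))
    (hLc.image _ continuous_subtype_val.continuousOn)
    ((h.crosscut_inter_subset hx₀.1).trans
      (insert_subset ⟨_, haL, rfl⟩ (singleton_subset_iff.2 ⟨_, hbL, rfl⟩)))
    (image_sdiff_subset_crosscut hx₀.1 (ht₁.2.trans ht₂.1))
  have hnhds : Iio x₀ ×ℂ Ioo t₁ t₂ ∈ 𝓝 (t * I : ℂ) :=
    (isOpen_Iio.reProdIm isOpen_Ioo).mem_nhds (by simpa [mem_reProdIm] using ⟨hx₀.1, ht₁.2, ht₂.1⟩)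
  refine ⟨a, ?_⟩
  filter_upwards [nhdsWithin_le_nhds hnhds, self_mem_nhdsWithin] with s hs hpos
  exact hball ⟨s, ⟨⟨hpos, hs.1⟩, hs.2⟩, rfl⟩

theorem exists_tendsto_nhdsWithin_rightHalfPlane (hK : IsCompact K)
    [LocallyConnectedSpace (frontier K)] (hinj : InjOn Φ (boundaryBox t 1))
    (hbdd : IsBounded (Φ '' boundaryBox t 1)) :
    ∃ l, Tendsto Φ (𝓝[rightHalfPlane] (t * I)) (𝓝 l) := by
  have : (𝓝[rightHalfPlane] (t * I)).NeBot := mem_closure_iff_nhdsWithin_neBot.1 (by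
    simp [rightHalfPlane])
  refine cauchy_map_iff_exists_tendsto.1 (Metric.cauchy_iff.2 ⟨inferInstance, fun ε hε => ?_⟩)
  obtain ⟨a, ha⟩ := h.exists_eventually_mem_ball hK hinj hbdd (half_pos hε)
  refine ⟨ball a (ε / 2), ha, fun x hx y hy => ?_⟩
  linarith [dist_triangle_right x y a, mem_ball.1 hx, mem_ball.1 hy]

end IsExteriorMap

end BoundaryLimit

section FilledJulia

open Filter Bornology

/-- Outside the disc of radius `R`, the map `f` at least doubles the modulus. -/
structure IsEscapeRadius (f : ℂ → ℂ) (R : ℝ) : Prop where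
  one_le : 1 ≤ R
  two_mul_norm_le : ∀ z, R ≤ ‖z‖ → 2 * ‖z‖ ≤ ‖f z‖

theorem exists_isEscapeRadius_eval {p : Polynomial ℂ} (hp : 2 ≤ p.natDegree) :
    ∃ R, IsEscapeRadius p.eval R := by
  have hdeg : 0 < p.divX.degree := by
    rw [← Polynomial.natDegree_pos_iff_degree_pos, Polynomial.natDegree_divX_eq_natDegree_tsub_one]
    omega
  have hlarge := (p.divX.tendsto_norm_atTop hdeg
    (tendsto_norm_cobounded_atTop (E := ℂ))).eventually_ge_atTop (2 + ‖p.coeff 0‖)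
  rw [← comap_norm_atTop, eventually_comap] at hlarge
  obtain ⟨R, hR⟩ := eventually_atTop.1 hlarge
  refine ⟨max R 1, le_max_right _ _, fun z hz => ?_⟩
  have hz1 : 1 ≤ ‖z‖ := (le_max_right R 1).trans hz
  have hdivX : 2 + ‖p.coeff 0‖ ≤ ‖p.divX.eval z‖ := hR ‖z‖ ((le_max_left R 1).trans hz) z rfl
  have heval : p.eval z = p.divX.eval z * z + p.coeff 0 := by
    conv_lhs => rw [← p.divX_mul_X_add]
    simp
  calc 2 * ‖z‖ ≤ (2 + ‖p.coeff 0‖) * ‖z‖ - ‖p.coeff 0‖ := by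
        nlinarith [norm_nonneg (p.coeff 0)]
    _ ≤ ‖p.divX.eval z * z‖ - ‖p.coeff 0‖ := by rw [norm_mul]; gcongr
    _ ≤ ‖p.eval z‖ := heval ▸ norm_sub_le_norm_add _ _

theorem map_mem_filledJulia_iff {f : ℂ → ℂ} {z : ℂ} : f z ∈ filledJulia f ↔ z ∈ filledJulia f := by
  have hrange : (range fun n => f^[n] z) = insert z (range fun n => f^[n] (f z)) := by
    ext w
    rw [mem_range, ← Nat.or_exists_add_one]
    simp [eq_comm]
  simp only [filledJulia, mem_ofPred_eq, hrange, isBounded_insert]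

theorem iterate_mem_filledJulia_iff {f : ℂ → ℂ} {z : ℂ} (n : ℕ) :
    f^[n] z ∈ filledJulia f ↔ z ∈ filledJulia f := by
  induction n generalizing z with
  | zero => rfl
  | succ n ih => rw [iterate_succ_apply, ih, map_mem_filledJulia_iff]

theorem preimage_frontier_filledJulia {f : ℂ → ℂ} (hf : IsOpenMap f) (hf' : Continuous f) :
    f ⁻¹' frontier (filledJulia f) = frontier (filledJulia f) := by
  rw [hf.preimage_frontier_eq_frontier_preimage hf']
  exact congrArg frontier (ext fun _ => map_mem_filledJulia_iff)

namespace IsEscapeRadius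

variable {f : ℂ → ℂ} {R : ℝ} (h : IsEscapeRadius f R)
include h

theorem mono {R' : ℝ} (hR : R ≤ R') : IsEscapeRadius f R' :=
  ⟨h.one_le.trans hR, fun z hz => h.two_mul_norm_le z (hR.trans hz)⟩

theorem two_pow_mul_norm_le {z : ℂ} (hz : R ≤ ‖z‖) (n : ℕ) : 2 ^ n * ‖z‖ ≤ ‖f^[n] z‖ := by
  induction n with
  | zero => simp
  | succ n ih =>
    have hge : R ≤ ‖f^[n] z‖ :=
      hz.trans ((le_mul_of_one_le_left (norm_nonneg z) (one_le_pow₀ one_le_two)).trans ih)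
    rw [iterate_succ_apply', pow_succ]
    linarith [h.two_mul_norm_le _ hge]

theorem le_norm_iterate {z : ℂ} (hz : R ≤ ‖z‖) (n : ℕ) : R ≤ ‖f^[n] z‖ :=
  hz.trans ((le_mul_of_one_le_left (norm_nonneg z) (one_le_pow₀ one_le_two)).trans
    (h.two_pow_mul_norm_le hz n))

theorem tendsto_iterate_of_le_norm {z : ℂ} (hz : R ≤ ‖z‖) :
    Tendsto (fun n => f^[n] z) atTop (cobounded ℂ) :=
  tendsto_norm_atTop_iff_cobounded.1 <| tendsto_atTop_mono (h.two_pow_mul_norm_le hz) <|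
    (tendsto_pow_atTop_atTop_of_one_lt one_lt_two).atTop_mul_const <|
      one_pos.trans_le (h.one_le.trans hz)

theorem mem_filledJulia_iff {z : ℂ} : z ∈ filledJulia f ↔ ∀ n, ‖f^[n] z‖ ≤ R := by
  refine ⟨fun hz n => ?_, fun hz => isBounded_iff_forall_norm_le.2 ⟨R, forall_mem_range.2 hz⟩⟩
  by_contra! hlt
  obtain ⟨C, hC⟩ := IsBounded.exists_norm_le (s := range fun n => f^[n] z) hz
  obtain ⟨k, hk⟩ := ((tendsto_norm_cobounded_atTop.comp
    (h.tendsto_iterate_of_le_norm hlt.le)).eventually_gt_atTop C).exists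
  refine hk.not_ge (hC _ ⟨k + n, ?_⟩)
  exact iterate_add_apply f k n z

theorem notMem_filledJulia {z : ℂ} (hz : R ≤ ‖z‖) : z ∉ filledJulia f := fun hzK => by
  linarith [h.one_le, h.two_mul_norm_le z hz, show ‖f z‖ ≤ R from h.mem_filledJulia_iff.1 hzK 1]

theorem exists_lt_norm_iterate {z : ℂ} (hz : z ∉ filledJulia f) : ∃ n, R < ‖f^[n] z‖ := by
  simpa [h.mem_filledJulia_iff] using hz

theorem tendsto_iterate {z : ℂ} (hz : z ∉ filledJulia f) :
    Tendsto (fun n => f^[n] z) atTop (cobounded ℂ) := by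
  obtain ⟨n, hn⟩ := h.exists_lt_norm_iterate hz
  refine (tendsto_add_atTop_iff_nat n).1 ?_
  simpa only [iterate_add_apply] using h.tendsto_iterate_of_le_norm hn.le

theorem isCompact_filledJulia (hf : Continuous f) : IsCompact (filledJulia f) := by
  have hinter : filledJulia f = ⋂ n, {z | ‖f^[n] z‖ ≤ R} := by
    ext z
    simp [h.mem_filledJulia_iff]
  refine Metric.isCompact_of_isClosed_isBounded (hinter ▸ isClosed_iInter fun n =>
    isClosed_le (hf.iterate n).norm continuous_const) (isBounded_iff_forall_norm_le.2 ⟨R, ?_⟩)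
  exact fun z hz => h.mem_filledJulia_iff.1 hz 0

end IsEscapeRadius

theorem isPreconnected_setOf_lt_norm {R : ℝ} (hR : 0 < R) : IsPreconnected {z : ℂ | R < ‖z‖} := by
  have himage : {z : ℂ | R < ‖z‖} = Complex.exp '' {s : ℂ | Real.log R < s.re} := by
    ext z
    refine ⟨fun hz : R < ‖z‖ => ⟨Complex.log z, ?_, ?_⟩, ?_⟩
    · simpa [Complex.log_re] using Real.log_lt_log hR hz
    · exact Complex.exp_log (norm_pos_iff.1 (hR.trans hz))
    · rintro ⟨s, hs, rfl⟩
      simpa [Complex.norm_exp, ← Real.log_lt_iff_lt_exp hR] using hs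
  rw [himage]
  exact (convex_halfSpace_re_gt (Real.log R)).isPreconnected.image _
    Complex.continuous_exp.continuousOn

theorem disjoint_frontier_connectedComponentIn {X : Type*} [TopologicalSpace X]
    [LocallyConnectedSpace X] {Ω : Set X} (hΩ : IsOpen Ω) (z : X) :
    Disjoint (frontier (connectedComponentIn Ω z)) Ω := by
  refine disjoint_left.2 fun w hw hwΩ => ?_
  rw [hΩ.connectedComponentIn.frontier_eq] at hw
  obtain ⟨y, hyw, hyz⟩ := mem_closure_iff.1 hw.1 _ hΩ.connectedComponentIn
    (mem_connectedComponentIn hwΩ)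
  exact hw.2 (connectedComponentIn_eq hyz ▸ connectedComponentIn_eq hyw ▸
    mem_connectedComponentIn hwΩ)

/- On a bounded component of the complement, the maximum principle would bound every iterate of
`f` by its values on the boundary, which lies in `filledJulia f`. -/
theorem IsEscapeRadius.isPreconnected_compl_filledJulia {f : ℂ → ℂ} {R : ℝ}
    (h : IsEscapeRadius f R) (hf : Differentiable ℂ f) : IsPreconnected (filledJulia f)ᶜ := by
  have hΩ : IsOpen (filledJulia f)ᶜ := (h.isCompact_filledJulia hf.continuous).isClosed.isOpen_compl
  have hmeets : ∀ z ∉ filledJulia f,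
      (connectedComponentIn (filledJulia f)ᶜ z ∩ {w | R < ‖w‖}).Nonempty := by
    intro z hz
    by_contra hne
    have hbdd : IsBounded (connectedComponentIn (filledJulia f)ᶜ z) :=
      isBounded_iff_forall_norm_le.2 ⟨R, fun w hw => not_lt.1 fun hlt => hne ⟨w, hw, hlt⟩⟩
    refine hz (h.mem_filledJulia_iff.2 fun n => ?_)
    refine Complex.norm_le_of_forall_mem_frontier_norm_le hbdd (hf.iterate n).diffContOnCl
      (fun w hw => ?_) (subset_closure (mem_connectedComponentIn hz))
    exact h.mem_filledJulia_iff.1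
      (not_not.1 (disjoint_left.1 (disjoint_frontier_connectedComponentIn hΩ z) hw)) n
  have hfar : {w | R < ‖w‖} ⊆ (filledJulia f)ᶜ := fun w hw => h.notMem_filledJulia (le_of_lt hw)
  refine isPreconnected_of_forall ((R + 1 : ℝ) : ℂ) fun z hz =>
    ⟨_, union_subset (connectedComponentIn_subset _ z) hfar, Or.inr ?_,
      Or.inl (mem_connectedComponentIn hz), (hmeets z hz).elim fun w hw =>
        isPreconnected_connectedComponentIn.union w hw.1 hw.2
          (isPreconnected_setOf_lt_norm (one_pos.trans_le h.one_le))⟩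
  exact (lt_add_one R).trans_le (by rw [Complex.norm_real]; exact le_abs_self _)

end FilledJulia

section BottcherMap

open Complex Filter Bornology

/- Grouping the roots of `p - w` with copies of `w` turns the quotient into a product of factors
`(z - k) / (z - w)` with `k, w ∈ S`. -/
theorem exists_isNormalizedLog_eval_sub_div {p : Polynomial ℂ} (hp : 0 < p.natDegree) {K S : Set ℂ}
    (hK : IsCompact K) (hKc : IsPreconnected Kᶜ) (hS : IsPreconnected S) (hSK : S ⊆ K)
    (hback : ∀ z, p.eval z ∈ S → z ∈ S) {w : ℂ} (hw : w ∈ S) :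
    ∃ l, IsNormalizedLog K
      (fun z => (p.eval z - w) / (p.leadingCoeff * (z - w) ^ p.natDegree)) l := by
  set q := p - Polynomial.C w with hq
  have hlead : q.leadingCoeff = p.leadingCoeff := Polynomial.leadingCoeff_sub_of_degree_lt
    (Polynomial.degree_C_le.trans_lt (Polynomial.natDegree_pos_iff_degree_pos.1 hp))
  have hcard : q.roots.card = p.natDegree := by
    rw [← (IsAlgClosed.splits q).natDegree_eq_card_roots, Polynomial.natDegree_sub_C]
  have hroots : ∀ k ∈ q.roots, k ∈ S := fun k hk => hback k <| by
    have hroot := (Polynomial.mem_roots'.1 hk).2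
    rw [Polynomial.IsRoot.def, Polynomial.eval_sub, Polynomial.eval_C, sub_eq_zero] at hroot
    exact hroot ▸ hw
  have ha : p.leadingCoeff ≠ 0 :=
    Polynomial.leadingCoeff_ne_zero.2 (Polynomial.ne_zero_of_natDegree_gt hp)
  have hprod : (fun z => (p.eval z - w) / (p.leadingCoeff * (z - w) ^ p.natDegree)) =
      (q.roots.map fun k z => (z - k) / (z - w)).prod := by
    ext z
    have heval : p.eval z - w = p.leadingCoeff * (q.roots.map fun k => z - k).prod := by
      rw [← hlead, ← (IsAlgClosed.splits q).eval_eq_prod_roots, hq, Polynomial.eval_sub,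
        Polynomial.eval_C]
    rw [heval, mul_div_mul_left _ _ ha, Pi.multiset_prod_apply]
    simp [Multiset.prod_map_div, hcard]
  rw [hprod]
  exact IsNormalizedLog.multiset_prod q.roots fun k hk =>
    exists_isNormalizedLog_sub_div_sub hK hKc hS hSK (hroots k hk) hw

/-- The solution `S` of the cohomological equation `d * S z = l z + S (f z)` obtained by iterating
it along the orbit of `z`; meaningful off `filledJulia f`, where the series converges as soon as
`l` vanishes at infinity. -/
noncomputable def logSeries (f l : ℂ → ℂ) (d : ℕ) (z : ℂ) : ℂ :=
  ∑' n, l (f^[n] z) / d ^ (n + 1)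

section LogSeries

variable {f l : ℂ → ℂ} {d : ℕ} {R : ℝ} (hd : 2 ≤ d) (h : IsEscapeRadius f R)
  (hl : Tendsto l (cobounded ℂ) (𝓝 0))

theorem norm_div_natCast_pow_succ_le (hd : 2 ≤ d) {a : ℂ} {ε : ℝ} (ha : ‖a‖ ≤ ε) (n : ℕ) :
    ‖a / (d : ℂ) ^ (n + 1)‖ ≤ ε / 2 / 2 ^ n := by
  have hd' : (2 : ℝ) ≤ d := mod_cast hd
  rw [norm_div, norm_pow, norm_natCast, div_div, ← pow_succ']
  gcongr
  exact (norm_nonneg a).trans ha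

include h hl

theorem IsEscapeRadius.exists_isEscapeRadius_forall_norm_le {ε : ℝ} (hε : 0 < ε) :
    ∃ M, IsEscapeRadius f M ∧ ∀ z, M ≤ ‖z‖ → ‖l z‖ ≤ ε := by
  have hsmall : ∀ᶠ z in cobounded ℂ, ‖l z‖ ≤ ε := by
    simpa using hl.eventually (Metric.closedBall_mem_nhds 0 hε)
  rw [← comap_norm_atTop, eventually_comap] at hsmall
  obtain ⟨M, hM⟩ := eventually_atTop.1 hsmall
  exact ⟨max M R, h.mono (le_max_right M R), fun z hz => hM _ ((le_max_left M R).trans hz) z rfl⟩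

include hd

theorem summable_logSeries {z : ℂ} (hz : z ∉ filledJulia f) :
    Summable fun n => l (f^[n] z) / (d : ℂ) ^ (n + 1) := by
  refine .of_norm_bounded_eventually_nat (hasSum_geometric_two' 1).summable ?_
  filter_upwards [(hl.comp (h.tendsto_iterate hz)).eventually
    (Metric.closedBall_mem_nhds 0 one_pos)] with n hn
  exact norm_div_natCast_pow_succ_le hd (by simpa using hn) n

theorem mul_logSeries {z : ℂ} (hz : z ∉ filledJulia f) :
    d * logSeries f l d z = l z + logSeries f l d (f z) := by
  have hd0 : (d : ℂ) ≠ 0 := by norm_cast; omega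
  have hshift : ∀ n, l (f^[n + 1] z) / (d : ℂ) ^ (n + 1 + 1) = l (f^[n] (f z)) / d ^ (n + 1) / d :=
    fun n => by rw [iterate_succ_apply, div_div, ← pow_succ]
  rw [logSeries, (summable_logSeries hd h hl hz).tsum_eq_zero_add]
  simp only [hshift, tsum_div_const, iterate_zero, id, zero_add, pow_one, ← add_div]
  exact mul_div_cancel₀ _ hd0

theorem tendsto_logSeries : Tendsto (logSeries f l d) (cobounded ℂ) (𝓝 0) := by
  refine Metric.nhds_basis_closedBall.tendsto_right_iff.2 fun ε hε => ?_
  obtain ⟨M, hM, hlM⟩ := h.exists_isEscapeRadius_forall_norm_le hl hε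
  filter_upwards [tendsto_norm_cobounded_atTop.eventually_ge_atTop M] with z hz
  exact mem_closedBall_zero_iff.2 <| tsum_of_norm_bounded (hasSum_geometric_two' ε) fun n =>
    norm_div_natCast_pow_succ_le hd (hlM _ (hM.le_norm_iterate hz n)) n

theorem differentiableAt_logSeries (hf : Differentiable ℂ f)
    (hl' : ∀ z ∉ filledJulia f, DifferentiableAt ℂ l z) {z : ℂ} (hz : z ∉ filledJulia f) :
    DifferentiableAt ℂ (logSeries f l d) z := by
  obtain ⟨M, hM, hlM⟩ := h.exists_isEscapeRadius_forall_norm_le hl one_pos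
  have hfar : DifferentiableOn ℂ (logSeries f l d) {z | M < ‖z‖} := by
    refine differentiableOn_tsum_of_summable_norm (hasSum_geometric_two' 1).summable
      (fun n y hy => ?_) (isOpen_lt continuous_const continuous_norm) fun n y hy =>
        norm_div_natCast_pow_succ_le hd (hlM _ (hM.le_norm_iterate (le_of_lt hy) n)) n
    have hn := hl' _ ((iterate_mem_filledJulia_iff n).not.2 (hM.notMem_filledJulia (le_of_lt hy)))
    exact ((hn.comp y (hf.iterate n y)).div_const _).differentiableWithinAt
  obtain ⟨n, hn⟩ := hM.exists_lt_norm_iterate hz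
  induction n generalizing z with
  | zero => exact hfar.differentiableAt ((isOpen_lt continuous_const continuous_norm).mem_nhds hn)
  | succ n ih =>
    have hfz := (ih (map_mem_filledJulia_iff.not.2 hz) hn).comp z (hf z)
    refine (((hl' z hz).add hfz).div_const (d : ℂ)).congr_of_eventuallyEq ?_
    filter_upwards [(h.isCompact_filledJulia hf.continuous).isClosed.isOpen_compl.mem_nhds hz]
      with y hy
    exact eq_div_of_mul_eq (by norm_cast; omega) ((mul_comm _ _).trans (mul_logSeries hd h hl hy))

end LogSeries

/-- A Böttcher coordinate of `f` on the whole basin of infinity `(filledJulia f)ᶜ`: a holomorphic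
semiconjugacy to `w ↦ w ^ d` that is asymptotically linear at infinity. -/
structure IsBottcherMap (f : ℂ → ℂ) (d : ℕ) (ψ : ℂ → ℂ) : Prop where
  differentiableAt : ∀ z ∉ filledJulia f, DifferentiableAt ℂ ψ z
  map_eq_pow : ∀ z ∉ filledJulia f, ψ (f z) = ψ z ^ d
  exists_tendsto : ∃ b ≠ 0, Tendsto (fun z => ψ z / z) (cobounded ℂ) (𝓝 b)

/- The map is `ψ z = b * (z - w) * exp (S z)` with `S = logSeries f l d` and `b ^ (d - 1) = a`. -/
theorem exists_isBottcherMap {f l : ℂ → ℂ} {R : ℝ} {w a : ℂ} {d : ℕ} (hd : 2 ≤ d) (ha : a ≠ 0)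
    (hf : Differentiable ℂ f) (h : IsEscapeRadius f R)
    (hl : IsNormalizedLog (filledJulia f) (fun z => (f z - w) / (a * (z - w) ^ d)) l) :
    ∃ ψ, IsBottcherMap f d ψ := by
  obtain ⟨b, hb⟩ := IsAlgClosed.exists_pow_nat_eq a (n := d - 1) (by omega)
  have hbd : b ^ d = b * a := by rw [← hb, ← pow_succ']; congr 1; omega
  have hb0 : b ≠ 0 := fun hb0 => ha (by rw [← hb, hb0, zero_pow (by omega)])
  refine ⟨fun z => b * (z - w) * exp (logSeries f l d z), fun z hz => ?_, fun z hz => ?_,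
    b, hb0, ?_⟩
  · have hS := differentiableAt_logSeries hd h hl.tendsto hf hl.differentiableAt hz
    fun_prop
  · have hquot := hl.exp_eq z hz
    have hfz : f z - w = exp (l z) * (a * (z - w) ^ d) :=
      (div_eq_iff (div_ne_zero_iff.1 (hquot ▸ exp_ne_zero _)).2).1 hquot.symm
    rw [mul_pow, mul_pow, ← exp_nat_mul, mul_logSeries hd h hl.tendsto hz, exp_add, hbd, hfz]
    ring
  · have hlin : Tendsto (fun z : ℂ => 1 - w * z⁻¹) (cobounded ℂ) (𝓝 1) := by
      simpa using (tendsto_inv₀_cobounded.const_mul w).const_sub (1 : ℂ)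
    have hexp := (continuous_exp.tendsto 0).comp (tendsto_logSeries hd h hl.tendsto)
    rw [exp_zero] at hexp
    have hprod := (hlin.const_mul b).mul hexp
    rw [mul_one, mul_one] at hprod
    refine hprod.congr' ?_
    filter_upwards [eventually_ne_cobounded 0] with z hz
    rw [comp_apply]
    field_simp

namespace IsBottcherMap

variable {f ψ : ℂ → ℂ} {d : ℕ} {R : ℝ} (hψ : IsBottcherMap f d ψ)
include hψ

theorem map_iterate_eq_pow {z : ℂ} (hz : z ∉ filledJulia f) (n : ℕ) :
    ψ (f^[n] z) = ψ z ^ d ^ n := by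
  induction n with
  | zero => simp
  | succ n ih =>
    rw [iterate_succ_apply', hψ.map_eq_pow _ ((iterate_mem_filledJulia_iff n).not.2 hz), ih,
      ← pow_mul, pow_succ]

theorem tendsto_cobounded : Tendsto ψ (cobounded ℂ) (cobounded ℂ) := by
  obtain ⟨b, hb, hlim⟩ := hψ.exists_tendsto
  refine tendsto_norm_atTop_iff_cobounded.1 <|
    (hlim.norm.pos_mul_atTop (norm_pos_iff.2 hb) tendsto_norm_cobounded_atTop).congr' ?_
  filter_upwards [eventually_ne_cobounded 0] with z hz
  rw [← norm_mul, div_mul_cancel₀ _ hz]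

theorem one_lt_norm (h : IsEscapeRadius f R) {z : ℂ} (hz : z ∉ filledJulia f) : 1 < ‖ψ z‖ := by
  obtain ⟨n, hn⟩ := ((tendsto_norm_cobounded_atTop.comp
    (hψ.tendsto_cobounded.comp (h.tendsto_iterate hz))).eventually_gt_atTop 1).exists
  simp only [comp_apply, hψ.map_iterate_eq_pow hz, norm_pow] at hn
  exact not_le.1 fun hle => hn.not_ge (pow_le_one₀ (norm_nonneg _) hle)

end IsBottcherMap

end BottcherMap

section Conformality

open Complex Filter Bornology

theorem exists_injOn_setOf_lt_norm {ψ : ℂ → ℂ} {b : ℂ} (hb : b ≠ 0)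
    (hψ : ∀ᶠ z in cobounded ℂ, DifferentiableAt ℂ ψ z)
    (hlim : Tendsto (fun z => ψ z / z) (cobounded ℂ) (𝓝 b)) : ∃ M, InjOn ψ {z | M < ‖z‖} := by
  let G : ℂ → ℂ := fun ζ => ζ * (ψ ζ⁻¹ / ζ⁻¹)⁻¹
  have hG : ∀ {z}, z ≠ 0 → G z⁻¹ = (ψ z)⁻¹ := fun {z} hz => by simp [G, hz]
  have hderiv : HasDerivAt G b⁻¹ 0 := by
    rw [hasDerivAt_iff_tendsto_slope]
    refine ((hlim.comp tendsto_inv₀_nhdsNE_zero).inv₀ hb).congr' ?_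
    filter_upwards [self_mem_nhdsWithin] with ζ hζ
    simp [G, slope_def_field, mul_div_cancel_left₀ _ (show ζ ≠ 0 from hζ)]
  have hanalytic : AnalyticAt ℂ G 0 := by
    refine analyticAt_of_differentiable_on_punctured_nhds_of_continuousAt ?_ hderiv.continuousAt
    filter_upwards [tendsto_inv₀_nhdsNE_zero.eventually (hψ.and (hlim.eventually_ne hb)),
      self_mem_nhdsWithin] with ζ hψζ hζ
    have hinv : DifferentiableAt ℂ (fun ζ : ℂ => ζ⁻¹) ζ := differentiableAt_inv hζ
    exact differentiableAt_id.mul (((hψζ.1.comp ζ hinv).div hinv (inv_ne_zero hζ)).inv hψζ.2)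
  have hstrict := hderiv.deriv ▸ hanalytic.hasStrictDerivAt
  obtain ⟨δ, hδ, hball⟩ := Metric.eventually_nhds_iff_ball.1
    (hstrict.hasStrictFDerivAt_equiv (inv_ne_zero hb)).eventually_left_inverse
  have hmem : ∀ z : ℂ, δ⁻¹ < ‖z‖ → z ≠ 0 ∧ z⁻¹ ∈ Metric.ball 0 δ := fun z hz =>
    ⟨norm_pos_iff.1 ((inv_pos.2 hδ).trans hz), by
      simpa using inv_lt_of_inv_lt₀ hδ hz⟩
  refine ⟨δ⁻¹, fun x hx y hy hxy => inv_injective ?_⟩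
  obtain ⟨hx0, hxδ⟩ := hmem x hx
  obtain ⟨hy0, hyδ⟩ := hmem y hy
  rw [← hball _ hxδ, ← hball _ hyδ, hG hx0, hG hy0, hxy]

section LeftInverse

variable {S : Set ℂ} {Φ χ : ℂ → ℂ}

theorem eventually_deriv_ne_zero_of_injOn (hS : IsOpen S) (hΦ : DifferentiableOn ℂ Φ S)
    (hinj : InjOn Φ S) {z : ℂ} (hz : z ∈ S) : ∀ᶠ u in 𝓝[≠] z, deriv Φ u ≠ 0 := by
  refine (hΦ.analyticAt (hS.mem_nhds hz)).deriv.eventually_eq_zero_or_eventually_ne_zero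
    |>.resolve_left fun hzero => ?_
  obtain ⟨δ, hδ, hball⟩ := Metric.eventually_nhds_iff_ball.1 (hzero.and (hS.mem_nhds hz))
  obtain ⟨c, hc⟩ := Metric.isOpen_ball.exists_is_const_of_deriv_eq_zero
    (convex_ball z δ).isPreconnected (hΦ.mono fun u hu => (hball u hu).2) fun u hu => (hball u hu).1
  obtain ⟨u, huz, hu⟩ := Filter.nonempty_of_mem (inter_mem (self_mem_nhdsWithin (s := {z}ᶜ))
    (nhdsWithin_le_nhds (Metric.ball_mem_nhds z hδ)))
  exact huz (hinj (hball u hu).2 hz ((hc u hu).trans (hc z (Metric.mem_ball_self hδ)).symm))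

theorem tendsto_nhds_of_leftInvOn (hS : IsOpen S) (hΦ : DifferentiableOn ℂ Φ S)
    (hχ : LeftInvOn χ Φ S) {z : ℂ} (hz : z ∈ S) : Tendsto χ (𝓝 (Φ z)) (𝓝 z) := by
  intro N hN
  obtain ⟨U, hUN, hU, hzU⟩ := mem_nhds_iff.1 (inter_mem hN (hS.mem_nhds hz))
  have hUS : U ⊆ S := hUN.trans inter_subset_right
  have himage := isOpen_image_of_injOn hU (hΦ.mono hUS) (hχ.injOn.mono hUS)
  refine mem_map.2 (mem_of_superset (himage.mem_nhds (mem_image_of_mem Φ hzU)) ?_)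
  rintro _ ⟨u, hu, rfl⟩
  rw [mem_preimage, hχ (hUS hu)]
  exact (hUN hu).1

/- The critical points of `Φ` are isolated, so their images are removable singularities of the
continuous function `χ`. -/
theorem differentiableAt_of_leftInvOn (hS : IsOpen S) (hΦ : DifferentiableOn ℂ Φ S)
    (hχ : LeftInvOn χ Φ S) {z : ℂ} (hz : z ∈ S) : DifferentiableAt ℂ χ (Φ z) := by
  have himage : ∀ {u}, u ∈ S → ∀ᶠ y in 𝓝 (Φ u), y ∈ Φ '' S := fun {u} hu =>
    (isOpen_image_of_injOn hS hΦ hχ.injOn).mem_nhds (mem_image_of_mem Φ hu)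
  have hcont : ∀ {u}, u ∈ S → ContinuousAt χ (Φ u) := fun {u} hu =>
    continuousAt_of_tendsto_nhds (tendsto_nhds_of_leftInvOn hS hΦ hχ hu)
  have hχne : Tendsto χ (𝓝[≠] Φ z) (𝓝[≠] z) := by
    refine tendsto_nhdsWithin_iff.2
      ⟨(tendsto_nhds_of_leftInvOn hS hΦ hχ hz).mono_left nhdsWithin_le_nhds, ?_⟩
    filter_upwards [self_mem_nhdsWithin, nhdsWithin_le_nhds (himage hz)]
    rintro _ hne ⟨u, hu, rfl⟩
    rw [hχ hu]
    exact fun huz => hne (congrArg Φ huz)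
  refine (analyticAt_of_differentiable_on_punctured_nhds_of_continuousAt ?_
    (hcont hz)).differentiableAt
  filter_upwards [hχne.eventually (eventually_deriv_ne_zero_of_injOn hS hΦ hχ.injOn hz),
    nhdsWithin_le_nhds (himage hz)]
  rintro _ hne ⟨u, hu, rfl⟩
  have hΦu : DifferentiableAt ℂ Φ (χ (Φ u)) := (hχ hu).symm ▸ hΦ.differentiableAt (hS.mem_nhds hu)
  refine (HasDerivAt.of_local_left_inverse (hcont hu) hΦu.hasDerivAt hne ?_).differentiableAt
  filter_upwards [himage hu]
  rintro _ ⟨v, hv, rfl⟩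
  rw [hχ hv]

end LeftInverse

section Roots

open Polynomial

theorem card_nthRootsFinset {n : ℕ} (hn : n ≠ 0) {a : ℂ} (ha : a ≠ 0) :
    (nthRootsFinset n a).card = n := by
  have hprim := isPrimitiveRoot_exp n hn
  rw [nthRootsFinset_def, Multiset.toFinset_card_of_nodup (hprim.nthRoots_nodup ha),
    hprim.card_nthRoots, if_pos (IsAlgClosed.exists_pow_nat_eq a (Nat.pos_of_ne_zero hn))]

theorem exists_finset_iterate_eval_eq {A : Type*} [CommRing A] [IsDomain A] {p : A[X]}
    (hp : p.natDegree ≠ 0) (n : ℕ) (c : A) :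
    ∃ F : Finset A, (∀ z, z ∈ F ↔ p.eval^[n] z = c) ∧ F.card ≤ p.natDegree ^ n := by
  classical
  set q := p.comp^[n] X - C c with hq
  have hdeg : q.natDegree = p.natDegree ^ n := by
    rw [hq, natDegree_sub_C, natDegree_iterate_comp, natDegree_X, mul_one]
  have hq0 : q ≠ 0 := ne_zero_of_natDegree_gt (hdeg ▸ Nat.pow_pos (Nat.pos_of_ne_zero hp))
  refine ⟨q.roots.toFinset, fun z => ?_, (Multiset.toFinset_card_le _).trans (hdeg ▸ q.card_roots')⟩
  rw [Multiset.mem_toFinset, mem_roots hq0, IsRoot.def, hq, eval_sub, iterate_comp_eval, eval_X,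
    eval_C, sub_eq_zero]

end Roots

namespace IsBottcherMap

section

variable {f ψ : ℂ → ℂ} {d : ℕ} {R : ℝ} (hψ : IsBottcherMap f d ψ) (h : IsEscapeRadius f R)
include hψ

theorem differentiableOn : DifferentiableOn ℂ ψ (filledJulia f)ᶜ := fun z hz =>
  (hψ.differentiableAt z hz).differentiableWithinAt

include h

/- Every orbit leaving the disc of radius `R` first lands in a fixed compact annulus, and `‖ψ‖` is
nondecreasing along orbits. -/
theorem exists_norm_le (hd : d ≠ 0) (hf : Continuous f) :
    ∃ B, ∀ z ∉ filledJulia f, ‖z‖ ≤ R → ‖ψ z‖ ≤ B := by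
  obtain ⟨A, hA⟩ := (isCompact_closedBall (0 : ℂ) R).exists_bound_of_continuousOn hf.continuousOn
  have hannulus : IsCompact ({z : ℂ | R ≤ ‖z‖} ∩ Metric.closedBall 0 A) :=
    (isCompact_closedBall 0 A).inter_left (isClosed_le continuous_const continuous_norm)
  obtain ⟨B, hB⟩ := hannulus.exists_bound_of_continuousOn
    (hψ.differentiableOn.continuousOn.mono fun z hz => h.notMem_filledJulia hz.1)
  refine ⟨B, fun z hz => ?_⟩
  obtain ⟨n, hn⟩ := h.exists_lt_norm_iterate hz
  induction n generalizing z with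
  | zero => exact fun hle => absurd hle hn.not_ge
  | succ n ih =>
    intro hle
    have hmono : ‖ψ z‖ ≤ ‖ψ (f z)‖ := by
      rw [hψ.map_eq_pow z hz, norm_pow]
      exact le_self_pow₀ (hψ.one_lt_norm h hz).le hd
    refine hmono.trans ((le_total ‖f z‖ R).elim (ih _ (map_mem_filledJulia_iff.not.2 hz) hn) ?_)
    exact fun hge => hB _ ⟨hge, mem_closedBall_zero_iff.2 (hA z (mem_closedBall_zero_iff.2 hle))⟩

theorem isCompact_inter_setOf_norm_mem_Icc (hd : 2 ≤ d) (hf : Continuous f) {ρ : ℝ} (hρ : 1 < ρ)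
    (ρ' : ℝ) : IsCompact ((filledJulia f)ᶜ ∩ {z | ‖ψ z‖ ∈ Icc ρ ρ'}) := by
  obtain ⟨B, hB⟩ := hψ.exists_norm_le h (by omega) hf
  obtain ⟨n, hn⟩ := (((tendsto_pow_atTop_atTop_of_one_lt hρ).comp
    (tendsto_pow_atTop_atTop_of_one_lt (show 1 < d by omega))).eventually_gt_atTop B).exists
  have hexit : ∀ z ∉ filledJulia f, ρ ≤ ‖ψ z‖ → R ≤ ‖f^[n] z‖ := fun z hz hρz => by
    by_contra! hlt
    have hle := hB _ ((iterate_mem_filledJulia_iff n).not.2 hz) hlt.le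
    rw [hψ.map_iterate_eq_pow hz, norm_pow] at hle
    exact (hn.trans_le (pow_le_pow_left₀ (by positivity) hρz _)).not_ge hle
  have hnotMem : {z | R ≤ ‖f^[n] z‖} ⊆ (filledJulia f)ᶜ := fun z hz =>
    (iterate_mem_filledJulia_iff n).not.1 (h.notMem_filledJulia hz)
  have heq : (filledJulia f)ᶜ ∩ {z | ‖ψ z‖ ∈ Icc ρ ρ'} =
      {z | R ≤ ‖f^[n] z‖} ∩ (fun z => ‖ψ z‖) ⁻¹' Icc ρ ρ' :=
    Subset.antisymm (fun z hz => ⟨hexit z hz.1 hz.2.1, hz.2⟩) (inter_subset_inter_left _ hnotMem)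
  refine Metric.isCompact_of_isClosed_isBounded ?_ ?_
  · rw [heq]
    exact (hψ.differentiableOn.continuousOn.norm.mono hnotMem).preimage_isClosed_of_isClosed
      (isClosed_le continuous_const (hf.iterate n).norm) isClosed_Icc
  · refine isBounded_def.2 ?_
    filter_upwards [(tendsto_norm_cobounded_atTop.comp
      hψ.tendsto_cobounded).eventually_gt_atTop ρ'] with z hz hmem
    exact hz.not_ge hmem.2.2

theorem isOpen_image_compl_filledJulia (hf : Differentiable ℂ f) :
    IsOpen (ψ '' (filledJulia f)ᶜ) := by
  have hK := h.isCompact_filledJulia hf.continuous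
  have hopen := hK.isClosed.isOpen_compl
  have hcobdd : ∀ᶠ z in cobounded ℂ, z ∉ filledJulia f := hK.isBounded
  obtain ⟨c, hc⟩ | hψo := (hψ.differentiableOn.analyticOnNhd hopen).is_constant_or_isOpen
    (h.isPreconnected_compl_filledJulia hf)
  · obtain ⟨z, hzK, hz⟩ :=
      (hcobdd.and (hψ.tendsto_cobounded.eventually (eventually_ne_cobounded c))).exists
    exact absurd (hc z hzK) hz
  · exact hψo _ subset_rfl hopen

theorem image_compl_filledJulia (hd : 2 ≤ d) (hf : Differentiable ℂ f) :
    ψ '' (filledJulia f)ᶜ = {w | 1 < ‖w‖} := by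
  have hsubset : ψ '' (filledJulia f)ᶜ ⊆ {w | 1 < ‖w‖} :=
    image_subset_iff.2 fun z hz => hψ.one_lt_norm h hz
  refine hsubset.antisymm <| (isPreconnected_setOf_lt_norm one_pos).subset_of_closure_inter_subset
    (hψ.isOpen_image_compl_filledJulia h hf) ?_ ?_
  · rw [inter_eq_right.2 hsubset, image_nonempty]
    exact ⟨(R : ℂ), h.notMem_filledJulia ((le_abs_self R).trans_eq (norm_real R).symm)⟩
  · rintro w ⟨hwcl, hw⟩
    obtain ⟨ρ, hρ, hρw⟩ := exists_between (show 1 < ‖w‖ from hw)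
    have hcompact := (hψ.isCompact_inter_setOf_norm_mem_Icc h hd hf.continuous hρ
      (‖w‖ + 1)).image_of_continuousOn (hψ.differentiableOn.continuousOn.mono inter_subset_left)
    have hshell : IsOpen {v : ℂ | ‖v‖ ∈ Ioo ρ (‖w‖ + 1)} := isOpen_Ioo.preimage continuous_norm
    refine image_mono inter_subset_left (hcompact.isClosed.closure_subset_iff.2 ?_
      (hshell.inter_closure ⟨⟨hρw, lt_add_one _⟩, hwcl⟩))
    rintro _ ⟨hv, z, hz, rfl⟩
    exact ⟨z, ⟨hz, Ioo_subset_Icc_self hv⟩, rfl⟩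

theorem exists_injOn_inter_setOf_lt_norm (hd : d ≠ 0) (hf : Continuous f) :
    ∃ B, InjOn ψ ((filledJulia f)ᶜ ∩ {z | B < ‖ψ z‖}) := by
  obtain ⟨b, hb, hlim⟩ := hψ.exists_tendsto
  have hK : ∀ᶠ z in cobounded ℂ, z ∉ filledJulia f := (h.isCompact_filledJulia hf).isBounded
  obtain ⟨M, hM⟩ := exists_injOn_setOf_lt_norm hb (hK.mono hψ.differentiableAt) hlim
  obtain ⟨B, hB⟩ := hψ.exists_norm_le (h.mono (le_max_right M R)) hd hf
  refine ⟨B, hM.mono fun z hz => ?_⟩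
  rw [mem_ofPred_eq]
  by_contra! hle
  exact (hB z hz.1 (hle.trans (le_max_left M R))).not_gt hz.2

end

section Polynomial

open Polynomial

variable {p : Polynomial ℂ} {ψ : ℂ → ℂ} (hψ : IsBottcherMap p.eval p.natDegree ψ)
include hψ

/- The map `ψ` sends the fibre, which has at most `d ^ n` points, onto the set of the `d ^ n`
distinct `d ^ n`-th roots of `ψ c`. -/
theorem injOn_setOf_iterate_eq (hp : 2 ≤ p.natDegree) {c : ℂ} (hc : c ∉ filledJulia p.eval)
    (hinj : ∀ u ∉ filledJulia p.eval, ψ u = ψ c → u = c) (n : ℕ) :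
    InjOn ψ {z | p.eval^[n] z = c} := by
  obtain ⟨R, h⟩ := exists_isEscapeRadius_eval hp
  have hN : 0 < p.natDegree ^ n := by positivity
  have hc1 : 1 < ‖ψ c‖ := hψ.one_lt_norm h hc
  obtain ⟨F, hF, hFcard⟩ := exists_finset_iterate_eval_eq (by omega : p.natDegree ≠ 0) n c
  set V := nthRootsFinset (p.natDegree ^ n) (ψ c) with hV
  have hmaps : MapsTo ψ F V := by
    intro z hz
    rw [Finset.mem_coe, hF] at hz
    have hzK : z ∉ filledJulia p.eval := (iterate_mem_filledJulia_iff n).not.1 (hz ▸ hc)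
    rw [Finset.mem_coe, hV, mem_nthRootsFinset hN, ← hψ.map_iterate_eq_pow hzK, hz]
  have hsurj : SurjOn ψ F V := by
    intro v hv
    rw [Finset.mem_coe, hV, mem_nthRootsFinset hN] at hv
    have hv1 : 1 < ‖v‖ := by
      by_contra! hle
      exact hc1.not_ge (hv ▸ (norm_pow v _).trans_le (pow_le_one₀ (norm_nonneg v) hle))
    obtain ⟨u, hu, rfl⟩ := (hψ.image_compl_filledJulia h hp p.differentiable).superset hv1
    refine ⟨u, (hF u).2 (hinj _ ((iterate_mem_filledJulia_iff n).not.2 hu) ?_), rfl⟩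
    rw [hψ.map_iterate_eq_pow hu, hv]
  have hcard : V.card = p.natDegree ^ n :=
    card_nthRootsFinset hN.ne' (norm_pos_iff.1 (one_pos.trans hc1))
  exact (Finset.injOn_of_surjOn_of_card_le ψ hmaps hsurj (hFcard.trans_eq hcard.symm)).mono
    fun z hz => (hF z).2 hz

theorem injOn (hp : 2 ≤ p.natDegree) : InjOn ψ (filledJulia p.eval)ᶜ := by
  obtain ⟨R, h⟩ := exists_isEscapeRadius_eval hp
  obtain ⟨B, hB⟩ := hψ.exists_injOn_inter_setOf_lt_norm h (by omega) p.continuous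
  intro z hz z' hz' hzz'
  obtain ⟨n, hn⟩ := ((tendsto_norm_cobounded_atTop.comp
    (hψ.tendsto_cobounded.comp (h.tendsto_iterate hz))).eventually_gt_atTop B).exists
  have hzn : p.eval^[n] z ∉ filledJulia p.eval := (iterate_mem_filledJulia_iff n).not.2 hz
  have hinj : ∀ u ∉ filledJulia p.eval, ψ u = ψ (p.eval^[n] z) → u = p.eval^[n] z :=
    fun u hu huz => hB ⟨hu, show B < ‖ψ u‖ from huz ▸ hn⟩ ⟨hzn, hn⟩ huz
  refine hψ.injOn_setOf_iterate_eq hp hzn hinj n rfl (hinj _ ?_ ?_) hzz'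
  · exact (iterate_mem_filledJulia_iff n).not.2 hz'
  · rw [hψ.map_iterate_eq_pow hz, hψ.map_iterate_eq_pow hz', hzz']

theorem exists_inverse (hp : 2 ≤ p.natDegree) : ∃ χ, MapsTo χ {w | 1 < ‖w‖} (filledJulia p.eval)ᶜ ∧
    InvOn χ ψ (filledJulia p.eval)ᶜ {w | 1 < ‖w‖} ∧ DifferentiableOn ℂ χ {w | 1 < ‖w‖} := by
  obtain ⟨R, h⟩ := exists_isEscapeRadius_eval hp
  have himage := hψ.image_compl_filledJulia h hp p.differentiable
  have hbij : BijOn ψ (filledJulia p.eval)ᶜ {w | 1 < ‖w‖} := himage ▸ (hψ.injOn hp).bijOn_image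
  refine ⟨invFunOn ψ (filledJulia p.eval)ᶜ, hbij.surjOn.mapsTo_invFunOn, hbij.invOn_invFunOn, ?_⟩
  rw [← himage]
  rintro _ ⟨z, hz, rfl⟩
  exact (differentiableAt_of_leftInvOn (h.isCompact_filledJulia p.continuous).isClosed.isOpen_compl
    hψ.differentiableOn hbij.invOn_invFunOn.1 hz).differentiableWithinAt

end Polynomial

end IsBottcherMap

end Conformality

section BoundaryMap

open Complex Filter Bornology
open Real (two_pi_pos pi_gt_three)

/-- A parametrization of the complement of the filled Julia set by the logarithmic coordinate of
the exterior of the unit disc, in which `f` acts as multiplication by `d`. -/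
structure IsBottcherParametrization (f : ℂ → ℂ) (d : ℕ) (Φ : ℂ → ℂ) : Prop
    extends IsExteriorMap Φ (filledJulia f) where
  surjOn : SurjOn Φ rightHalfPlane (filledJulia f)ᶜ
  eq_iff : ∀ s ∈ rightHalfPlane, ∀ s' ∈ rightHalfPlane, Φ s = Φ s' ↔ exp s = exp s'
  map_eq : ∀ s ∈ rightHalfPlane, f (Φ s) = Φ (d * s)
  tendsto_cobounded : Tendsto Φ (comap re atTop) (cobounded ℂ)
  isBounded_image : ∀ r, IsBounded (Φ '' {s ∈ rightHalfPlane | s.re < r})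

section Construction

theorem one_lt_norm_exp {s : ℂ} : 1 < ‖exp s‖ ↔ s ∈ rightHalfPlane := by
  rw [norm_exp, Real.one_lt_exp_iff]
  rfl

namespace IsBottcherMap

section

variable {f ψ Φ : ℂ → ℂ} {d : ℕ} (hψ : IsBottcherMap f d ψ)
  (hΦ : ∀ s ∈ rightHalfPlane, ψ (Φ s) = exp s)
include hψ hΦ

theorem mem_filledJulia_of_mapClusterPt {R : ℝ} (h : IsEscapeRadius f R) {z : ℂ}
    (hz : MapClusterPt z (comap re (𝓝[>] 0)) Φ) : z ∈ filledJulia f := by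
  by_contra hzK
  have hnorm : MapClusterPt ‖ψ z‖ (comap re (𝓝[>] 0)) (fun s => ‖ψ (Φ s)‖) :=
    hz.continuousAt_comp (f := fun y => ‖ψ y‖) (hψ.differentiableAt z hzK).continuousAt.norm
  have hlim : Tendsto (fun s => ‖ψ (Φ s)‖) (comap re (𝓝[>] 0)) (𝓝 1) := by
    have hexp : Tendsto Real.exp (𝓝[>] 0) (𝓝 1) :=
      (Real.continuous_exp.tendsto' 0 1 Real.exp_zero).mono_left nhdsWithin_le_nhds
    refine (hexp.comp tendsto_comap).congr' ?_
    filter_upwards [preimage_mem_comap self_mem_nhdsWithin] with s hs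
    rw [hΦ s hs, norm_exp, comp_apply]
  exact (hψ.one_lt_norm h hzK).ne' (eq_of_nhds_neBot (hnorm.neBot.mono (inf_le_inf_left _ hlim)))

theorem tendsto_cobounded_of_comp_eq_exp {R : ℝ} (h : IsEscapeRadius f R) (hd : d ≠ 0)
    (hf : Continuous f) (hΦK : ∀ s ∈ rightHalfPlane, Φ s ∉ filledJulia f) :
    Tendsto Φ (comap re atTop) (cobounded ℂ) := by
  refine tendsto_norm_atTop_iff_cobounded.1 (tendsto_atTop.2 fun r => ?_)
  obtain ⟨B, hB⟩ := hψ.exists_norm_le (h.mono (le_max_right r R)) hd hf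
  filter_upwards [tendsto_comap.eventually (eventually_gt_atTop 0),
    tendsto_comap.eventually (Real.tendsto_exp_atTop.eventually_gt_atTop B)] with s hs hsB
  by_contra! hlt
  have hle := hB _ (hΦK s hs) (hlt.le.trans (le_max_left r R))
  rw [hΦ s hs, norm_exp] at hle
  exact hsB.not_ge hle

theorem isBounded_image_of_comp_eq_exp (r : ℝ) :
    IsBounded (Φ '' {s ∈ rightHalfPlane | s.re < r}) := by
  refine isBounded_def.2 ?_
  filter_upwards [(tendsto_norm_cobounded_atTop.comp
    hψ.tendsto_cobounded).eventually_gt_atTop (Real.exp r)]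
  rintro _ hgt ⟨s, ⟨hs, hsr⟩, rfl⟩
  rw [comp_apply, hΦ s hs, norm_exp, Real.exp_lt_exp] at hgt
  exact hgt.not_gt hsr

end

theorem exists_isBottcherParametrization {p : Polynomial ℂ} {ψ : ℂ → ℂ}
    (hψ : IsBottcherMap p.eval p.natDegree ψ) (hp : 2 ≤ p.natDegree) :
    ∃ Φ, IsBottcherParametrization p.eval p.natDegree Φ := by
  obtain ⟨R, h⟩ := exists_isEscapeRadius_eval hp
  obtain ⟨χ, hmaps, ⟨hleft, hright⟩, hχ⟩ := hψ.exists_inverse hp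
  have hΦ : ∀ s ∈ rightHalfPlane, ψ (χ (exp s)) = exp s := fun s hs => hright (one_lt_norm_exp.2 hs)
  have hΦK : ∀ s ∈ rightHalfPlane, χ (exp s) ∉ filledJulia p.eval := fun s hs =>
    hmaps (one_lt_norm_exp.2 hs)
  have hsurj : SurjOn (fun s => χ (exp s)) rightHalfPlane (filledJulia p.eval)ᶜ := by
    intro z hz
    have hψz := hψ.one_lt_norm h hz
    have hexp := exp_log (norm_pos_iff.1 (one_pos.trans hψz))
    exact ⟨log (ψ z), one_lt_norm_exp.1 (hexp.symm ▸ hψz), (congrArg χ hexp).trans (hleft hz)⟩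
  refine ⟨fun s => χ (exp s), ⟨hχ.comp differentiable_exp.differentiableOn
    fun s hs => one_lt_norm_exp.2 hs, hΦK, fun hbdd => ?_, fun z hz => ?_⟩, hsurj,
    fun s hs s' hs' => ⟨fun heq => ?_, congrArg χ⟩, fun s hs => ?_, ?_, ?_⟩
  · refine NormedSpace.unbounded_univ ℂ ℂ ?_
    rw [← union_compl_self (filledJulia p.eval)]
    exact (h.isCompact_filledJulia p.continuous).isBounded.union (hbdd.subset hsurj)
  · exact hψ.mem_filledJulia_of_mapClusterPt hΦ h hz
  · rw [← hΦ s hs, ← hΦ s' hs', heq]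
  · have hfK := map_mem_filledJulia_iff.not.2 (hΦK s hs)
    rw [exp_nat_mul, ← hΦ s hs, ← hψ.map_eq_pow _ (hΦK s hs), hleft hfK, hΦ s hs]
  · exact hψ.tendsto_cobounded_of_comp_eq_exp hΦ h (by omega) p.continuous hΦK
  · exact hψ.isBounded_image_of_comp_eq_exp hΦ

end IsBottcherMap

theorem exists_isBottcherParametrization_eval {p : Polynomial ℂ} (hp : 2 ≤ p.natDegree)
    (hJ : IsConnected (frontier (filledJulia p.eval))) :
    ∃ Φ, IsBottcherParametrization p.eval p.natDegree Φ := by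
  obtain ⟨R, h⟩ := exists_isEscapeRadius_eval hp
  have hK := h.isCompact_filledJulia p.continuous
  have hpreimage := preimage_frontier_filledJulia
    (p.isOpenQuotientMap_eval (by omega)).isOpenMap p.continuous
  obtain ⟨w, hw⟩ := hJ.nonempty
  obtain ⟨l, hl⟩ := exists_isNormalizedLog_eval_sub_div (by omega) hK
    (h.isPreconnected_compl_filledJulia p.differentiable) hJ.isPreconnected
    hK.isClosed.frontier_subset (fun z hz => hpreimage.subset hz) hw
  have hlead : p.leadingCoeff ≠ 0 :=
    Polynomial.leadingCoeff_ne_zero.2 (Polynomial.ne_zero_of_natDegree_gt hp)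
  obtain ⟨ψ, hψ⟩ := exists_isBottcherMap hp hlead p.differentiable h hl
  exact hψ.exists_isBottcherParametrization hp

end Construction

namespace IsBottcherParametrization

variable {f Φ : ℂ → ℂ} {d : ℕ} (h : IsBottcherParametrization f d Φ)
include h

theorem exists_mem_strip_eq {z : ℂ} (hz : z ∉ filledJulia f) :
    ∃ s ∈ rightHalfPlane, s.im ∈ Icc (-Real.pi) Real.pi ∧ Φ s = z := by
  obtain ⟨s, hs, rfl⟩ := h.surjOn hz
  have hexp : exp (log (exp s)) = exp s := exp_log (exp_ne_zero s)
  have hlog : log (exp s) ∈ rightHalfPlane :=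
    one_lt_norm_exp.1 (hexp.symm ▸ one_lt_norm_exp.2 hs)
  exact ⟨log (exp s), hlog, ⟨(neg_pi_lt_log_im _).le, log_im_le_pi _⟩,
    (h.eq_iff _ hlog _ hs).2 hexp⟩

theorem injOn_boundaryBox (t : ℝ) : InjOn Φ (boundaryBox t 1) := by
  intro s hs s' hs' heq
  have hexp : exp (s - t * I) = exp (s' - t * I) := by
    rw [exp_sub, exp_sub, (h.eq_iff s hs.1.1 s' hs'.1.1).1 heq]
  have him : ∀ u ∈ boundaryBox t 1, -Real.pi < (u - t * I).im ∧ (u - t * I).im ≤ Real.pi :=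
    fun u hu => by
      have hu2 := hu.2
      simp only [mem_preimage, mem_Ioo] at hu2
      simp only [sub_im, mul_I_im, ofReal_re]
      constructor <;> linarith [pi_gt_three]
  exact sub_left_injective (exp_inj_of_neg_pi_lt_of_le_pi (him s hs).1 (him s hs).2 (him s' hs').1
    (him s' hs').2 hexp)

theorem exists_tendsto_nhdsWithin_rightHalfPlane (hK : IsCompact (filledJulia f))
    [LocallyConnectedSpace (frontier (filledJulia f))] (t : ℝ) :
    ∃ l, Tendsto Φ (𝓝[rightHalfPlane] (t * I)) (𝓝 l) :=
  h.toIsExteriorMap.exists_tendsto_nhdsWithin_rightHalfPlane hK (h.injOn_boundaryBox t)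
    ((h.isBounded_image 1).subset (image_mono fun _ hs => ⟨hs.1.1, hs.1.2⟩))

end IsBottcherParametrization

/-- The boundary values of `Φ` at the points `2πit`, meaningful where `Φ` has a limit from within
the right half-plane. -/
noncomputable def boundaryMap (Φ : ℂ → ℂ) (t : ℝ) : ℂ :=
  extendFrom rightHalfPlane Φ (2 * Real.pi * t * I)

theorem tendsto_ofReal_add_mul_I_nhdsWithin_rightHalfPlane (t : ℝ) :
    Tendsto (fun x : ℝ => (x + t * I : ℂ)) (𝓝[>] 0) (𝓝[rightHalfPlane] (t * I)) := by
  refine tendsto_nhdsWithin_iff.2 ⟨?_, ?_⟩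
  · have hcont : Continuous fun x : ℝ => (x + t * I : ℂ) := by fun_prop
    exact (hcont.tendsto' 0 _ (by simp)).mono_left nhdsWithin_le_nhds
  · filter_upwards [self_mem_nhdsWithin] with x hx
    exact ofReal_add_mul_I_mem_rightHalfPlane.2 hx

section Limits

variable {Φ : ℂ → ℂ} (hlim : ∀ t : ℝ, ∃ l, Tendsto Φ (𝓝[rightHalfPlane] (t * I)) (𝓝 l))
include hlim

theorem tendsto_boundaryMap (t : ℝ) :
    Tendsto (fun x : ℝ => Φ (x + 2 * Real.pi * t * I)) (𝓝[>] 0) (𝓝 (boundaryMap Φ t)) := by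
  have hray := (tendsto_extendFrom (hlim (2 * Real.pi * t))).comp
    (tendsto_ofReal_add_mul_I_nhdsWithin_rightHalfPlane (2 * Real.pi * t))
  simpa [boundaryMap, comp_def] using hray

namespace IsExteriorMap

variable {K : Set ℂ} (h : IsExteriorMap Φ K)
include h

theorem continuousOn_extendFrom_of_tendsto :
    ContinuousOn (extendFrom rightHalfPlane Φ) {s | 0 ≤ s.re} := by
  refine continuousOn_extendFrom (closure_setOfPred_lt_re 0).superset fun s hs => ?_
  obtain hs0 | hs0 := (show 0 ≤ s.re from hs).eq_or_lt
  · obtain ⟨l, hl⟩ := hlim s.im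
    have hs' : s.im * I = s := Complex.ext (by simp [← hs0]) (by simp)
    exact ⟨l, hs' ▸ hl⟩
  · exact ⟨Φ s, (h.differentiableAt hs0).continuousAt.mono_left nhdsWithin_le_nhds⟩

theorem continuous_boundaryMap : Continuous (boundaryMap Φ) :=
  (h.continuousOn_extendFrom_of_tendsto hlim).comp_continuous (by fun_prop) fun t => by simp

theorem boundaryMap_mem_frontier (hK : IsClosed K) (t : ℝ) : boundaryMap Φ t ∈ frontier K :=
  h.mem_frontier_of_tendsto hK (by simpa using! tendsto_id) (tendsto_boundaryMap hlim t)

end IsExteriorMap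

namespace IsBottcherParametrization

variable {f : ℂ → ℂ} {d : ℕ} (h : IsBottcherParametrization f d Φ)
include h

theorem periodic_boundaryMap : Periodic (boundaryMap Φ) 1 := by
  intro t
  refine tendsto_nhds_unique (tendsto_boundaryMap hlim (t + 1))
    ((tendsto_boundaryMap hlim t).congr' ?_)
  filter_upwards [self_mem_nhdsWithin] with x hx
  refine (h.eq_iff _ ?_ _ ?_).2 ?_
  · simpa [rightHalfPlane] using hx
  · simpa [rightHalfPlane] using hx
  · rw [← exp_periodic (x + 2 * Real.pi * t * I)]
    push_cast
    ring_nf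

theorem map_boundaryMap (hd : d ≠ 0) (hf : Continuous f) (t : ℝ) :
    f (boundaryMap Φ t) = boundaryMap Φ (d * t) := by
  have hmul : Tendsto (fun x : ℝ => d * x) (𝓝[>] 0) (𝓝[>] 0) := by
    have hd' : (0 : ℝ) < d := by positivity
    simpa using TendstoNhdsWithinIoi.const_mul hd' (tendsto_id (x := 𝓝[>] (0 : ℝ)))
  refine tendsto_nhds_unique ((hf.tendsto _).comp (tendsto_boundaryMap hlim t))
    (((tendsto_boundaryMap hlim (d * t)).comp hmul).congr' ?_)
  filter_upwards [self_mem_nhdsWithin] with x hx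
  rw [comp_apply, comp_apply, h.map_eq _ (by simpa [rightHalfPlane] using hx)]
  push_cast
  ring_nf

theorem frontier_subset_range_boundaryMap (hK : IsClosed (filledJulia f)) :
    frontier (filledJulia f) ⊆ range (boundaryMap Φ) := by
  intro v hv
  have hfar : ∀ᶠ z in cobounded ℂ, z ∉ Metric.ball v 1 := Metric.isBounded_ball
  obtain ⟨r, hr⟩ := eventually_atTop.1 (eventually_comap.1 (h.tendsto_cobounded.eventually hfar))
  have hextend := extendFrom_extends h.differentiableOn.continuousOn
  set Q := Icc 0 r ×ℂ Icc (-Real.pi) Real.pi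
  have hQ : IsCompact (extendFrom rightHalfPlane Φ '' Q) :=
    (isCompact_Icc.reProdIm isCompact_Icc).image_of_continuousOn
      ((h.continuousOn_extendFrom_of_tendsto hlim).mono fun s hs => hs.1.1)
  have hcover : Metric.ball v 1 ∩ (filledJulia f)ᶜ ⊆ extendFrom rightHalfPlane Φ '' Q := by
    rintro z ⟨hzv, hzK⟩
    obtain ⟨s, hs, him, rfl⟩ := h.exists_mem_strip_eq hzK
    have hre : s.re ≤ r := le_of_not_ge fun hge => hr _ hge s rfl hzv
    exact ⟨s, ⟨⟨le_of_lt hs, hre⟩, him⟩, hextend s hs⟩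
  rw [frontier_eq_closure_inter_closure] at hv
  obtain ⟨s, hs, rfl⟩ := hQ.isClosed.closure_subset_iff.2 hcover
    (Metric.isOpen_ball.inter_closure ⟨Metric.mem_ball_self one_pos, hv.2⟩)
  obtain hs0 | hs0 := hs.1.1.eq_or_lt
  · have hs' : (2 * Real.pi * (s.im / (2 * Real.pi) : ℝ) * I : ℂ) = s := by
      rw [← ofReal_ofNat, ← ofReal_mul, ← ofReal_mul, mul_div_cancel₀ _ two_pi_pos.ne']
      exact Complex.ext (by simpa using hs0) (by simp)
    exact ⟨s.im / (2 * Real.pi), congrArg (extendFrom rightHalfPlane Φ) hs'⟩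
  · rw [hextend s hs0, hK.closure_eq] at hv
    exact absurd hv.1 (h.notMem s hs0)

theorem range_boundaryMap (hK : IsClosed (filledJulia f)) :
    range (boundaryMap Φ) = frontier (filledJulia f) :=
  Subset.antisymm (range_subset_iff.2 (h.boundaryMap_mem_frontier hlim hK))
    (h.frontier_subset_range_boundaryMap hlim hK)

end IsBottcherParametrization

end Limits

end BoundaryMap

/-- Carathéodory semiconjugacy: for a connected, locally connected Julia set, the
landing map `α : ℝ/ℤ → J_f` is a continuous surjection semiconjugating `θ ↦ d·θ`
to `f`. -/
theorem caratheodory_semiconjugacy (p : Polynomial ℂ) (d : ℕ) (hd : 2 ≤ d)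
    (hdeg : p.natDegree = d) (f : ℂ → ℂ) (hf : ∀ z, f z = p.eval z)
    (J : Set ℂ) (hJ : J = frontier (filledJulia f))
    (hJconn : IsConnected J) (hJlc : LocallyConnectedSpace J) :
    ∃ α : AddCircle (1 : ℝ) → ℂ, Continuous α ∧ Set.range α = J ∧
      ∀ θ : AddCircle (1 : ℝ), f (α θ) = α (d • θ) := by
  obtain rfl : f = p.eval := funext hf
  subst hdeg hJ
  obtain ⟨R, h⟩ := exists_isEscapeRadius_eval hd
  have hK := h.isCompact_filledJulia p.continuous
  obtain ⟨Φ, hΦ⟩ := exists_isBottcherParametrization_eval hd hJconn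
  have hlim := hΦ.exists_tendsto_nhdsWithin_rightHalfPlane hK
  have hper := hΦ.periodic_boundaryMap hlim
  refine ⟨hper.lift, (hΦ.continuous_boundaryMap hlim).quotient_lift _, ?_, ?_⟩
  · rw [← QuotientAddGroup.mk_surjective.range_comp hper.lift]
    exact hΦ.range_boundaryMap hlim hK.isClosed
  · refine QuotientAddGroup.mk_surjective.forall.2 fun t => ?_
    rw [← AddCircle.coe_nsmul, hper.lift_coe, hper.lift_coe, nsmul_eq_mul]
    exact hΦ.map_boundaryMap hlim (by omega) p.continuous t
end

section
/- Let f : ℂ → ℂ be the evaluation map of a polynomial of degree d ≥ 2. If W ⊆ ℂ is a bounded open set whose frontier satisfies ∂W ⊆ K_f, then W ⊆ K_f. -/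
open Function Set Topology

/-!
The polynomial expands norms by a factor `2` near infinity, so an orbit that comes close enough to
infinity escapes, and `K_f` is bounded, say by `R`. As `K_f` is forward invariant, every iterate of
`f` has norm at most `R` on `∂W`, hence on `W` by the maximum modulus principle. The bound does not
depend on the iterate, so the orbits of points of `W` are bounded.
-/

open Bornology Filter

section Expansion

variable {E : Type*} [SeminormedAddGroup E] {f : E → E} {c R : ℝ} {x : E}

theorem pow_mul_norm_le_norm_iterate (hc : 1 ≤ c) (hf : ∀ y, R ≤ ‖y‖ → c * ‖y‖ ≤ ‖f y‖)
    (hx : R ≤ ‖x‖) (n : ℕ) : c ^ n * ‖x‖ ≤ ‖f^[n] x‖ := by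
  induction n with
  | zero => simp
  | succ n ih =>
    have hn : R ≤ ‖f^[n] x‖ :=
      hx.trans <| (le_mul_of_one_le_left (norm_nonneg x) (one_le_pow₀ hc)).trans ih
    calc c ^ (n + 1) * ‖x‖ = c * (c ^ n * ‖x‖) := by ring
      _ ≤ c * ‖f^[n] x‖ := by gcongr
      _ ≤ ‖f (f^[n] x)‖ := hf _ hn
      _ = ‖f^[n + 1] x‖ := by rw [iterate_succ_apply']

theorem tendsto_norm_iterate_atTop (hc : 1 < c) (hf : ∀ y, R ≤ ‖y‖ → c * ‖y‖ ≤ ‖f y‖)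
    (hx : R ≤ ‖x‖) (hx₀ : 0 < ‖x‖) : Tendsto (fun n ↦ ‖f^[n] x‖) atTop atTop :=
  tendsto_atTop_mono (pow_mul_norm_le_norm_iterate hc.le hf hx)
    ((tendsto_pow_atTop_atTop_of_one_lt hc).atTop_mul_const hx₀)

theorem isBounded_setOf_isBounded_range_iterate (hc : 1 < c)
    (hf : ∀ᶠ y in cobounded E, c * ‖y‖ ≤ ‖f y‖) :
    IsBounded {x | IsBounded (range fun n ↦ f^[n] x)} := by
  obtain ⟨R, -, hR⟩ := hasBasis_cobounded_norm.eventually_iff.1 hf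
  refine isBounded_iff_forall_norm_le.2 ⟨max R 0, fun x hx ↦ ?_⟩
  by_contra! hlt
  obtain ⟨hRx, hx₀⟩ := max_lt_iff.1 hlt
  obtain ⟨C, hC⟩ := hx.exists_norm_le
  obtain ⟨n, hn⟩ :=
    ((tendsto_norm_iterate_atTop hc (fun _ ↦ @hR _) hRx.le hx₀).eventually_gt_atTop C).exists
  exact (hC _ (mem_range_self n)).not_gt hn

end Expansion

theorem mem_filledJulia_iff_forall_norm_le {f : ℂ → ℂ} {z : ℂ} :
    z ∈ filledJulia f ↔ ∃ C, ∀ n, ‖f^[n] z‖ ≤ C := by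
  simp only [filledJulia, mem_ofPred_eq, isBounded_iff_forall_norm_le, forall_mem_range]

theorem iterate_mem_filledJulia {f : ℂ → ℂ} {z : ℂ} (hz : z ∈ filledJulia f) (n : ℕ) :
    f^[n] z ∈ filledJulia f := by
  obtain ⟨C, hC⟩ := mem_filledJulia_iff_forall_norm_le.1 hz
  refine mem_filledJulia_iff_forall_norm_le.2 ⟨C, fun m ↦ ?_⟩
  rw [← iterate_add_apply]
  exact hC (m + n)

theorem isBounded_filledJulia_polynomial_eval {p : Polynomial ℂ} (hp : 2 ≤ p.natDegree) :
    IsBounded (filledJulia fun z ↦ p.eval z) := by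
  have hdeg : (Polynomial.X : Polynomial ℂ).degree < p.degree :=
    Polynomial.degree_lt_degree (by rw [Polynomial.natDegree_X]; lia)
  refine isBounded_setOf_isBounded_range_iterate one_lt_two ?_
  filter_upwards [(Polynomial.isLittleO_cobounded_of_degree_lt hdeg).def one_half_pos] with z hz
  rw [Polynomial.eval_X] at hz
  linarith

theorem open_subset_of_frontier_subset_filledJulia_general {f : ℂ → ℂ} (hf : Differentiable ℂ f)
    (hK : IsBounded (filledJulia f)) {W : Set ℂ} (hW : IsBounded W)
    (hfr : frontier W ⊆ filledJulia f) : W ⊆ filledJulia f := by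
  obtain ⟨R, hR⟩ := hK.exists_norm_le
  intro z hz
  refine mem_filledJulia_iff_forall_norm_le.2 ⟨R, fun n ↦ ?_⟩
  have hiter : ∀ w ∈ frontier W, ‖f^[n] w‖ ≤ R := fun w hw ↦
    hR _ (iterate_mem_filledJulia (hfr hw) n)
  exact Complex.norm_le_of_forall_mem_frontier_norm_le hW (hf.iterate n).diffContOnCl hiter
    (subset_closure hz)

/-- A bounded open set whose frontier lies in the filled Julia set is contained in it. -/
theorem open_subset_of_frontier_subset_filledJulia (p : Polynomial ℂ) (d : ℕ)
    (hd : 2 ≤ d) (hdeg : p.natDegree = d) (f : ℂ → ℂ) (hf : ∀ z, f z = p.eval z)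
    (W : Set ℂ) (hWopen : IsOpen W) (hWbdd : Bornology.IsBounded W)
    (hWfr : frontier W ⊆ filledJulia f) :
    W ⊆ filledJulia f := by
  obtain rfl : f = fun z ↦ p.eval z := funext hf
  exact open_subset_of_frontier_subset_filledJulia_general p.differentiable
    (isBounded_filledJulia_polynomial_eval (hdeg ▸ hd)) hWbdd hWfr
end

section
/- Let f : ℂ → ℂ be the evaluation map of a polynomial of degree d ≥ 2. For every z₀ ∈ J_f, the set of iterated preimages {z ∈ ℂ : there exists n ≥ 0 with f^[n](z) = z₀} is dense in the Julia set, i.e., J_f is contained in the closure of this set. -/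
open Function Set Topology

/-!
Let `d ≥ 2` be the degree of `f`, and suppose that on a disc the iterates `f^[n]` omit two distinct
values `w₁`, `w₂`. Then `f^[n] - wᵢ` has a holomorphic `d ^ n`-th root there. These roots are
uniformly bounded because `f^[n]` grows at most like `M ^ d ^ n`, so they converge along an
ultrafilter to a holomorphic `Eᵢ`. On the basin of infinity `‖E₁‖ = ‖E₂‖ = exp G > 1`, where `G` is
the Green function, as the constants `wᵢ` do not matter there; if the disc meets the basin, the
equality `‖E₁‖ = ‖E₂‖` propagates to the whole disc. This modulus is nowhere less than `1`, since
otherwise `f^[n]` would converge to both `w₁` and `w₂`, and it is at most `1` on the filled Julia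
set. So at a point of the Julia set it attains the minimum `1`, and the minimum principle forces
it to be identically `1`, contradicting its value on the basin.

An open set avoiding all iterated preimages of `z₀` omits `z₀` and every preimage of `z₀`, hence two
values unless `z₀` is its own unique preimage. In that exceptional case `z₀` is a superattracting
fixed point, which lies in the interior of the filled Julia set.
-/

open Asymptotics Bornology Filter Metric

section RootLimits

variable {ι : Type*} {l : Filter ι} {k : ι → ℕ}

/-- `a` is a limit along `l` of `k n`-th roots of `x n`. When `k` tends to infinity, `log ‖a‖` is
the exponential growth rate `lim (log ‖x n‖) / k n`, and `a` moreover keeps track of a choice of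
arguments, so that it can depend holomorphically on parameters. -/
def IsRootLimit (l : Filter ι) (k : ι → ℕ) (x : ι → ℂ) (a : ℂ) : Prop :=
  ∃ e : ι → ℂ, (∀ n, e n ^ k n = x n) ∧ Tendsto e l (𝓝 a)

lemma isRootLimit_pow (a : ℂ) : IsRootLimit l k (fun n => a ^ k n) a :=
  ⟨fun _ => a, fun _ => rfl, tendsto_const_nhds⟩

lemma isRootLimit_one : IsRootLimit l k (fun _ => 1) 1 := by
  simpa using isRootLimit_pow (l := l) (k := k) 1

lemma IsRootLimit.tendsto_zero {x : ι → ℂ} {a : ℂ} (h : IsRootLimit l k x a)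
    (hk : Tendsto k l atTop) (ha : ‖a‖ < 1) : Tendsto x l (𝓝 0) := by
  obtain ⟨e, hex, he⟩ := h
  obtain ⟨s, has, hs⟩ := exists_between ha
  have hs0 : 0 ≤ s := (norm_nonneg a).trans has.le
  refine squeeze_zero_norm' ?_ ((tendsto_pow_atTop_nhds_zero_of_lt_one hs0 hs).comp hk)
  filter_upwards [he.norm.eventually_lt_const has] with n hn
  rw [← hex n, norm_pow]
  exact pow_le_pow_left₀ (norm_nonneg _) hn.le _

lemma IsRootLimit.isLittleO {x y : ι → ℂ} {a b : ℂ} (hx : IsRootLimit l k x a)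
    (hy : IsRootLimit l k y b) (hk : Tendsto k l atTop) (hab : ‖a‖ < ‖b‖) : x =o[l] y := by
  obtain ⟨e, hex, he⟩ := hx
  obtain ⟨g, hgy, hg⟩ := hy
  have hb : b ≠ 0 := norm_pos_iff.1 ((norm_nonneg a).trans_lt hab)
  have hquot : IsRootLimit l k (fun n => x n / y n) (a / b) :=
    ⟨fun n => e n / g n, fun n => by rw [div_pow, hex, hgy], he.div hg hb⟩
  refine (isLittleO_iff_tendsto' ?_).2 (hquot.tendsto_zero hk ?_)
  · filter_upwards [hg.eventually_ne hb] with n hn hyn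
    exact absurd (hgy n ▸ hyn) (pow_ne_zero _ hn)
  · rwa [norm_div, div_lt_one (norm_pos_iff.2 hb)]

lemma IsRootLimit.norm_le_norm [l.NeBot] {x y : ι → ℂ} {a b : ℂ} (hx : IsRootLimit l k x a)
    (hy : IsRootLimit l k y b) (hk : Tendsto k l atTop) (hxy : x =O[l] y) : ‖a‖ ≤ ‖b‖ := by
  by_contra! hba
  obtain ⟨e, hex, he⟩ := id hx
  have ha : a ≠ 0 := norm_pos_iff.1 ((norm_nonneg b).trans_lt hba)
  have hne : ∀ᶠ n in l, y n ≠ 0 := by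
    filter_upwards [he.eventually_ne ha, hxy.eq_zero_imp] with n hn hyx hyn
    exact pow_ne_zero (k n) hn (hex n ▸ hyx hyn)
  exact (hy.isLittleO hx hk hba).not_isBigO hne.frequently hxy

lemma isTheta_sub_const_of_pow_isBigO {γ : ℝ} (hγ : 1 < γ) (hk : Tendsto k l atTop) {x : ι → ℂ}
    (hx : (fun n => γ ^ k n) =O[l] x) (w : ℂ) : (fun n => x n - w) =Θ[l] x := by
  have hpow : Tendsto (fun n => ‖γ ^ k n‖) l atTop :=
    tendsto_norm_atTop_atTop.comp ((tendsto_pow_atTop_atTop_of_one_lt hγ).comp hk)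
  have hw : (fun _ => -w) =o[l] x :=
    (isBigO_const_const (-w) (one_ne_zero' ℝ) l).trans_isLittleO
      (((isLittleO_const_left_of_ne one_ne_zero).2 hpow).trans_isBigO hx)
  simpa only [sub_eq_add_neg] using! (isTheta_refl x l).add_isLittleO hw

lemma IsRootLimit.one_le_norm_of_sub_ne [l.NeBot] {x : ι → ℂ} {w₁ w₂ a₁ a₂ : ℂ}
    (h₁ : IsRootLimit l k (fun n => x n - w₁) a₁) (h₂ : IsRootLimit l k (fun n => x n - w₂) a₂)
    (hk : Tendsto k l atTop) (hw : w₁ ≠ w₂) (ha : ‖a₁‖ = ‖a₂‖) : 1 ≤ ‖a₁‖ := by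
  by_contra! h
  have hlim : Tendsto (fun _ : ι => w₂ - w₁) l (𝓝 (0 - 0)) := by
    simpa using (h₁.tendsto_zero hk h).sub (h₂.tendsto_zero hk (ha ▸ h))
  rw [tendsto_const_nhds_iff, sub_zero, sub_eq_zero] at hlim
  exact hw hlim.symm

lemma IsRootLimit.norm_le_one_of_isBigO_one [l.NeBot] {x : ι → ℂ} {w a : ℂ}
    (h : IsRootLimit l k (fun n => x n - w) a) (hk : Tendsto k l atTop)
    (hx : x =O[l] fun _ => (1 : ℝ)) : ‖a‖ ≤ 1 := by
  have hsub := hx.sub (isBigO_const_const w (one_ne_zero' ℝ) l)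
  simpa using h.norm_le_norm isRootLimit_one hk
    (hsub.trans (isBigO_const_const 1 (one_ne_zero' ℂ) l))

lemma IsRootLimit.one_lt_norm_of_pow_isBigO [l.NeBot] {x : ι → ℂ} {w a : ℂ} {γ : ℝ}
    (h : IsRootLimit l k (fun n => x n - w) a) (hk : Tendsto k l atTop) (hγ : 1 < γ)
    (hx : (fun n => γ ^ k n) =O[l] x) : 1 < ‖a‖ := by
  have hpow : (fun n => (γ : ℂ) ^ k n) =O[l] fun n => x n - w := by
    refine .trans (isBigO_of_le (g := fun n => γ ^ k n) l fun n => ?_)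
      (hx.trans (isTheta_sub_const_of_pow_isBigO hγ hk hx w).isBigO_symm)
    rw [norm_pow, norm_pow, Complex.norm_real]
  have hle := (isRootLimit_pow (γ : ℂ)).norm_le_norm h hk hpow
  rw [Complex.norm_real, Real.norm_of_nonneg (zero_le_one.trans hγ.le)] at hle
  exact hγ.trans_le hle

end RootLimits

section HolomorphicFunctions

lemma differentiableAt_of_hasStrictDerivAt_comp {𝕜 E : Type*} [NontriviallyNormedField 𝕜]
    [CompleteSpace 𝕜] [NormedAddCommGroup E] [NormedSpace 𝕜 E] {φ : 𝕜 → 𝕜} {φ' : 𝕜} {e : E → 𝕜}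
    {z : E} (hφ : HasStrictDerivAt φ φ' (e z)) (hφ' : φ' ≠ 0) (he : ContinuousAt e z)
    (hφe : DifferentiableAt 𝕜 (φ ∘ e) z) : DifferentiableAt 𝕜 e z := by
  have hinv := (hφ.to_localInverse hφ').hasDerivAt.differentiableAt
  refine (hinv.comp z hφe).congr_of_eventuallyEq ?_
  filter_upwards [he.eventually (hφ.eventually_left_inverse hφ')] with y hy using hy.symm

lemma exists_differentiableOn_pow_eq {U : Set ℂ} (hUc : IsSimplyConnected U) (hUo : IsOpen U)
    {g : ℂ → ℂ} (hg : DifferentiableOn ℂ g U) (hg0 : ∀ z ∈ U, g z ≠ 0) {n : ℕ} (hn : n ≠ 0) :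
    ∃ e : ℂ → ℂ, DifferentiableOn ℂ e U ∧ ∀ z, e z ^ n = g z := by
  obtain ⟨e, hec, he⟩ := Complex.exists_continuousOn_pow_eq hUc hUo hg.continuousOn
    (by rintro ⟨z, hz, hgz⟩; exact hg0 z hz hgz) hn
  refine ⟨e, fun z hz => DifferentiableAt.differentiableWithinAt ?_, he⟩
  have hez : e z ≠ 0 := fun h => hg0 z hz (by rw [← he, h, zero_pow hn])
  refine differentiableAt_of_hasStrictDerivAt_comp (hasStrictDerivAt_pow n (e z))
    (mul_ne_zero (Nat.cast_ne_zero.2 hn) (pow_ne_zero _ hez))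
    (hec.continuousAt (hUo.mem_nhds hz)) ?_
  rw [show (fun x => x ^ n) ∘ e = g from funext he]
  exact hg.differentiableAt (hUo.mem_nhds hz)

variable {ι E : Type*} [NormedAddCommGroup E] [NormedSpace ℂ E] {U : Set ℂ} {F : ι → ℂ → E} {M : ℝ}

lemma equicontinuousAt_of_differentiableOn_of_norm_le {z : ℂ} (hU : U ∈ 𝓝 z)
    (hF : ∀ n, DifferentiableOn ℂ (F n) U) (hM : ∀ n, ∀ y ∈ U, ‖F n y‖ ≤ M) :
    EquicontinuousAt F z := by
  obtain ⟨ρ, hρ, hρU⟩ := Metric.mem_nhds_iff.1 hU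
  have hcont : Continuous fun y => 2 * M / ρ * dist y z := by fun_prop
  refine Metric.equicontinuousAt_of_continuity_modulus (fun y => 2 * M / ρ * dist y z)
    (by simpa using hcont.tendsto z) F ?_
  filter_upwards [ball_mem_nhds z hρ] with y hy n
  rw [dist_comm]
  refine Complex.dist_le_div_mul_dist_of_mapsTo_ball ((hF n).mono hρU) (fun u hu => ?_) hy
  rw [mem_closedBall, dist_eq_norm, two_mul]
  exact norm_sub_le_of_le (hM n u (hρU hu)) (hM n z (mem_of_mem_nhds hU))

lemma tendstoLocallyUniformlyOn_of_equicontinuousOn {X α : Type*} [TopologicalSpace X]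
    [LocallyCompactSpace X] [UniformSpace α] {S : Set X} (hS : IsOpen S) {F : ι → X → α}
    {f : X → α} {l : Filter ι} (hF : EquicontinuousOn F S)
    (hlim : ∀ x ∈ S, Tendsto (fun n => F n x) l (𝓝 (f x))) :
    TendstoLocallyUniformlyOn F f l S := by
  rw [tendstoLocallyUniformlyOn_iff_forall_isCompact hS]
  intro K hKS hK
  have hlimK : Tendsto ((⋃₀ {K}).domRestrict ∘ F) l (𝓝 ((⋃₀ {K}).domRestrict f)) :=
    tendsto_pi_nhds.2 fun x => hlim x (hKS (by simpa using x.2))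
  refine UniformOnFun.tendsto_iff_tendstoUniformlyOn.1
    ((EquicontinuousOn.tendsto_uniformOnFun_iff_pi' ?_ ?_ l f).2 hlimK) K rfl
  · rintro _ rfl
    exact hK
  · rintro _ rfl
    exact hF.mono hKS

/-- Montel's theorem: along an ultrafilter no extraction of subsequences is needed. -/
lemma exists_differentiableOn_tendsto_ultrafilter [ProperSpace E] (l : Ultrafilter ι)
    (hU : IsOpen U) (hF : ∀ n, DifferentiableOn ℂ (F n) U) (hM : ∀ n, ∀ z ∈ U, ‖F n z‖ ≤ M) :
    ∃ f : ℂ → E, DifferentiableOn ℂ f U ∧ ∀ z ∈ U, Tendsto (fun n => F n z) l (𝓝 (f z)) := by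
  have hlim (z : ℂ) : ∃ a, z ∈ U → Tendsto (fun n => F n z) l (𝓝 a) := by
    by_cases hz : z ∈ U
    · obtain ⟨a, -, ha⟩ := (isCompact_closedBall (0 : E) M).ultrafilter_le_nhds
        (l.map fun n => F n z) (le_principal_iff.2 (Ultrafilter.mem_map.2
          (univ_mem' fun n => by simpa using hM n z hz)))
      exact ⟨a, fun _ => ha⟩
    · exact ⟨0, fun h => absurd h hz⟩
  choose f hf using hlim
  have hequi : EquicontinuousOn F U := fun z hz =>
    EquicontinuousAt.equicontinuousWithinAt
      (equicontinuousAt_of_differentiableOn_of_norm_le (hU.mem_nhds hz) hF hM) U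
  exact ⟨f, (tendstoLocallyUniformlyOn_of_equicontinuousOn hU hequi hf).differentiableOn
    (.of_forall hF) hU, hf⟩

lemma norm_eqOn_of_norm_eventuallyEq {f g : ℂ → ℂ} {b : ℂ} (hUo : IsOpen U)
    (hUc : IsPreconnected U) (hf : DifferentiableOn ℂ f U) (hg : DifferentiableOn ℂ g U)
    (hb : b ∈ U) (hgb : g b ≠ 0) (hfg : ∀ᶠ z in 𝓝 b, ‖f z‖ = ‖g z‖) :
    ∀ z ∈ U, ‖f z‖ = ‖g z‖ := by
  have hUb : U ∈ 𝓝 b := hUo.mem_nhds hb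
  have hg0 : ∀ᶠ z in 𝓝 b, g z ≠ 0 := (hg.differentiableAt hUb).continuousAt.eventually_ne hgb
  have hnorm : ∀ᶠ z in 𝓝 b, ‖f z / g z‖ = 1 := by
    filter_upwards [hfg, hg0] with z hz hgz
    rw [norm_div, hz, div_self (norm_ne_zero_iff.2 hgz)]
  have hconst : ∀ᶠ z in 𝓝 b, f z / g z = f b / g b := by
    refine Complex.eventually_eq_of_isLocalMax_norm ?_ ?_
    · filter_upwards [eventually_mem_nhds_iff.2 hUb, hg0] with z hz hgz
      exact (hf.differentiableAt hz).div (hg.differentiableAt hz) hgz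
    · filter_upwards [hnorm] with z hz
      exact (hz.trans hnorm.self_of_nhds.symm).le
  have heq : EqOn f (fun z => f b / g b * g z) U := by
    refine (hf.analyticOnNhd hUo).eqOn_of_preconnected_of_eventuallyEq
      ((hg.const_mul _).analyticOnNhd hUo) hUc hb ?_
    filter_upwards [hconst, hg0] with z hz hgz
    rw [← hz, div_mul_cancel₀ _ hgz]
  intro z hz
  rw [heq hz, norm_mul, hnorm.self_of_nhds, one_mul]

lemma norm_eq_of_forall_norm_le {f : ℂ → ℂ} {c : ℂ} (hUo : IsOpen U) (hUc : IsPreconnected U)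
    (hf : DifferentiableOn ℂ f U) (hc : c ∈ U) (hfc : f c ≠ 0) (hmin : ∀ z ∈ U, ‖f c‖ ≤ ‖f z‖) :
    ∀ z ∈ U, ‖f z‖ = ‖f c‖ := by
  have hc0 : 0 < ‖f c‖ := norm_pos_iff.2 hfc
  have hf0 : ∀ z ∈ U, f z ≠ 0 := fun z hz => norm_pos_iff.1 (hc0.trans_le (hmin z hz))
  have hmax : IsMaxOn (norm ∘ f⁻¹) U c := fun z hz => by
    simpa using inv_anti₀ hc0 (hmin z hz)
  intro z hz
  simpa using Complex.norm_eqOn_of_isPreconnected_of_isMaxOn hUc hUo (hf.inv hf0) hc hmax hz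

end HolomorphicFunctions

section OmittedValues

variable {ι : Type*} {l : Ultrafilter ι} {k : ι → ℕ} {U : Set ℂ} {F : ι → ℂ → ℂ} {M : ℝ}

lemma exists_differentiableOn_isRootLimit (l : Ultrafilter ι) (hUc : IsSimplyConnected U)
    (hUo : IsOpen U) (hk : ∀ n, k n ≠ 0) (hF : ∀ n, DifferentiableOn ℂ (F n) U)
    (hF0 : ∀ n, ∀ z ∈ U, F n z ≠ 0) (hM : ∀ n, ∀ z ∈ U, ‖F n z‖ ≤ M ^ k n) :
    ∃ E : ℂ → ℂ, DifferentiableOn ℂ E U ∧ ∀ z ∈ U, IsRootLimit l k (fun n => F n z) (E z) := by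
  choose e he hek using fun n => exists_differentiableOn_pow_eq hUc hUo (hF n) (hF0 n) (hk n)
  have heM : ∀ n, ∀ z ∈ U, ‖e n z‖ ≤ |M| := fun n z hz => by
    refine le_of_pow_le_pow_left₀ (hk n) (abs_nonneg M) ?_
    rw [← norm_pow, hek, ← abs_pow]
    exact (hM n z hz).trans (le_abs_self _)
  obtain ⟨E, hE, hlim⟩ := exists_differentiableOn_tendsto_ultrafilter l hUo he heM
  exact ⟨E, hE, fun z hz => ⟨fun n => e n z, fun n => hek n z, hlim z hz⟩⟩

lemma norm_sub_le_mul_pow_of_max_one_norm_le {E : Type*} [SeminormedAddCommGroup E] {x w : E}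
    {m : ℕ} (hm : m ≠ 0) (hx : max 1 ‖x‖ ≤ M ^ m) :
    ‖x - w‖ ≤ ((1 + ‖w‖) * M) ^ m := by
  have hw : 1 ≤ 1 + ‖w‖ := le_add_of_nonneg_right (norm_nonneg w)
  calc ‖x - w‖ ≤ ‖x‖ + ‖w‖ * 1 := by simpa using norm_sub_le x w
    _ ≤ (1 + ‖w‖) * max 1 ‖x‖ := by
      rw [one_add_mul]
      gcongr
      exacts [le_max_right _ _, le_max_left _ _]
    _ ≤ (1 + ‖w‖) ^ m * M ^ m := by gcongr; exact le_self_pow₀ hw hm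
    _ = ((1 + ‖w‖) * M) ^ m := (mul_pow _ _ _).symm

lemma not_isBigO_one_of_mapsTo_compl_pair (hUc : IsSimplyConnected U) (hUo : IsOpen U)
    (hk0 : ∀ n, k n ≠ 0) (hk : Tendsto k l atTop) (hF : ∀ n, DifferentiableOn ℂ (F n) U)
    (hM : ∀ n, ∀ z ∈ U, max 1 ‖F n z‖ ≤ M ^ k n) {w₁ w₂ : ℂ} (hw : w₁ ≠ w₂)
    (hFw : ∀ n, MapsTo (F n) U {w₁, w₂}ᶜ) {b z : ℂ} (hb : b ∈ U)
    (hesc : ∀ᶠ y in 𝓝 b, ∃ γ : ℝ, 1 < γ ∧ (fun n => γ ^ k n) =O[l] fun n => F n y) (hz : z ∈ U) :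
    ¬ (fun n => F n z) =O[l] fun _ => (1 : ℝ) := by
  intro hbdd
  have hUp : IsPreconnected U := hUc.isPathConnected.isConnected.isPreconnected
  have hroot (w : ℂ) (hwF : ∀ n, ∀ y ∈ U, F n y ≠ w) : ∃ E : ℂ → ℂ, DifferentiableOn ℂ E U ∧
      ∀ y ∈ U, IsRootLimit l k (fun n => F n y - w) (E y) :=
    exists_differentiableOn_isRootLimit l hUc hUo hk0 (fun n => (hF n).sub_const w)
      (fun n y hy => sub_ne_zero.2 (hwF n y hy))
      (fun n y hy => norm_sub_le_mul_pow_of_max_one_norm_le (hk0 n) (hM n y hy))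
  obtain ⟨E₁, hE₁, hlim₁⟩ := hroot w₁ fun n y hy h => hFw n hy (.inl h)
  obtain ⟨E₂, hE₂, hlim₂⟩ := hroot w₂ fun n y hy h => hFw n hy (.inr h)
  obtain ⟨γ, hγ, hFγ⟩ := hesc.self_of_nhds
  have hb₁ : 1 < ‖E₁ b‖ := (hlim₁ b hb).one_lt_norm_of_pow_isBigO hk hγ hFγ
  have hb₂ : 1 < ‖E₂ b‖ := (hlim₂ b hb).one_lt_norm_of_pow_isBigO hk hγ hFγ
  have hnear : ∀ᶠ y in 𝓝 b, ‖E₁ y‖ = ‖E₂ y‖ := by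
    filter_upwards [hesc, hUo.mem_nhds hb] with y ⟨δ, hδ, hFδ⟩ hy
    have hΘ := (isTheta_sub_const_of_pow_isBigO hδ hk hFδ w₁).trans
      (isTheta_sub_const_of_pow_isBigO hδ hk hFδ w₂).symm
    exact ((hlim₁ y hy).norm_le_norm (hlim₂ y hy) hk hΘ.isBigO).antisymm
      ((hlim₂ y hy).norm_le_norm (hlim₁ y hy) hk hΘ.isBigO_symm)
  have hnorm : ∀ y ∈ U, ‖E₁ y‖ = ‖E₂ y‖ := norm_eqOn_of_norm_eventuallyEq hUo hUp hE₁ hE₂ hb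
    (norm_pos_iff.1 (zero_lt_one.trans hb₂)) hnear
  have hge : ∀ y ∈ U, 1 ≤ ‖E₁ y‖ := fun y hy =>
    (hlim₁ y hy).one_le_norm_of_sub_ne (hlim₂ y hy) hk hw (hnorm y hy)
  have hle : ‖E₁ z‖ ≤ 1 := (hlim₁ z hz).norm_le_one_of_isBigO_one hk hbdd
  have hbz : ‖E₁ b‖ = ‖E₁ z‖ := norm_eq_of_forall_norm_le hUo hUp hE₁ hz
    (norm_pos_iff.1 (zero_lt_one.trans_le (hge z hz))) (fun y hy => hle.trans (hge y hy)) b hb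
  exact hb₁.not_ge (hbz.trans_le hle)

end OmittedValues

section IterateGrowth

variable {α : Type*} {f : α → α} {φ : α → ℝ} {d : ℕ}

lemma iterate_le_pow_pow (hφ : ∀ z, 0 ≤ φ z) (h : ∀ z, φ (f z) ≤ φ z ^ d) (n : ℕ) (z : α) :
    φ (f^[n] z) ≤ φ z ^ d ^ n := by
  induction n with
  | zero => simp
  | succ n ih =>
    rw [iterate_succ_apply', pow_succ, pow_mul]
    exact (h _).trans (pow_le_pow_left₀ (hφ _) ih d)

lemma pow_pow_le_iterate {t : ℝ} (ht : 1 ≤ t) (hd : d ≠ 0) (h : ∀ z, t ≤ φ z → φ z ^ d ≤ φ (f z))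
    {z : α} (hz : t ≤ φ z) (n : ℕ) : t ^ d ^ n ≤ φ (f^[n] z) := by
  induction n with
  | zero => simpa using hz
  | succ n ih =>
    rw [iterate_succ_apply', pow_succ, pow_mul]
    exact (pow_le_pow_left₀ (by positivity) ih d).trans
      (h _ ((le_self_pow₀ ht (pow_ne_zero n hd)).trans ih))

end IterateGrowth

section PolynomialGrowth

variable {𝕜 : Type*} [NormedField 𝕜] (p : Polynomial 𝕜)

lemma norm_eval_le_sum_norm_coeff_mul_max_pow (z : 𝕜) :
    ‖p.eval z‖ ≤
      (∑ i ∈ Finset.range (p.natDegree + 1), ‖p.coeff i‖) * max 1 ‖z‖ ^ p.natDegree := by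
  rw [Polynomial.eval_eq_sum_range, Finset.sum_mul]
  refine norm_sum_le_of_le _ fun i hi => ?_
  rw [norm_mul, norm_pow]
  gcongr
  calc ‖z‖ ^ i ≤ max 1 ‖z‖ ^ i := by gcongr; exact le_max_right _ _
    _ ≤ max 1 ‖z‖ ^ p.natDegree :=
      pow_le_pow_right₀ (le_max_left _ _) (Nat.lt_succ_iff.1 (Finset.mem_range.1 hi))

variable {p}

/-- Rescaling by `C` absorbs the constant of the usual growth estimate, so that this one can be
iterated. -/
lemma exists_mul_max_norm_eval_le_pow (hp : 2 ≤ p.natDegree) :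
    ∃ C : ℝ, 1 ≤ C ∧ ∀ z, C * max 1 ‖p.eval z‖ ≤ (C * max 1 ‖z‖) ^ p.natDegree := by
  set C := max 1 (∑ i ∈ Finset.range (p.natDegree + 1), ‖p.coeff i‖)
  have hC : 1 ≤ C := le_max_left _ _
  refine ⟨C, hC, fun z => ?_⟩
  have hmax : max 1 ‖p.eval z‖ ≤ C * max 1 ‖z‖ ^ p.natDegree :=
    max_le (one_le_mul_of_one_le_of_one_le hC (one_le_pow₀ (le_max_left _ _)))
      ((norm_eval_le_sum_norm_coeff_mul_max_pow p z).trans (by gcongr; exact le_max_right _ _))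
  calc C * max 1 ‖p.eval z‖ ≤ C * (C * max 1 ‖z‖ ^ p.natDegree) := by gcongr
    _ = C ^ 2 * max 1 ‖z‖ ^ p.natDegree := by ring
    _ ≤ C ^ p.natDegree * max 1 ‖z‖ ^ p.natDegree := by gcongr
    _ = (C * max 1 ‖z‖) ^ p.natDegree := (mul_pow _ _ _).symm

lemma exists_max_norm_iterate_eval_le_pow (hp : 2 ≤ p.natDegree) {U : Set 𝕜} (hU : IsBounded U) :
    ∃ M : ℝ, ∀ n, ∀ z ∈ U, max 1 ‖(fun z => p.eval z)^[n] z‖ ≤ M ^ p.natDegree ^ n := by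
  obtain ⟨C, hC, hCp⟩ := exists_mul_max_norm_eval_le_pow hp
  obtain ⟨B, hB⟩ := isBounded_iff_forall_norm_le.1 hU
  refine ⟨C * max 1 B, fun n z hz => ?_⟩
  calc max 1 ‖(fun z => p.eval z)^[n] z‖ ≤ C * max 1 ‖(fun z => p.eval z)^[n] z‖ :=
        le_mul_of_one_le_left (by positivity) hC
    _ ≤ (C * max 1 ‖z‖) ^ p.natDegree ^ n :=
        iterate_le_pow_pow (φ := fun z => C * max 1 ‖z‖) (fun z => by positivity) hCp n z
    _ ≤ (C * max 1 B) ^ p.natDegree ^ n := by gcongr; exact hB z hz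

lemma exists_pow_le_mul_norm_eval (hp : 2 ≤ p.natDegree) :
    ∃ c : ℝ, 0 < c ∧ c ≤ 1 ∧ ∀ z, 2 ≤ c * ‖z‖ → (c * ‖z‖) ^ p.natDegree ≤ c * ‖p.eval z‖ := by
  have hlead : p.leadingCoeff ≠ 0 :=
    Polynomial.leadingCoeff_ne_zero.2 (Polynomial.ne_zero_of_natDegree_gt hp)
  have hO : (fun z => z ^ p.natDegree) =O[cobounded 𝕜] fun z => p.eval z :=
    (isBigO_const_mul_left_iff hlead).1
      (Polynomial.isEquivalent_cobounded_leading_monomial (P := p)).isBigO_symm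
  obtain ⟨A, hA⟩ := hO.bound
  obtain ⟨R, -, hR⟩ := (hasBasis_cobounded_norm (E := 𝕜)).eventually_iff.1 hA
  have hsmall : ∀ᶠ c : ℝ in 𝓝[>] 0, (c < 1 ∧ c * A < 1) ∧ c * R < 2 := by
    have hmul (r : ℝ) : Tendsto (fun c => c * r) (𝓝 0) (𝓝 0) := by
      simpa using (tendsto_id (x := 𝓝 (0 : ℝ))).mul_const r
    exact nhdsWithin_le_nhds (((eventually_lt_nhds one_pos).and
      ((hmul A).eventually_lt_const one_pos)).and ((hmul R).eventually_lt_const two_pos))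
  obtain ⟨c, ⟨⟨hc1, hcA⟩, hcR⟩, hc0 : 0 < c⟩ := (hsmall.and self_mem_nhdsWithin).exists
  refine ⟨c, hc0, hc1.le, fun z hz => ?_⟩
  have hbound : ‖z‖ ^ p.natDegree ≤ A * ‖p.eval z‖ := by
    simpa using hR (lt_of_mul_lt_mul_left (hcR.trans_le hz) hc0.le).le
  calc (c * ‖z‖) ^ p.natDegree = c ^ p.natDegree * ‖z‖ ^ p.natDegree := mul_pow _ _ _
    _ ≤ c ^ 2 * (A * ‖p.eval z‖) :=
        mul_le_mul (pow_le_pow_of_le_one hc0.le hc1.le hp) hbound (by positivity) (by positivity)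
    _ = c * A * (c * ‖p.eval z‖) := by ring
    _ ≤ c * ‖p.eval z‖ := mul_le_of_le_one_left (by positivity) hcA.le

end PolynomialGrowth

section FilledJulia

/-- Outside the disc of radius `R` all orbits of `f` escape to infinity at degree-`d` rate. -/
def IsEscapeRadius_s12 (f : ℂ → ℂ) (d : ℕ) (R : ℝ) : Prop :=
  ∀ z, R ≤ ‖z‖ → ∀ n, 2 ^ d ^ n ≤ ‖f^[n] z‖

lemma exists_isEscapeRadius {p : Polynomial ℂ} (hp : 2 ≤ p.natDegree) :
    ∃ R, IsEscapeRadius_s12 (fun z => p.eval z) p.natDegree R := by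
  obtain ⟨c, hc0, hc1, hc⟩ := exists_pow_le_mul_norm_eval hp
  refine ⟨2 / c, fun z hz n => ?_⟩
  rw [div_le_iff₀' hc0] at hz
  exact (pow_pow_le_iterate (φ := fun z => c * ‖z‖) one_le_two (by lia) hc hz n).trans
    (mul_le_of_le_one_left (norm_nonneg _) hc1)

lemma mem_filledJulia_iff_isBigO_one {f : ℂ → ℂ} {z : ℂ} :
    z ∈ filledJulia f ↔ (fun n => f^[n] z) =O[atTop] fun _ => (1 : ℝ) := by
  simp only [filledJulia, mem_ofPred_eq, isBounded_iff_forall_norm_le, forall_mem_range,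
    isBigO_one_nat_atTop_iff]

namespace IsEscapeRadius_s12

variable {f : ℂ → ℂ} {d : ℕ} {R : ℝ}

lemma exists_pow_isBigO (hR : IsEscapeRadius_s12 f d R) (hd : d ≠ 0) {z : ℂ} {N : ℕ}
    (hN : R ≤ ‖f^[N] z‖) :
    ∃ γ : ℝ, 1 < γ ∧ (fun n => γ ^ d ^ n) =O[atTop] fun n => f^[n] z := by
  have hdN : d ^ N ≠ 0 := pow_ne_zero N hd
  refine ⟨(2 : ℝ) ^ ((d ^ N : ℕ) : ℝ)⁻¹, Real.one_lt_rpow one_lt_two (by positivity),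
    IsBigO.of_bound' ?_⟩
  filter_upwards [eventually_ge_atTop N] with n hn
  obtain ⟨m, rfl⟩ := Nat.exists_eq_add_of_le' hn
  rw [pow_add, mul_comm, pow_mul, Real.rpow_inv_natCast_pow zero_le_two hdN, iterate_add_apply]
  simpa using hR _ hN m

lemma notMem_filledJulia_iff (hR : IsEscapeRadius_s12 f d R) (hd : 1 < d) {z : ℂ} :
    z ∉ filledJulia f ↔ ∃ N, R < ‖f^[N] z‖ := by
  refine ⟨fun hz => ?_, fun ⟨N, hN⟩ hz => ?_⟩
  · by_contra! h
    exact hz (isBounded_iff_forall_norm_le.2 ⟨R, forall_mem_range.2 h⟩)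
  · obtain ⟨γ, hγ, hO⟩ := hR.exists_pow_isBigO (by lia) hN.le
    have htop : Tendsto (fun n => γ ^ d ^ n) atTop atTop :=
      (tendsto_pow_atTop_atTop_of_one_lt hγ).comp (tendsto_pow_atTop_atTop_of_one_lt hd)
    obtain ⟨B, hB⟩ := isBigO_one_nat_atTop_iff.1 (hO.trans (mem_filledJulia_iff_isBigO_one.1 hz))
    obtain ⟨n, hn⟩ := (htop.eventually_gt_atTop B).exists
    exact hn.not_ge ((le_abs_self _).trans (hB n))

lemma isClosed_filledJulia (hR : IsEscapeRadius_s12 f d R) (hd : 1 < d) (hf : Continuous f) :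
    IsClosed (filledJulia f) := by
  have hK : (filledJulia f)ᶜ = ⋃ N, {z | R < ‖f^[N] z‖} := by
    ext z
    simpa using hR.notMem_filledJulia_iff hd
  rw [← isOpen_compl_iff, hK]
  exact isOpen_iUnion fun N => isOpen_lt continuous_const (hf.iterate N).norm

end IsEscapeRadius_s12

end FilledJulia

section Preimages

lemma eval_eq_and_derivative_eval_eq_zero_of_forall_eval_eq {𝕜 : Type*} [Field 𝕜] [IsAlgClosed 𝕜]
    {p : Polynomial 𝕜} (hp : 2 ≤ p.natDegree) {v z : 𝕜} (h : ∀ w, p.eval w = v → w = z) :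
    p.eval z = v ∧ p.derivative.eval z = 0 := by
  set q := p - Polynomial.C v with hq
  have hqp : q.natDegree = p.natDegree := Polynomial.natDegree_sub_C
  have hq0 : q ≠ 0 := Polynomial.ne_zero_of_natDegree_gt (hqp ▸ hp)
  have hroots : ∀ w ∈ q.roots, z = w := fun w hw =>
    (h w (by simpa [hq, sub_eq_zero] using Polynomial.isRoot_of_mem_roots hw)).symm
  have hmult : 1 < q.rootMultiplicity z := by
    classical
    rw [← Polynomial.count_roots, Multiset.count_eq_card.2 hroots,
      IsAlgClosed.card_roots_eq_natDegree, hqp]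
    exact hp
  simpa [hq, sub_eq_zero] using (Polynomial.one_lt_rootMultiplicity_iff_isRoot hq0).1 hmult

lemma mem_interior_filledJulia_of_hasStrictDerivAt {f : ℂ → ℂ} {a z : ℂ} (hfz : IsFixedPt f z)
    (hf : HasStrictDerivAt f a z) (ha : ‖a‖ < 1) : z ∈ interior (filledJulia f) := by
  obtain ⟨s, hs, hlip⟩ := hf.hasStrictFDerivAt.exists_lipschitzOnWith_of_nnnorm_lt 1 (by
    simpa [← NNReal.coe_lt_coe] using ha)
  obtain ⟨ρ, hρ, hρs⟩ := Metric.mem_nhds_iff.1 hs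
  have hball : MapsTo f (ball z ρ) (ball z ρ) := fun y hy => by
    have hdist := hlip.dist_le_mul y (hρs hy) z (hρs (mem_ball_self hρ))
    rw [hfz, NNReal.coe_one, one_mul] at hdist
    exact hdist.trans_lt hy
  refine mem_interior.2 ⟨ball z ρ, fun y hy => ?_, isOpen_ball, mem_ball_self hρ⟩
  exact isBounded_ball.subset (range_subset_iff.2 fun n => hball.iterate n hy)

lemma exists_ne_eval_eq_of_notMem_interior_filledJulia {p : Polynomial ℂ} (hp : 2 ≤ p.natDegree)
    {z : ℂ} (hz : z ∉ interior (filledJulia fun z => p.eval z)) : ∃ w ≠ z, p.eval w = z := by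
  by_contra! h
  obtain ⟨hfix, hder⟩ := eval_eq_and_derivative_eval_eq_zero_of_forall_eval_eq hp
    fun w hw => by_contra fun hwz => h w hwz hw
  exact hz (mem_interior_filledJulia_of_hasStrictDerivAt hfix (p.hasStrictDerivAt z)
    (by simp [hder]))

lemma isSimplyConnected_ball {E : Type*} [NormedAddCommGroup E] [NormedSpace ℝ E] (x : E) {r : ℝ}
    (hr : 0 < r) : IsSimplyConnected (ball x r) :=
  have := contractibleSpace_ball (x := x) hr
  SimplyConnectedSpace.ofContractible (ball x r)

lemma disjoint_frontier_filledJulia_of_mapsTo_compl_pair {p : Polynomial ℂ} (hp : 2 ≤ p.natDegree)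
    {U : Set ℂ} (hU : IsOpen U) {w₁ w₂ : ℂ} (hw : w₁ ≠ w₂)
    (h : ∀ n, MapsTo (fun z => p.eval z)^[n] U {w₁, w₂}ᶜ) :
    Disjoint U (frontier (filledJulia fun z => p.eval z)) := by
  rw [Set.disjoint_left]
  intro z hzU hz
  obtain ⟨R, hR⟩ := exists_isEscapeRadius hp
  have hK : IsClosed (filledJulia fun z => p.eval z) := hR.isClosed_filledJulia hp p.continuous
  obtain ⟨ρ, hρ, hρU⟩ := Metric.isOpen_iff.1 hU z hzU
  obtain ⟨b, hb, hbK⟩ : ∃ b ∈ ball z ρ, b ∉ filledJulia fun z => p.eval z := by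
    by_contra! hsub
    exact hz.2 (mem_interior.2 ⟨_, hsub, isOpen_ball, mem_ball_self hρ⟩)
  have hl : (hyperfilter ℕ : Filter ℕ) ≤ atTop := Nat.cofinite_eq_atTop ▸ hyperfilter_le_cofinite
  obtain ⟨M, hM⟩ := exists_max_norm_iterate_eval_le_pow hp (isBounded_ball (x := z) (r := ρ))
  refine not_isBigO_one_of_mapsTo_compl_pair (l := hyperfilter ℕ)
    (isSimplyConnected_ball z hρ) isOpen_ball
    (fun n => pow_ne_zero n (by lia)) ((tendsto_pow_atTop_atTop_of_one_lt hp).mono_left hl)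
    (fun n => (p.differentiable.iterate n).differentiableOn) hM hw
    (fun n => (h n).mono_left hρU) hb ?_ (mem_ball_self hρ)
    ((mem_filledJulia_iff_isBigO_one.1 (hK.frontier_subset hz)).mono hl)
  filter_upwards [hK.isOpen_compl.mem_nhds hbK] with y hy
  obtain ⟨N, hN⟩ := (hR.notMem_filledJulia_iff hp).1 hy
  obtain ⟨γ, hγ, hO⟩ := hR.exists_pow_isBigO (by lia) hN.le
  exact ⟨γ, hγ, hO.mono hl⟩

end Preimages

/-- `hz₀` says that `z₀` is not an exceptional point, i.e. its backward orbit is not just `{z₀}`. -/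
theorem preimages_dense_in_julia_general {p : Polynomial ℂ} (hp : 2 ≤ p.natDegree) {z₀ : ℂ}
    (hz₀ : ∃ w ≠ z₀, p.eval w = z₀) :
    frontier (filledJulia fun z => p.eval z) ⊆
      closure {z : ℂ | ∃ n : ℕ, (fun z => p.eval z)^[n] z = z₀} := by
  obtain ⟨w, hw, hwz₀⟩ := hz₀
  rw [← disjoint_compl_left_iff_subset]
  refine disjoint_frontier_filledJulia_of_mapsTo_compl_pair hp isClosed_closure.isOpen_compl hw
    fun n z hz hmem => hz (subset_closure ?_)
  rcases hmem with hnw | hnz₀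
  · exact ⟨n + 1, by rw [iterate_succ_apply', hnw, hwz₀]⟩
  · exact ⟨n, hnz₀⟩

/-- Iterated preimages of any point of the Julia set are dense in the Julia set. -/
theorem preimages_dense_in_julia (p : Polynomial ℂ) (d : ℕ) (hd : 2 ≤ d)
    (hdeg : p.natDegree = d) (f : ℂ → ℂ) (hf : ∀ z, f z = p.eval z)
    (z₀ : ℂ) (hz₀ : z₀ ∈ frontier (filledJulia f)) :
    frontier (filledJulia f) ⊆ closure {z : ℂ | ∃ n : ℕ, f^[n] z = z₀} := by
  obtain rfl : f = fun z => p.eval z := funext hf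
  subst hdeg
  exact preimages_dense_in_julia_general hd
    (exists_ne_eval_eq_of_notMem_interior_filledJulia hd hz₀.2)
end

section
/- Let f : ℂ → ℂ be the evaluation map of a polynomial of degree d ≥ 2 whose Julia set J_f is connected and locally connected. Then for every ε > 0, only finitely many connected components of ℂ ∖ J_f have diameter ≥ ε; in particular, the diameters of the bounded Fatou components form a sequence tending to zero. -/
open Function Set Topology

open Bornology Filter Metric
open scoped ENNReal Real

/-!
For a point `w` of a bounded component of `ℂ ∖ J`, the function `z - w` has no continuous logarithm
on `J`, and these obstructions are independent over `ℤ` for points of different components: a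
logarithm of a product of powers of such functions would let one fill in a bounded component and
produce a nonvanishing function on `ℂ` with nonzero winding number around a large circle. On the
other hand, if the component of `w` is large compared with a piece of `J`, then `w` can be moved
within it away from that piece, so `z - w` does have a logarithm there. The obstructions of the
large components thus come from the nerve of one finite cover of `J` by small connected open pieces,
and only finitely many of them can be independent.
-/

section ContinuousLogarithm

variable {Y : Type*} [TopologicalSpace Y] {X X' : Set Y} {u v g h : Y → ℂ}

/-- `u` has a continuous branch of logarithm on `X`. For nonvanishing continuous `u` this says that
the class of `u` in the first integral cohomology of `X` vanishes, which is how it is used here.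
The branch is a total function, only its values on `X` matter. -/
def HasContinuousLogOn (u : Y → ℂ) (X : Set Y) : Prop :=
  ∃ g : Y → ℂ, ContinuousOn g X ∧ ∀ z ∈ X, Complex.exp (g z) = u z

theorem hasContinuousLogOn_empty (u : Y → ℂ) : HasContinuousLogOn u ∅ :=
  ⟨0, continuousOn_empty _, fun _ hz => hz.elim⟩

theorem hasContinuousLogOn_const {c : ℂ} (hc : c ≠ 0) (X : Set Y) :
    HasContinuousLogOn (fun _ => c) X :=
  ⟨fun _ => Complex.log c, continuousOn_const, fun _ _ => Complex.exp_log hc⟩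

theorem hasContinuousLogOn_of_mapsTo_slitPlane (hu : ContinuousOn u X)
    (hslit : MapsTo u X Complex.slitPlane) : HasContinuousLogOn u X :=
  ⟨fun z => Complex.log (u z), hu.clog hslit,
    fun _ hz => Complex.exp_log (Complex.slitPlane_ne_zero (hslit hz))⟩

namespace HasContinuousLogOn

theorem mono (hu : HasContinuousLogOn u X) (hX : X' ⊆ X) : HasContinuousLogOn u X' :=
  let ⟨g, hg, hgu⟩ := hu
  ⟨g, hg.mono hX, fun z hz => hgu z (hX hz)⟩

theorem congr (hu : HasContinuousLogOn u X) (huv : EqOn v u X) : HasContinuousLogOn v X :=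
  let ⟨g, hg, hgu⟩ := hu
  ⟨g, hg, fun z hz => (hgu z hz).trans (huv hz).symm⟩

protected theorem continuousOn (hu : HasContinuousLogOn u X) : ContinuousOn u X :=
  let ⟨_, hg, hgu⟩ := hu
  hg.cexp.congr fun z hz => (hgu z hz).symm

theorem ne_zero (hu : HasContinuousLogOn u X) {z : Y} (hz : z ∈ X) : u z ≠ 0 :=
  let ⟨_, _, hgu⟩ := hu
  hgu z hz ▸ Complex.exp_ne_zero _

protected theorem mul (hu : HasContinuousLogOn u X) (hv : HasContinuousLogOn v X) :
    HasContinuousLogOn (fun z => u z * v z) X :=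
  let ⟨g, hg, hgu⟩ := hu
  let ⟨h, hh, hhv⟩ := hv
  ⟨fun z => g z + h z, hg.add hh, fun z hz => by rw [Complex.exp_add, hgu z hz, hhv z hz]⟩

theorem of_norm_sub_lt (hu : HasContinuousLogOn u X) (hv : ContinuousOn v X)
    (hlt : ∀ z ∈ X, ‖v z - u z‖ < ‖u z‖) : HasContinuousLogOn v X := by
  have hquot : HasContinuousLogOn (fun z => 1 + (v z - u z) / u z) X := by
    refine hasContinuousLogOn_of_mapsTo_slitPlane
      (continuousOn_const.add ((hv.sub hu.continuousOn).div hu.continuousOn fun _ => hu.ne_zero))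
      fun z hz => Complex.mem_slitPlane_of_norm_lt_one ?_
    rw [norm_div, div_lt_one (norm_pos_iff.2 (hu.ne_zero hz))]
    exact hlt z hz
  refine (hu.mul hquot).congr fun z hz => ?_
  have := hu.ne_zero hz
  field_simp
  ring

end HasContinuousLogOn

theorem exists_int_eq_add_two_pi_I_of_exp_eq (hX : IsPreconnected X) (hg : ContinuousOn g X)
    (hh : ContinuousOn h X) (hexp : ∀ z ∈ X, Complex.exp (g z) = Complex.exp (h z)) :
    ∃ m : ℤ, ∀ z ∈ X, g z = h z + m * (2 * π * Complex.I) := by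
  choose! m hm using fun z hz => Complex.exp_eq_exp_iff_exists_int.1 (hexp z hz)
  have hcast : ContinuousOn (fun z => (m z : ℂ)) X :=
    ((hg.sub hh).div_const (2 * π * Complex.I)).congr fun z hz => by
      simp only [Pi.sub_apply, hm z hz, add_sub_cancel_left,
        mul_div_cancel_right₀ _ Complex.two_pi_I_ne_zero]
  have hmc : ContinuousOn m X :=
    Complex.isClosedEmbedding_intCast.isInducing.continuousOn_iff.2 hcast
  rcases X.eq_empty_or_nonempty with rfl | ⟨x, hx⟩
  · exact ⟨0, by simp⟩
  · exact ⟨m x, fun z hz => by rw [hm z hz, hX.constant hmc hz hx]⟩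

theorem hasContinuousLogOn_sub_iff_of_isPreconnected {C : Set ℂ} (hu : ContinuousOn u X)
    (hC : IsPreconnected C) (hdisj : Disjoint C (closure (u '' X))) {w w' : ℂ} (hw : w ∈ C)
    (hw' : w' ∈ C) :
    HasContinuousLogOn (fun z => u z - w) X ↔ HasContinuousLogOn (fun z => u z - w') X := by
  have perturb : ∀ a b : ℂ, (∀ z ∈ X, dist a b < dist (u z) a) →
      HasContinuousLogOn (fun z => u z - a) X → HasContinuousLogOn (fun z => u z - b) X := by
    intro a b hab ha
    refine ha.of_norm_sub_lt (hu.sub continuousOn_const) fun z hz => ?_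
    rw [sub_sub_sub_cancel_left, ← dist_eq_norm, ← dist_eq_norm]
    exact hab z hz
  refine hC.induction₂ (fun a b => HasContinuousLogOn (fun z => u z - a) X ↔
    HasContinuousLogOn (fun z => u z - b) X) (fun a ha => ?_) (fun _ _ _ _ _ _ => Iff.trans)
    (fun _ _ _ _ => Iff.symm) hw hw'
  obtain ⟨δ, hδ, hball⟩ :=
    isOpen_iff.1 isClosed_closure.isOpen_compl a (hdisj.notMem_of_mem_left ha)
  have hfar : ∀ z ∈ X, δ ≤ dist (u z) a := fun z hz =>
    not_lt.1 fun hlt => hball hlt (subset_closure (mem_image_of_mem u hz))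
  filter_upwards [mem_nhdsWithin_of_mem_nhds (ball_mem_nhds a (half_pos hδ))] with b hb
  rw [mem_ball] at hb
  refine ⟨perturb a b fun z hz => ?_, perturb b a fun z hz => ?_⟩
  · rw [dist_comm]
    linarith [hfar z hz]
  · linarith [hfar z hz, dist_triangle (u z) b a]

theorem hasContinuousLogOn_sub_of_ediam_image_lt {C : Set ℂ} (hu : ContinuousOn u X)
    (hC : IsPreconnected C) (hdisj : Disjoint C (closure (u '' X)))
    (hdiam : 2 * ediam (u '' X) < ediam C) {w : ℂ} (hw : w ∈ C) :
    HasContinuousLogOn (fun z => u z - w) X := by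
  rcases X.eq_empty_or_nonempty with rfl | ⟨x, hx⟩
  · exact hasContinuousLogOn_empty _
  obtain ⟨q, hq, hxq⟩ : ∃ q ∈ C, ediam (u '' X) < edist q (u x) := by
    by_contra! hnear
    exact hdiam.not_ge ((ediam_mono fun q hq => mem_closedEBall.2 (hnear q hq)).trans
      ediam_closedEBall_le)
  refine (hasContinuousLogOn_sub_iff_of_isPreconnected hu hC hdisj hq hw).1 ?_
  have hlt : ∀ z ∈ X, dist (u z) (u x) < dist (u x) q := fun z hz => by
    have := (edist_le_ediam_of_mem (mem_image_of_mem u hz) (mem_image_of_mem u hx)).trans_lt hxq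
    rwa [edist_comm q, edist_dist, edist_dist,
      ENNReal.ofReal_lt_ofReal_iff_of_nonneg dist_nonneg] at this
  refine (hasContinuousLogOn_const (sub_ne_zero.2 (dist_pos.1 (dist_nonneg.trans_lt (hlt x hx))))
    X).of_norm_sub_lt (hu.sub continuousOn_const) fun z hz => ?_
  rw [sub_sub_sub_cancel_right, ← dist_eq_norm, ← dist_eq_norm]
  exact hlt z hz

end ContinuousLogarithm

section OpenCover

variable {Y κ ι : Type*} [TopologicalSpace Y] {V : κ → Set Y}

theorem exists_int_eq_add_two_pi_I_on_inter {X X' : Set Y} {u g h : Y → ℂ}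
    (hX : IsPreconnected X) (hX' : IsPreconnected X') (hu : HasContinuousLogOn u (X ∪ X'))
    (hg : ContinuousOn g X) (hgu : ∀ z ∈ X, Complex.exp (g z) = u z)
    (hh : ContinuousOn h X') (hhu : ∀ z ∈ X', Complex.exp (h z) = u z) :
    ∃ m : ℤ, ∀ z ∈ X ∩ X', g z = h z + m * (2 * π * Complex.I) := by
  obtain ⟨l, hl, hlu⟩ := hu
  obtain ⟨a, ha⟩ := exists_int_eq_add_two_pi_I_of_exp_eq hX hg (hl.mono subset_union_left)
    fun z hz => by rw [hgu z hz, hlu z (Or.inl hz)]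
  obtain ⟨b, hb⟩ := exists_int_eq_add_two_pi_I_of_exp_eq hX' hh (hl.mono subset_union_right)
    fun z hz => by rw [hhu z hz, hlu z (Or.inr hz)]
  refine ⟨a - b, fun z hz => ?_⟩
  rw [ha z hz.1, hb z hz.2]
  push_cast
  ring

theorem exists_continuous_eqOn_of_isOpen_cover {Z : Type*} [TopologicalSpace Z]
    (hVo : ∀ i, IsOpen (V i)) (hcov : ⋃ i, V i = univ) {φ : κ → Y → Z}
    (hφ : ∀ i, ContinuousOn (φ i) (V i)) (hagree : ∀ i j, EqOn (φ i) (φ j) (V i ∩ V j)) :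
    ∃ Φ : Y → Z, Continuous Φ ∧ ∀ i, EqOn Φ (φ i) (V i) := by
  have hnhds : ∀ y, ∃ i, V i ∈ 𝓝 y := fun y =>
    let ⟨i, hi⟩ := mem_iUnion.1 (hcov.symm ▸ mem_univ y)
    ⟨i, (hVo i).mem_nhds hi⟩
  let Φ : C(Y, Z) := ContinuousMap.liftCover V (fun i => ⟨_, (hφ i).domRestrict⟩)
    (fun i j y hi hj => hagree i j ⟨hi, hj⟩) hnhds
  exact ⟨Φ, Φ.continuous, fun i y hy => ContinuousMap.liftCover_coe (⟨y, hy⟩ : V i)⟩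

/-- On preconnected sets the logarithms of `u n` over `V i` and `V j` differ by an integer multiple
of `2πi`. These integers form a vector in `κ × κ → ℤ`, and an integral relation between the vectors
makes the corresponding combination of local logarithms glue. -/
theorem exists_hasContinuousLogOn_prod_zpow [Finite κ] (hVo : ∀ i, IsOpen (V i))
    (hVc : ∀ i, IsPreconnected (V i)) (hcov : ⋃ i, V i = univ) [Infinite ι] {u : ι → Y → ℂ}
    (hu : ∀ n i j, (V i ∩ V j).Nonempty → HasContinuousLogOn (u n) (V i ∪ V j)) :
    ∃ (s : Finset ι) (k : ι → ℤ), (∃ n ∈ s, k n ≠ 0) ∧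
      HasContinuousLogOn (fun y => ∏ n ∈ s, u n y ^ k n) univ := by
  have hlocal : ∀ n i, HasContinuousLogOn (u n) (V i) := fun n i => by
    rcases (V i).eq_empty_or_nonempty with hi | hi
    · exact hi ▸ hasContinuousLogOn_empty _
    · exact (hu n i i (by rwa [inter_self])).mono subset_union_left
  choose g hg hgu using hlocal
  have htransition : ∀ n i j, ∃ m : ℤ, ∀ z ∈ V i ∩ V j,
      g n i z = g n j z + m * (2 * π * Complex.I) := fun n i j => by
    rcases (V i ∩ V j).eq_empty_or_nonempty with hij | hij
    · exact ⟨0, by simp [hij]⟩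
    · exact exists_int_eq_add_two_pi_I_on_inter (hVc i) (hVc j) (hu n i j hij) (hg n i) (hgu n i)
        (hg n j) (hgu n j)
  choose m hm using htransition
  have hdep : ¬LinearIndependent ℤ fun n (ij : κ × κ) => m n ij.1 ij.2 :=
    fun hli => not_finite_iff_infinite.2 ‹Infinite ι› hli.finite
  obtain ⟨s, k, hsum, hk⟩ := not_linearIndependent_iff.1 hdep
  have hrel : ∀ i j, ∑ n ∈ s, (k n : ℂ) * m n i j = 0 := fun i j => by
    have := congrFun hsum (i, j)
    simp only [Finset.sum_apply, Pi.smul_apply, smul_eq_mul, Pi.zero_apply] at this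
    exact_mod_cast this
  obtain ⟨G, hG, hGeq⟩ := exists_continuous_eqOn_of_isOpen_cover hVo hcov
    (φ := fun i z => ∑ n ∈ s, k n * g n i z)
    (fun i => continuousOn_finsetSum _ fun n _ => continuousOn_const.mul (hg n i))
    fun i j z hz => by
      simp only [hm _ i j z hz, mul_add, Finset.sum_add_distrib, ← mul_assoc, ← Finset.sum_mul,
        hrel, zero_mul, add_zero]
  refine ⟨s, k, hk, G, hG.continuousOn, fun z _ => ?_⟩
  obtain ⟨i, hi⟩ := mem_iUnion.1 (hcov.symm ▸ mem_univ z)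
  rw [hGeq i hi, Complex.exp_sum]
  exact Finset.prod_congr rfl fun n _ => by rw [Complex.exp_int_mul, hgu n i z hi]

theorem exists_finite_isOpen_isPreconnected_cover {α : Type*} [PseudoEMetricSpace α]
    [CompactSpace α] [LocallyConnectedSpace α] {δ : ℝ≥0∞} (hδ : δ ≠ 0) :
    ∃ 𝒱 : Set (Set α), 𝒱.Finite ∧ (∀ V ∈ 𝒱, IsOpen V ∧ IsPreconnected V ∧ ediam V ≤ δ) ∧
      ⋃₀ 𝒱 = univ := by
  let W : α → Set α := fun x => connectedComponentIn (eball x (δ / 2)) x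
  have hWo : ∀ x, IsOpen (W x) := fun x => isOpen_eball.connectedComponentIn
  have hmem : ∀ x, x ∈ W x := fun x =>
    mem_connectedComponentIn (mem_eball_self (ENNReal.half_pos hδ))
  obtain ⟨t, ht⟩ := CompactSpace.elim_nhds_subcover W fun x => (hWo x).mem_nhds (hmem x)
  refine ⟨W '' t, t.finite_toSet.image W, ?_, by simpa [sUnion_image] using ht⟩
  rintro _ ⟨x, -, rfl⟩
  refine ⟨hWo x, isPreconnected_connectedComponentIn, ?_⟩
  calc ediam (W x) ≤ ediam (eball x (δ / 2)) := ediam_mono (connectedComponentIn_subset _ _)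
    _ ≤ 2 * (δ / 2) := ediam_eball_le
    _ = δ := ENNReal.mul_div_cancel two_ne_zero ENNReal.ofNat_ne_top

end OpenCover

section WindingNumber

theorem eq_zero_of_hasContinuousLogOn_zpow_sphere {c : ℂ} {R : ℝ} (hR : 0 < R) {k : ℤ}
    (h : HasContinuousLogOn (fun z => (z - c) ^ k) (sphere c R)) : k = 0 := by
  obtain ⟨g, hg, hgk⟩ := h
  have hsphere : ∀ t, circleMap c R t ∈ sphere c R := circleMap_mem_sphere c hR.le
  have hgk' : ∀ t, Complex.exp (g (circleMap c R t)) = (circleMap c R t - c) ^ k :=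
    fun t => hgk _ (hsphere t)
  have hR' : (R : ℂ) ≠ 0 := by exact_mod_cast hR.ne'
  obtain ⟨m, hm⟩ := exists_int_eq_add_two_pi_I_of_exp_eq (X := (univ : Set ℝ))
    (g := fun t => g (circleMap c R t)) (h := fun t => k * (Complex.log R + t * Complex.I))
    isPreconnected_univ (hg.comp (continuous_circleMap c R).continuousOn fun t _ => hsphere t)
    (by fun_prop) fun t _ => by
      rw [hgk', circleMap_sub_center, circleMap_zero, Complex.exp_int_mul,
        Complex.exp_add, Complex.exp_log hR']
  have hperiod : g (circleMap c R (2 * π)) = g (circleMap c R 0) := by simp [circleMap]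
  have h0 := hm 0 (mem_univ _)
  have h2π := hm (2 * π) (mem_univ _)
  have hk : (k : ℂ) * (2 * π * Complex.I) = 0 := by
    push_cast at h0 h2π
    linear_combination hperiod - h2π + h0
  exact_mod_cast (mul_eq_zero.1 hk).resolve_right Complex.two_pi_I_ne_zero

theorem eq_zero_of_eqOn_frontier_sub_zpow {U : Set ℂ} (hU : IsBounded U) {c : ℂ}
    (hc : c ∈ interior U) {k : ℤ} {A : ℂ → ℂ} (hA : ContinuousOn A (closure U))
    (hA0 : ∀ z ∈ closure U, A z ≠ 0) (hfr : ∀ z ∈ frontier U, A z = (z - c) ^ k) : k = 0 := by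
  classical
  have hsub0 : ∀ z ∈ closure Uᶜ, z - c ≠ 0 := fun z hz h0 => by
    rw [closure_compl, sub_eq_zero.1 h0] at hz
    exact hz hc
  let F : ℂ → ℂ := U.piecewise A fun z => (z - c) ^ k
  have hF : Continuous F := continuous_piecewise hfr hA
    (ContinuousOn.zpow₀ (by fun_prop) k fun z hz => Or.inl (hsub0 z hz))
  have hF0 : 0 ∉ F '' univ := by
    rintro ⟨z, -, hz⟩
    by_cases hzU : z ∈ U
    · exact hA0 z (subset_closure hzU) ((piecewise_eq_of_mem _ _ _ hzU).symm.trans hz)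
    · exact zpow_ne_zero k (hsub0 z (subset_closure hzU))
        ((piecewise_eq_of_notMem _ _ _ hzU).symm.trans hz)
  have : ContractibleSpace (univ : Set ℂ) := convex_univ.contractibleSpace univ_nonempty
  have hsimply : IsSimplyConnected (univ : Set ℂ) :=
    inferInstanceAs (SimplyConnectedSpace (univ : Set ℂ))
  have hlog : HasContinuousLogOn F univ :=
    Complex.exists_continuousOn_eqOn_exp_comp hsimply isOpen_univ hF.continuousOn hF0
  obtain ⟨R, hR, hUR⟩ := hU.subset_ball_lt 0 c
  have hsphere : ∀ z ∈ sphere c R, z ∉ U := fun z hz hzU => (mem_ball.1 (hUR hzU)).ne hz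
  exact eq_zero_of_hasContinuousLogOn_zpow_sphere hR ((hlog.mono (subset_univ _)).congr
    fun z hz => (piecewise_eq_of_notMem U A (fun z => (z - c) ^ k) (hsphere z hz)).symm)

end WindingNumber

section Components

theorem connectedComponentIn_eq_of_mem_closure {α : Type*} [TopologicalSpace α] {F : Set α}
    {x y : α} (hy : y ∈ F) (hxy : y ∈ closure (connectedComponentIn F x)) :
    connectedComponentIn F x = connectedComponentIn F y := by
  have hpre : IsPreconnected (insert y (connectedComponentIn F x)) :=
    isPreconnected_connectedComponentIn.subset_closure (subset_insert _ _)
      (insert_subset hxy subset_closure)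
  obtain ⟨z, hz⟩ := closure_nonempty_iff.1 ⟨y, hxy⟩
  have hzy : z ∈ connectedComponentIn F y :=
    hpre.subset_connectedComponentIn (mem_insert _ _)
      (insert_subset hy (connectedComponentIn_subset F x)) (mem_insert_of_mem _ hz)
  rw [connectedComponentIn_eq hz, connectedComponentIn_eq hzy]

theorem frontier_connectedComponentIn_subset_compl {α : Type*} [TopologicalSpace α]
    [LocallyConnectedSpace α] {F : Set α} (hF : IsOpen F) (x : α) :
    frontier (connectedComponentIn F x) ⊆ Fᶜ := by
  intro y hy hyF
  rw [hF.connectedComponentIn.frontier_eq] at hy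
  exact hy.2 (connectedComponentIn_eq_of_mem_closure hyF hy.1 ▸ mem_connectedComponentIn hyF)

theorem isPreconnected_compl_closedBall {E : Type*} [NormedAddCommGroup E] [NormedSpace ℝ E]
    (hE : 1 < Module.rank ℝ E) (c : E) {r : ℝ} (hr : 0 ≤ r) : IsPreconnected (closedBall c r)ᶜ := by
  have himage : (fun x : E => c + (1 + r / ‖x‖) • x) '' {0}ᶜ = (closedBall c r)ᶜ := by
    ext y
    simp only [mem_image, mem_compl_iff, mem_singleton_iff, mem_closedBall, dist_eq_norm, not_le]
    constructor
    · rintro ⟨x, hx, rfl⟩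
      have hx' : 0 < ‖x‖ := norm_pos_iff.2 hx
      have : (1 + r / ‖x‖) * ‖x‖ = ‖x‖ + r := by field_simp
      rw [add_sub_cancel_left, norm_smul, Real.norm_of_nonneg (by positivity)]
      linarith
    · intro hy
      have hy' : 0 < ‖y - c‖ := hr.trans_lt hy
      have hfac : 0 < 1 - r / ‖y - c‖ := by rwa [sub_pos, div_lt_one hy']
      have hnorm : ‖(1 - r / ‖y - c‖) • (y - c)‖ = ‖y - c‖ - r := by
        rw [norm_smul, Real.norm_of_nonneg hfac.le]
        field_simp
      have hinv : (1 + r / (‖y - c‖ - r)) * (1 - r / ‖y - c‖) = 1 := by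
        have := (sub_pos.2 hy).ne'
        field_simp
        ring
      refine ⟨(1 - r / ‖y - c‖) • (y - c), smul_ne_zero hfac.ne' (norm_pos_iff.1 hy'), ?_⟩
      rw [hnorm, smul_smul, hinv, one_smul, add_sub_cancel]
  rw [← himage]
  refine (isConnected_compl_singleton_of_one_lt_rank hE 0).isPreconnected.image _ ?_
  exact continuousOn_const.add ((continuousOn_const.add (continuousOn_const.div
    continuous_norm.continuousOn fun x hx => norm_ne_zero_iff.2 hx)).smul continuousOn_id)

theorem connectedComponentIn_compl_eq_of_not_isBounded {E : Type*} [NormedAddCommGroup E]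
    [NormedSpace ℝ E] (hE : 1 < Module.rank ℝ E) {s : Set E} (hs : IsBounded s) {x y : E}
    (hx : ¬IsBounded (connectedComponentIn sᶜ x)) (hy : ¬IsBounded (connectedComponentIn sᶜ y)) :
    connectedComponentIn sᶜ x = connectedComponentIn sᶜ y := by
  obtain ⟨r, hr, hsr⟩ := hs.subset_closedBall_lt 0 0
  have hfar : ∀ {z}, ¬IsBounded (connectedComponentIn sᶜ z) →
      ∃ a ∈ connectedComponentIn sᶜ z, a ∈ (closedBall (0 : E) r)ᶜ := fun hz =>
    not_subset.1 fun hsub => hz (isBounded_closedBall.subset hsub)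
  obtain ⟨a, hax, ha⟩ := hfar hx
  obtain ⟨b, hby, hb⟩ := hfar hy
  have hba : b ∈ connectedComponentIn sᶜ a :=
    (isPreconnected_compl_closedBall hE 0 hr.le).subset_connectedComponentIn ha
      (compl_subset_compl.2 hsr) hb
  rw [connectedComponentIn_eq hax, connectedComponentIn_eq hba, connectedComponentIn_eq hby]

end Components

section PlaneComponents

variable {J : Set ℂ} {ι : Type*} {p : ι → ℂ}

theorem eq_zero_of_hasContinuousLogOn_prod_sub_zpow (hJ : IsClosed J) (hp : ∀ i, p i ∈ Jᶜ)
    (hinj : Injective fun i => connectedComponentIn Jᶜ (p i)) {s : Finset ι} {k : ι → ℤ}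
    (hlog : HasContinuousLogOn (fun z : J => ∏ i ∈ s, ((z : ℂ) - p i) ^ k i) univ) {n : ι}
    (hn : n ∈ s) (hbdd : IsBounded (connectedComponentIn Jᶜ (p n))) : k n = 0 := by
  classical
  obtain ⟨g, hg, hgexp⟩ := hlog
  obtain ⟨G, hG⟩ := (⟨g, continuousOn_univ.1 hg⟩ : C(J, ℂ)).exists_restrict_eq hJ
  have hGexp : ∀ z ∈ J, Complex.exp (G z) = ∏ i ∈ s, (z - p i) ^ k i := fun z hz =>
    (congrArg Complex.exp (DFunLike.congr_fun hG ⟨z, hz⟩)).trans (hgexp ⟨z, hz⟩ (mem_univ _))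
  have hne : ∀ z ∈ closure (connectedComponentIn Jᶜ (p n)), ∀ i ∈ s.erase n, z - p i ≠ 0 := by
    intro z hz i hi h0
    rw [sub_eq_zero.1 h0] at hz
    exact Finset.ne_of_mem_erase hi (hinj (connectedComponentIn_eq_of_mem_closure (hp i) hz).symm)
  have hopen : IsOpen (connectedComponentIn Jᶜ (p n)) := hJ.isOpen_compl.connectedComponentIn
  refine eq_zero_of_eqOn_frontier_sub_zpow hbdd
    (A := fun z => Complex.exp (G z) * ∏ i ∈ s.erase n, (z - p i) ^ (-k i))
    (hopen.interior_eq.symm ▸ mem_connectedComponentIn (hp n)) ?_ ?_ ?_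
  · exact G.continuous.cexp.continuousOn.mul <| continuousOn_finsetProd _ fun i hi =>
      ContinuousOn.zpow₀ (by fun_prop) _ fun z hz => Or.inl (hne z hz i hi)
  · exact fun z hz => mul_ne_zero (Complex.exp_ne_zero _)
      (Finset.prod_ne_zero_iff.2 fun i hi => zpow_ne_zero _ (hne z hz i hi))
  · intro z hz
    have hzJ : z ∈ J := compl_compl J ▸
      frontier_connectedComponentIn_subset_compl hJ.isOpen_compl (p n) hz
    have hcancel : ∏ i ∈ s.erase n, (z - p i) ^ k i * (z - p i) ^ (-k i) = 1 :=
      Finset.prod_eq_one fun i hi => by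
        rw [← zpow_add₀ (hne z (frontier_subset_closure hz) i hi), add_neg_cancel, zpow_zero]
    rw [hGexp z hzJ, ← Finset.mul_prod_erase _ _ hn, mul_assoc, ← Finset.prod_mul_distrib, hcancel,
      mul_one]

theorem finite_of_injective_of_le_ediam_connectedComponentIn_compl (hJ : IsCompact J)
    [LocallyConnectedSpace J] {ε : ℝ≥0∞} (hε : ε ≠ 0) (hp : ∀ i, p i ∈ Jᶜ)
    (hinj : Injective fun i => connectedComponentIn Jᶜ (p i))
    (hbdd : ∀ i, IsBounded (connectedComponentIn Jᶜ (p i)))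
    (hlarge : ∀ i, ε ≤ ediam (connectedComponentIn Jᶜ (p i))) : Finite ι := by
  by_contra hfin
  have : Infinite ι := not_finite_iff_infinite.1 hfin
  have : CompactSpace J := isCompact_iff_compactSpace.1 hJ
  obtain ⟨δ, hδ, hδε⟩ := ENNReal.exists_nnreal_pos_mul_lt (ENNReal.ofNat_ne_top (n := 4)) hε
  obtain ⟨𝒱, h𝒱fin, h𝒱, h𝒱cov⟩ :=
    exists_finite_isOpen_isPreconnected_cover (α := J) (ENNReal.coe_ne_zero.2 hδ.ne')
  have : Finite 𝒱 := h𝒱fin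
  have hlog : ∀ n (V W : 𝒱), (V.1 ∩ W.1).Nonempty →
      HasContinuousLogOn (fun z : J => (z : ℂ) - p n) (V.1 ∪ W.1) := by
    intro n V W hVW
    refine hasContinuousLogOn_sub_of_ediam_image_lt continuous_subtype_val.continuousOn
      isPreconnected_connectedComponentIn ?_ ?_ (mem_connectedComponentIn (hp n))
    · refine disjoint_compl_left.mono (connectedComponentIn_subset _ _) ?_
      exact closure_minimal (Subtype.coe_image_subset J _) hJ.isClosed
    · calc 2 * ediam (Subtype.val '' (V.1 ∪ W.1))
          = 2 * ediam (V.1 ∪ W.1) := by rw [isometry_subtype_coe.ediam_image]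
        _ ≤ 2 * (ediam V.1 + ediam W.1) := by gcongr; exact ediam_union_le hVW
        _ ≤ 2 * (δ + δ) := by gcongr; exacts [(h𝒱 V V.2).2.2, (h𝒱 W W.2).2.2]
        _ = δ * 4 := by ring
        _ < ε := hδε
        _ ≤ _ := hlarge n
  obtain ⟨s, k, ⟨n, hn, hkn⟩, hprod⟩ := exists_hasContinuousLogOn_prod_zpow
    (fun V : 𝒱 => (h𝒱 V V.2).1) (fun V => (h𝒱 V V.2).2.1) (by rwa [← sUnion_eq_iUnion]) hlog
  exact hkn (eq_zero_of_hasContinuousLogOn_prod_sub_zpow hJ.isClosed hp hinj hprod hn (hbdd n))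

theorem finitely_many_large_fatou_components_general (hJ : IsCompact J) [LocallyConnectedSpace J]
    {ε : ℝ≥0∞} (hε : ε ≠ 0) :
    {C : Set ℂ | (∃ z ∈ Jᶜ, C = connectedComponentIn Jᶜ z) ∧ ε ≤ ediam C}.Finite := by
  have hunbounded :
      {C : Set ℂ | (∃ z ∈ Jᶜ, C = connectedComponentIn Jᶜ z) ∧ ¬IsBounded C}.Subsingleton := by
    rintro _ ⟨⟨z, -, rfl⟩, hz⟩ _ ⟨⟨w, -, rfl⟩, hw⟩
    exact connectedComponentIn_compl_eq_of_not_isBounded (by simp) hJ.isBounded hz hw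
  have hbounded : {C : Set ℂ | (∃ z ∈ Jᶜ, C = connectedComponentIn Jᶜ z) ∧ IsBounded C ∧
      ε ≤ ediam C}.Finite := by
    refine finite_coe_iff.1 ?_
    choose p hp hCp using fun C : {C : Set ℂ | (∃ z ∈ Jᶜ, C = connectedComponentIn Jᶜ z) ∧
      IsBounded C ∧ ε ≤ ediam C} => C.2.1
    refine finite_of_injective_of_le_ediam_connectedComponentIn_compl hJ hε hp
      (fun C D hCD => Subtype.ext ?_) (fun C => hCp C ▸ C.2.2.1) (fun C => hCp C ▸ C.2.2.2)
    rw [hCp C, hCp D]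
    exact hCD
  refine (hunbounded.finite.union hbounded).subset fun C hC => ?_
  by_cases hCb : IsBounded C
  exacts [Or.inr ⟨hC.1, hCb, hC.2⟩, Or.inl ⟨hC.1, hCb⟩]

end PlaneComponents

section FilledJulia

theorem eventually_mul_norm_le_norm_eval {p : Polynomial ℂ} (hp : 2 ≤ p.natDegree) (c : ℝ) :
    ∀ᶠ z in cobounded ℂ, c * ‖z‖ ≤ ‖p.eval z‖ := by
  have hdeg : 0 < p.divX.degree := by
    rw [← Polynomial.natDegree_pos_iff_degree_pos, Polynomial.natDegree_divX_eq_natDegree_tsub_one]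
    lia
  have hnorm := tendsto_norm_cobounded_atTop (E := ℂ)
  filter_upwards [(p.divX.tendsto_norm_atTop hdeg hnorm).eventually_ge_atTop (c + 1),
    hnorm.eventually_ge_atTop ‖p.coeff 0‖] with z hquot hcoeff
  calc c * ‖z‖ = (c + 1) * ‖z‖ - ‖z‖ := by ring
    _ ≤ ‖p.divX.eval z‖ * ‖z‖ - ‖p.coeff 0‖ := by gcongr
    _ ≤ ‖p.divX.eval z * z + p.coeff 0‖ := by
      simpa using norm_sub_le_norm_add (p.divX.eval z * z) (p.coeff 0)
    _ = ‖p.eval z‖ := by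
      conv_rhs => rw [← p.divX_mul_X_add]
      simp

theorem pow_mul_norm_le_norm_iterate_s13 {E : Type*} [SeminormedAddGroup E] {f : E → E} {c r : ℝ}
    (hc : 1 ≤ c) (hf : ∀ z, r ≤ ‖z‖ → c * ‖z‖ ≤ ‖f z‖) {z : E} (hz : r ≤ ‖z‖) (n : ℕ) :
    c ^ n * ‖z‖ ≤ ‖f^[n] z‖ := by
  induction n with
  | zero => simp
  | succ n ih =>
    have hr : r ≤ ‖f^[n] z‖ :=
      hz.trans ((le_mul_of_one_le_left (norm_nonneg z) (one_le_pow₀ hc)).trans ih)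
    calc c ^ (n + 1) * ‖z‖ = c * (c ^ n * ‖z‖) := by ring
      _ ≤ c * ‖f^[n] z‖ := by gcongr
      _ ≤ ‖f^[n + 1] z‖ := by rw [iterate_succ_apply']; exact hf _ hr

theorem isBounded_filledJulia {f : ℂ → ℂ} {c : ℝ} (hc : 1 < c)
    (hf : ∀ᶠ z in cobounded ℂ, c * ‖z‖ ≤ ‖f z‖) : IsBounded (filledJulia f) := by
  obtain ⟨r, -, hescape⟩ := hasBasis_cobounded_norm.eventually_iff.1 hf
  refine (isBounded_ball (x := (0 : ℂ)) (r := max r 1)).subset fun z hz =>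
    mem_ball_zero_iff.2 (not_le.1 fun hzr => ?_)
  obtain ⟨B, hB⟩ := isBounded_iff_forall_norm_le.1 (show IsBounded (range fun n => f^[n] z) from hz)
  obtain ⟨n, hn⟩ := pow_unbounded_of_one_lt B hc
  refine hn.not_ge ?_
  calc c ^ n ≤ c ^ n * ‖z‖ :=
        le_mul_of_one_le_right (by positivity) ((le_max_right r 1).trans hzr)
    _ ≤ ‖f^[n] z‖ :=
      pow_mul_norm_le_norm_iterate_s13 hc.le (fun _ => @hescape _) ((le_max_left r 1).trans hzr) n
    _ ≤ B := hB _ (mem_range_self n)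

theorem isCompact_frontier_filledJulia_eval {p : Polynomial ℂ} (hp : 2 ≤ p.natDegree) :
    IsCompact (frontier (filledJulia fun z => p.eval z)) :=
  isCompact_of_isClosed_isBounded isClosed_frontier <|
    (isBounded_filledJulia one_lt_two (eventually_mul_norm_le_norm_eval hp 2)).closure.subset
      frontier_subset_closure

end FilledJulia

/-- For a connected, locally connected Julia set, only finitely many Fatou components
have diameter at least `ε`. -/
theorem finitely_many_large_fatou_components (p : Polynomial ℂ) (d : ℕ) (hd : 2 ≤ d)
    (hdeg : p.natDegree = d) (f : ℂ → ℂ) (hf : ∀ z, f z = p.eval z)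
    (J : Set ℂ) (hJ : J = frontier (filledJulia f))
    (hJconn : IsConnected J) (hJlc : LocallyConnectedSpace J)
    (ε : ℝ) (hε : 0 < ε) :
    {C : Set ℂ | (∃ z ∈ Jᶜ, C = connectedComponentIn (Jᶜ) z) ∧
      ENNReal.ofReal ε ≤ EMetric.diam C}.Finite := by
  obtain rfl : f = fun z => p.eval z := funext hf
  subst hJ hdeg
  exact finitely_many_large_fatou_components_general (isCompact_frontier_filledJulia_eval hd)
    (ENNReal.ofReal_pos.2 hε).ne'
end
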